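/- Let k ≥ 2 and let φ : ℕ → (0,∞) be an arbitrary positive increasing function. Then for Lebesgue-almost every α ∈ ℝ^k: the maximal discrepancy satisfies Δ(α;N) ≪ (log N)^k · φ(log log N) (with a constant depending on α and φ) if and only if ∑_{n=1}^∞ 1/φ(n) < ∞. -/

import Mathlib

open MeasureTheory Finset

noncomputable section

/-- Ergodic discrepancy of the torus translation by `α ∈ ℝ^k` relative to the box
`B(x) = [0,x₁)×⋯×[0,x_k)`:
`D(α,x;m) = ∑_{1≤n≤m} χ_{B(x)}(nα mod 1) − m·Vol(B(x))`. -/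
def DiscT (k : ℕ) (α : Fin k → ℝ) (x : Fin k → ℝ) (m : ℕ) : ℝ :=
  (∑ n ∈ Finset.Icc 1 m,
      if ∀ i, Int.fract ((n : ℝ) * α i) < x i then (1 : ℝ) else 0)
    - (m : ℝ) * ∏ i, x i

/-!
The indicator of an arc is a sum of dyadic pieces, each of them dominated by a trigonometric
polynomial concentrated near an endpoint. Multiplying these decompositions over the coordinates,
and averaging each product over as many shifts as the reciprocal of its volume, bounds the
discrepancy by a sum over frequencies `n` of the truncated reciprocals of
`∏ max(1, |nᵢ|) * ‖n · α‖`.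

For linearly independent frequencies `n` and `n'` the linear forms `n · α` and `n' · α` are
independent random variables on the torus. Hence, within a class of frequencies of constant content,
the variance of such a sum is the sum of the variances, and Chebyshev's inequality and the
Borel–Cantelli lemma give the bound when `∑ 1 / φ n` converges. When it diverges, pairwise
independence over primitive frequencies and a second moment argument produce infinitely many `n`
with an exceptionally small `‖n · α‖`. For such an `n` the points `𝐞(n · (t α))` stay near `1` for a
long time, and Koksma's inequality turns the resulting large exponential sum into a large
discrepancy.
-/

namespace TorusDiscrepancy

open scoped FourierTransform Real

/-! ### Trigonometric polynomials -/

/-- `f` is the real trigonometric polynomial of degree at most `K` with Fourier coefficients `c`;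
the values of `c` outside `[-K, K]` are irrelevant. -/
def IsTrig (K : ℕ) (f : ℝ → ℝ) (c : ℤ → ℂ) : Prop :=
  ∀ t, (f t : ℂ) = ∑ n ∈ Icc (-(K : ℤ)) K, c n * 𝐞 (n * t)

lemma IsTrig.add {K : ℕ} {f g : ℝ → ℝ} {c d : ℤ → ℂ} (hf : IsTrig K f c) (hg : IsTrig K g d) :
    IsTrig K (fun t => f t + g t) (fun n => c n + d n) := fun t => by
  simp only [Complex.ofReal_add, hf t, hg t, ← sum_add_distrib, add_mul]

lemma IsTrig.sub {K : ℕ} {f g : ℝ → ℝ} {c d : ℤ → ℂ} (hf : IsTrig K f c) (hg : IsTrig K g d) :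
    IsTrig K (fun t => f t - g t) (fun n => c n - d n) := fun t => by
  simp only [Complex.ofReal_sub, hf t, hg t, ← sum_sub_distrib, sub_mul]

lemma IsTrig.const_mul {K : ℕ} {f : ℝ → ℝ} {c : ℤ → ℂ} (hf : IsTrig K f c) (a : ℝ) :
    IsTrig K (fun t => a * f t) (fun n => a * c n) := fun t => by
  simp only [Complex.ofReal_mul, hf t, mul_sum, mul_assoc]

lemma IsTrig.shift {K : ℕ} {f : ℝ → ℝ} {c : ℤ → ℂ} (hf : IsTrig K f c) (s : ℝ) :
    IsTrig K (fun t => f (t + s)) (fun n => c n * 𝐞 (n * s)) := fun t => by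
  simp only [hf (t + s), mul_add, AddChar.map_add_eq_mul, Circle.coe_mul]
  exact sum_congr rfl fun n _ => by ring

lemma isTrig_const (K : ℕ) (a : ℝ) :
    IsTrig K (fun _ => a) (fun n => if n = 0 then (a : ℂ) else 0) := fun t => by
  simp only [ite_mul, zero_mul]
  rw [sum_ite_eq' (Icc (-(K : ℤ)) K) 0]
  simp

lemma fourierChar_add_fourierChar_neg (x : ℝ) :
    (𝐞 x : ℂ) + 𝐞 (-x) = 2 * (Real.cos (2 * π * x) : ℂ) := by
  simp only [Real.fourierChar_apply, Complex.ofReal_cos, Complex.cos]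
  push_cast
  ring_nf

lemma isTrig_sum_cos (K : ℕ) {a : ℕ → ℝ} (ha : a 0 = 0) :
    IsTrig K (fun t => ∑ n ∈ range (K + 1), a n * Real.cos (2 * π * n * t))
      (fun n => ((a n.natAbs / 2 : ℝ) : ℂ)) := by
  intro t
  induction K with
  | zero => simp [ha]
  | succ K ih =>
    beta_reduce at ih ⊢
    have hIcc : Icc (-((K + 1 : ℕ) : ℤ)) ((K + 1 : ℕ) : ℤ) =
        insert ((K + 1 : ℕ) : ℤ) (insert (-((K + 1 : ℕ) : ℤ)) (Icc (-(K : ℤ)) K)) := by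
      ext n; simp; omega
    have hcos := fourierChar_add_fourierChar_neg ((K + 1 : ℕ) * t)
    rw [sum_range_succ, Complex.ofReal_add, ih, hIcc, sum_insert (by simp; omega),
      sum_insert (by simp), Complex.ofReal_mul, Complex.ofReal_div]
    simp only [Int.natAbs_natCast, Int.natAbs_neg, Int.cast_natCast, Int.cast_neg, neg_mul]
    rw [← mul_assoc (2 * π)] at hcos
    push_cast at hcos ⊢
    linear_combination (-(a (K + 1) : ℂ) / 2) * hcos

/-! ### The sawtooth function and its periodic primitive -/

/-- The sawtooth function, in terms of which indicators of arcs are expressed. -/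
def sawtooth (t : ℝ) : ℝ := Int.fract t - 1 / 2

/-- The continuous `1`-periodic primitive of the sawtooth function with mean zero. -/
def sawPrim (t : ℝ) : ℝ := bernoulliFun 2 (Int.fract t) / 2

lemma sawPrim_eq (t : ℝ) : sawPrim t = ((t - ⌊t⌋) ^ 2 - (t - ⌊t⌋) + 1 / 6) / 2 := by
  rw [sawPrim, bernoulliFun_two, Int.fract]
  norm_num

/-- The primitive is the lower envelope of the integer translates of the parabola it is made of. -/
lemma sawPrim_le (t : ℝ) (j : ℤ) : sawPrim t ≤ ((t - j) ^ 2 - (t - j) + 1 / 6) / 2 := by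
  have hfract_nonneg := Int.fract_nonneg t
  have hfract_lt := Int.fract_lt_one t
  have ht : t - j = Int.fract t + ((⌊t⌋ - j : ℤ) : ℝ) := by
    push_cast
    linarith [Int.floor_add_fract t]
  rw [sawPrim_eq, Int.self_sub_floor, ht]
  generalize ⌊t⌋ - j = d
  have hgap : 0 ≤ (d : ℝ) * (d - 1 + 2 * Int.fract t) := by
    rcases lt_trichotomy d 0 with hd | hd | hd
    · have : (d : ℝ) ≤ -1 := by exact_mod_cast (by omega : d ≤ -1)
      nlinarith
    · simp [hd]
    · have : (1 : ℝ) ≤ d := by exact_mod_cast hd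
      nlinarith
  nlinarith

lemma sawPrim_add_one (t : ℝ) : sawPrim (t + 1) = sawPrim t := by simp [sawPrim]

lemma cos_two_pi_mul_fract (n : ℕ) (t : ℝ) :
    Real.cos (2 * π * n * Int.fract t) = Real.cos (2 * π * n * t) := by
  have : 2 * π * n * Int.fract t = 2 * π * n * t - ((n * ⌊t⌋ : ℤ) : ℝ) * (2 * π) := by
    rw [Int.fract]
    push_cast
    ring
  rw [this, Real.cos_sub_int_mul_two_pi]

lemma hasSum_sawPrim (t : ℝ) :
    HasSum (fun n : ℕ => Real.cos (2 * π * n * t) / (2 * π ^ 2 * (n : ℝ) ^ 2)) (sawPrim t) := by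
  have h := (hasSum_one_div_nat_pow_mul_cos (k := 1) one_ne_zero
    (x := Int.fract t) ⟨Int.fract_nonneg t, (Int.fract_lt_one t).le⟩).mul_left (1 / (2 * π ^ 2))
  convert! h using 1
  · ext n
    rw [cos_two_pi_mul_fract, mul_one]
    ring
  · rw [mul_one, ← bernoulliFun, sawPrim]
    norm_num [Nat.factorial]
    field_simp

/-- A partial sum of the Fourier series of the primitive of the sawtooth function. -/
def sawPrimTrunc (K : ℕ) (t : ℝ) : ℝ :=
  ∑ n ∈ range (K + 1), Real.cos (2 * π * n * t) / (2 * π ^ 2 * (n : ℝ) ^ 2)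

lemma abs_cos_div_le_inv_sq {n : ℕ} (hn : 0 < n) (t : ℝ) :
    |Real.cos (2 * π * n * t) / (2 * π ^ 2 * (n : ℝ) ^ 2)| ≤ ((n : ℝ) ^ 2)⁻¹ := by
  rw [abs_div, abs_of_pos (by positivity : 0 < 2 * π ^ 2 * (n : ℝ) ^ 2),
    div_le_iff₀ (by positivity)]
  have hpi := Real.pi_gt_three
  field_simp
  nlinarith [Real.abs_cos_le_one (2 * π * n * t)]

lemma abs_sawPrim_sub_sawPrimTrunc_le {K : ℕ} (hK : 1 ≤ K) (t : ℝ) :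
    |sawPrim t - sawPrimTrunc K t| ≤ 1 / K := by
  have hlim := (hasSum_sawPrim t).tendsto_sum_nat
  refine le_of_tendsto
    ((hlim.comp (Filter.tendsto_add_atTop_nat 1)).sub_const (sawPrimTrunc K t)).abs ?_
  filter_upwards [Filter.eventually_ge_atTop K] with M hM
  have hIoc : Ico (K + 1) (M + 1) = Ioc K M := by ext; simp
  simp only [Function.comp, sawPrimTrunc]
  rw [← sum_range_add_sum_Ico _ (by omega : K + 1 ≤ M + 1), add_sub_cancel_left, hIoc]
  calc
    _ ≤ ∑ n ∈ Ioc K M, ((n : ℝ) ^ 2)⁻¹ := (abs_sum_le_sum_abs _ _).trans <|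
      sum_le_sum fun n hn => abs_cos_div_le_inv_sq (by simp only [mem_Ioc] at hn; omega) t
    _ ≤ (K : ℝ)⁻¹ - (M : ℝ)⁻¹ := sum_Ioc_inv_sq_le_sub (by omega) hM
    _ ≤ 1 / K := by
      rw [one_div]
      linarith [show (0 : ℝ) ≤ (M : ℝ)⁻¹ by positivity]

/-! ### Second differences of the primitive -/

/-- The normalised second difference of `sawPrim` with step `h`: a spike of width `h` at the
integers, obtained by convolving the derivative of the sawtooth with a tent. -/
def sawDiff (h t : ℝ) : ℝ := (2 * sawPrim t - sawPrim (t + h) - sawPrim (t - h)) / h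

/-- The normalised second difference of `sawPrimTrunc`, a trigonometric polynomial approximating
`sawDiff`. -/
def sawDiffTrunc (K : ℕ) (h t : ℝ) : ℝ :=
  (2 * sawPrimTrunc K t - sawPrimTrunc K (t + h) - sawPrimTrunc K (t - h)) / h

lemma neg_le_sawDiff {h : ℝ} (hh : 0 < h) (t : ℝ) : -h ≤ sawDiff h t := by
  rw [sawDiff, le_div_iff₀ hh, sawPrim_eq t]
  nlinarith [sawPrim_le (t + h) ⌊t⌋, sawPrim_le (t - h) ⌊t⌋]

lemma abs_sawDiff_sub_sawDiffTrunc_le {K : ℕ} (hK : 1 ≤ K) {h : ℝ} (hh : 0 < h) (t : ℝ) :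
    |sawDiff h t - sawDiffTrunc K h t| ≤ 4 / (h * K) := by
  have hmid := abs_le.1 (abs_sawPrim_sub_sawPrimTrunc_le hK t)
  have hright := abs_le.1 (abs_sawPrim_sub_sawPrimTrunc_le hK (t + h))
  have hleft := abs_le.1 (abs_sawPrim_sub_sawPrimTrunc_le hK (t - h))
  have : (4 : ℝ) / (h * K) = (4 * (1 / K)) / h := by field_simp
  rw [sawDiff, sawDiffTrunc, ← sub_div, abs_div, abs_of_pos hh, this]
  gcongr
  rw [abs_le]
  constructor <;> linarith [hmid.1, hmid.2, hright.1, hright.2, hleft.1, hleft.2]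

lemma abs_sawtooth_sub_slope_le {h : ℝ} (hh : 0 < h) (t : ℝ) :
    |sawtooth t - (sawPrim (t + h) - sawPrim t) / h| ≤ sawDiff h t + 3 / 2 * h := by
  have hmid := sawPrim_eq t
  have hright : (sawPrim (t + h) - sawPrim t) / h ≤ sawtooth t + h / 2 := by
    rw [div_le_iff₀ hh, sawtooth, Int.fract]
    nlinarith [sawPrim_le (t + h) ⌊t⌋]
  have hleft : sawtooth t ≤ (sawPrim t - sawPrim (t - h)) / h + h / 2 := by
    rw [← sub_le_iff_le_add, le_div_iff₀ hh, sawtooth, Int.fract]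
    nlinarith [sawPrim_le (t - h) ⌊t⌋]
  have hdiff : sawDiff h t =
      (sawPrim t - sawPrim (t - h)) / h - (sawPrim (t + h) - sawPrim t) / h := by
    rw [sawDiff]
    ring
  rw [abs_le]
  constructor <;> linarith [neg_le_sawDiff hh t]

/-- The Fourier coefficients of `sawDiff h` in cosines; at `n = 0` the formula gives the correct
value `0` through division by zero. -/
def sawCoeff (h : ℝ) (n : ℕ) : ℝ := (1 - Real.cos (2 * π * n * h)) / (π ^ 2 * (n : ℝ) ^ 2 * h)

lemma sawDiffTrunc_eq_sum (K : ℕ) (h t : ℝ) :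
    sawDiffTrunc K h t = ∑ n ∈ range (K + 1), sawCoeff h n * Real.cos (2 * π * n * t) := by
  simp only [sawDiffTrunc, sawPrimTrunc, mul_sum, ← sum_sub_distrib, sum_div]
  refine sum_congr rfl fun n _ => ?_
  rw [mul_add, mul_sub, Real.cos_add, Real.cos_sub, sawCoeff]
  rcases eq_or_ne n 0 with rfl | hn
  · simp
  · rcases eq_or_ne h 0 with rfl | hh
    · simp
    · field_simp
      ring

lemma sawCoeff_zero (h : ℝ) : sawCoeff h 0 = 0 := by simp [sawCoeff]

lemma sawCoeff_nonneg {h : ℝ} (hh : 0 < h) (n : ℕ) : 0 ≤ sawCoeff h n :=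
  div_nonneg (sub_nonneg.2 (Real.cos_le_one _)) (by positivity)

lemma sawCoeff_le_mul {h : ℝ} (hh : 0 < h) (n : ℕ) : sawCoeff h n ≤ 2 * h := by
  rcases eq_or_ne n 0 with rfl | hn
  · rw [sawCoeff_zero]
    positivity
  · rw [sawCoeff, div_le_iff₀ (by positivity)]
    nlinarith [Real.one_sub_sq_div_two_le_cos (x := 2 * π * n * h)]

lemma sawCoeff_le_inv {h : ℝ} (hh : 0 < h) {n : ℕ} (hn : n ≠ 0) :
    sawCoeff h n ≤ 1 / ((n : ℝ) ^ 2 * h) := by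
  rw [sawCoeff, div_le_div_iff₀ (by positivity) (by positivity)]
  have hcos := Real.neg_one_le_cos (2 * π * n * h)
  have hpi : 9 ≤ π ^ 2 := by nlinarith [Real.pi_gt_three]
  have : 0 < (n : ℝ) ^ 2 * h := by positivity
  nlinarith

lemma isTrig_sawDiffTrunc (K : ℕ) (h : ℝ) :
    IsTrig K (sawDiffTrunc K h) (fun n => ((sawCoeff h n.natAbs / 2 : ℝ) : ℂ)) := fun t => by
  rw [sawDiffTrunc_eq_sum]
  exact isTrig_sum_cos K (sawCoeff_zero h) t

/-! ### Dyadic decomposition of the sawtooth function -/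

/-- A bound for the `n`-th Fourier coefficient of a spike of width `2⁻ˡ` and height `1`. -/
def dyadicWeight (l : ℕ) (n : ℤ) : ℝ := min ((2 : ℝ)⁻¹ ^ l) (2 ^ l / (max 1 |(n : ℝ)|) ^ 2)

lemma dyadicWeight_nonneg (l : ℕ) (n : ℤ) : 0 ≤ dyadicWeight l n := by
  unfold dyadicWeight
  positivity

lemma dyadicWeight_zero (l : ℕ) : dyadicWeight l 0 = (2 : ℝ)⁻¹ ^ l := by
  have hinv : (2 : ℝ)⁻¹ ^ l ≤ 1 := pow_le_one₀ (by norm_num) (by norm_num)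
  have hpow : (1 : ℝ) ≤ 2 ^ l := one_le_pow₀ (by norm_num)
  simpa [dyadicWeight] using hinv.trans hpow

lemma sawCoeff_le_dyadicWeight {l : ℕ} {h : ℝ} (hh : 0 < h) {n : ℤ}
    (hlower : 2⁻¹ ^ l ≤ 2 * h) (hupper : h ≤ 2⁻¹ ^ l) :
    sawCoeff h n.natAbs / 2 ≤ dyadicWeight l n := by
  rcases eq_or_ne n 0 with rfl | hn
  · simpa only [Int.natAbs_zero, sawCoeff_zero, zero_div] using dyadicWeight_nonneg l 0
  have hn1 : (1 : ℝ) ≤ |(n : ℝ)| := by exact_mod_cast Int.one_le_abs hn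
  rw [dyadicWeight, max_eq_right hn1]
  refine le_min (by linarith [sawCoeff_le_mul hh n.natAbs]) ?_
  have hcoeff := sawCoeff_le_inv hh (n := n.natAbs) (by simpa using hn)
  rw [show ((n.natAbs : ℕ) : ℝ) = |(n : ℝ)| by simp [Nat.cast_natAbs]] at hcoeff
  have hscale : 1 ≤ 2 ^ l * (2 * h) := by
    calc (1 : ℝ) = 2 ^ l * 2⁻¹ ^ l := by rw [← mul_pow]; norm_num
      _ ≤ _ := by gcongr
  calc sawCoeff h n.natAbs / 2 ≤ 1 / (|(n : ℝ)| ^ 2 * h) / 2 := by gcongr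
    _ ≤ 2 ^ l / |(n : ℝ)| ^ 2 := by
      rw [div_div, div_le_div_iff₀ (by positivity) (by positivity)]
      nlinarith [show 0 < |(n : ℝ)| ^ 2 by positivity]

/-- The difference of the slopes of `sawPrim` at scales `2⁻⁽ˡ⁺¹⁾` and `2⁻ˡ`, truncated to
frequencies at most `4 ^ Λ`. -/
def sawPiece (Λ l : ℕ) (t : ℝ) : ℝ :=
  2⁻¹ * sawDiffTrunc (4 ^ Λ) (2⁻¹ ^ (l + 1)) (t + 2⁻¹ ^ (l + 1))

/-- What remains of the sawtooth function after removing its first `Λ` dyadic pieces. -/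
def sawRem (Λ : ℕ) (t : ℝ) : ℝ := sawtooth t - ∑ l ∈ range Λ, sawPiece Λ l t

lemma sum_sawDiff (Λ : ℕ) (t : ℝ) :
    ∑ l ∈ range Λ, 2⁻¹ * sawDiff (2⁻¹ ^ (l + 1)) (t + 2⁻¹ ^ (l + 1)) =
      (sawPrim (t + 2⁻¹ ^ Λ) - sawPrim t) / 2⁻¹ ^ Λ := by
  induction Λ with
  | zero => simp [sawPrim_add_one]
  | succ Λ ih =>
    have hshift : t + 2⁻¹ ^ (Λ + 1) + 2⁻¹ ^ (Λ + 1) = t + 2⁻¹ ^ Λ := by ring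
    rw [sum_range_succ, ih, sawDiff, hshift, add_sub_cancel_right, pow_succ]
    field_simp
    ring

lemma abs_sawDiff_sub_sawPiece_le (Λ l : ℕ) (t : ℝ) :
    |2⁻¹ * sawDiff (2⁻¹ ^ (l + 1)) (t + 2⁻¹ ^ (l + 1)) - sawPiece Λ l t| ≤
      4 * 2 ^ l * 4⁻¹ ^ Λ := by
  have h := abs_sawDiff_sub_sawDiffTrunc_le (K := 4 ^ Λ) (Nat.one_le_pow _ _ (by norm_num))
    (h := 2⁻¹ ^ (l + 1)) (by positivity) (t + 2⁻¹ ^ (l + 1))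
  rw [sawPiece, ← mul_sub, abs_mul, abs_of_pos (by norm_num : (0 : ℝ) < 2⁻¹)]
  calc _ ≤ 2⁻¹ * (4 / (2⁻¹ ^ (l + 1) * ((4 ^ Λ : ℕ) : ℝ))) := by gcongr
    _ = _ := by
      push_cast
      rw [pow_succ, inv_pow, inv_pow]
      field_simp

lemma two_pow_mul_four_inv_pow_le {Λ l : ℕ} (hl : l ≤ Λ) : (2 : ℝ) ^ l * 4⁻¹ ^ Λ ≤ 2⁻¹ ^ Λ := by
  calc (2 : ℝ) ^ l * 4⁻¹ ^ Λ ≤ 2 ^ Λ * 4⁻¹ ^ Λ := by gcongr; norm_num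
    _ = 2⁻¹ ^ Λ := by rw [← mul_pow]; norm_num

lemma abs_sawPiece_le {Λ l : ℕ} (hl : l < Λ) (t : ℝ) :
    |sawPiece Λ l t| ≤ sawPiece Λ l t + 10 * 2⁻¹ ^ l := by
  have herror := abs_le.1 (abs_sawDiff_sub_sawPiece_le Λ l t)
  have hlower := neg_le_sawDiff (h := 2⁻¹ ^ (l + 1)) (by positivity) (t + 2⁻¹ ^ (l + 1))
  have hscale := two_pow_mul_four_inv_pow_le hl.le
  have hmono : (2 : ℝ)⁻¹ ^ Λ ≤ 2⁻¹ ^ l := pow_le_pow_of_le_one (by norm_num) (by norm_num) hl.le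
  have hhalf : (2 : ℝ)⁻¹ ^ (l + 1) = 2⁻¹ ^ l / 2 := by rw [pow_succ]; ring
  have hpos : (0 : ℝ) < 2⁻¹ ^ l := by positivity
  rw [hhalf] at herror hlower
  rw [abs_le]
  constructor <;> nlinarith

lemma sum_two_pow_le (q : ℕ) : ∑ l ∈ range q, (2 : ℝ) ^ l ≤ 2 ^ q := by
  rw [geom_sum_eq (by norm_num)]
  norm_num

lemma abs_slope_sub_sum_sawPiece_le (Λ : ℕ) (t : ℝ) :
    |(sawPrim (t + 2⁻¹ ^ Λ) - sawPrim t) / 2⁻¹ ^ Λ - ∑ l ∈ range Λ, sawPiece Λ l t| ≤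
      4 * 2⁻¹ ^ Λ := by
  rw [← sum_sawDiff, ← sum_sub_distrib]
  calc _ ≤ ∑ l ∈ range Λ, 4 * 2 ^ l * 4⁻¹ ^ Λ := (abs_sum_le_sum_abs _ _).trans
        (sum_le_sum fun l _ => abs_sawDiff_sub_sawPiece_le Λ l t)
    _ = 4 * ((∑ l ∈ range Λ, (2 : ℝ) ^ l) * 4⁻¹ ^ Λ) := by rw [← sum_mul, ← mul_sum, mul_assoc]
    _ ≤ 4 * (2 ^ Λ * 4⁻¹ ^ Λ) := by gcongr; exact sum_two_pow_le Λ
    _ ≤ 4 * 2⁻¹ ^ Λ := by gcongr; exact two_pow_mul_four_inv_pow_le le_rfl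

lemma abs_sawRem_le (Λ : ℕ) (t : ℝ) :
    |sawRem Λ t| ≤ sawDiffTrunc (4 ^ Λ) (2⁻¹ ^ Λ) t + 10 * 2⁻¹ ^ Λ := by
  have hslope := abs_le.1 (abs_sawtooth_sub_slope_le (h := 2⁻¹ ^ Λ) (by positivity) t)
  have hpieces := abs_le.1 (abs_slope_sub_sum_sawPiece_le Λ t)
  have htrunc := abs_le.1 <| abs_sawDiff_sub_sawDiffTrunc_le (K := 4 ^ Λ)
    (Nat.one_le_pow _ _ (by norm_num)) (h := 2⁻¹ ^ Λ) (by positivity) t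
  have herror : (4 : ℝ) / (2⁻¹ ^ Λ * ((4 ^ Λ : ℕ) : ℝ)) = 4 * 2⁻¹ ^ Λ := by
    have : (4 : ℝ) ^ Λ = 2 ^ Λ * 2 ^ Λ := by rw [← mul_pow]; norm_num
    push_cast
    rw [inv_pow, this]
    field_simp
  have hpos : (0 : ℝ) < 2⁻¹ ^ Λ := by positivity
  rw [herror] at htrunc
  rw [sawRem, abs_le]
  constructor <;> linarith [hslope.1, hslope.2, hpieces.1, hpieces.2, htrunc.1, htrunc.2]

/-- The `l`-th term of the dyadic decomposition of the sawtooth function. -/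
def sawPart (Λ l : ℕ) (t : ℝ) : ℝ := if l < Λ then sawPiece Λ l t else sawRem Λ t

/-- The trigonometric polynomial that majorises `sawPart` up to an additive constant. -/
def sawPoly (Λ l : ℕ) (t : ℝ) : ℝ :=
  if l < Λ then sawPiece Λ l t else sawDiffTrunc (4 ^ Λ) (2⁻¹ ^ Λ) t

/-- A trigonometric polynomial majorising the absolute value of `sawPart`. -/
def sawMaj (Λ l : ℕ) (t : ℝ) : ℝ := sawPoly Λ l t + 10 * 2⁻¹ ^ l

lemma sawPart_of_lt {Λ l : ℕ} (hl : l < Λ) : sawPart Λ l = sawPiece Λ l := by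
  ext t
  exact if_pos hl

lemma abs_sawPart_le {Λ l : ℕ} (hl : l ≤ Λ) (t : ℝ) : |sawPart Λ l t| ≤ sawMaj Λ l t := by
  unfold sawPart sawMaj sawPoly
  split_ifs with h
  · exact abs_sawPiece_le h t
  · obtain rfl : l = Λ := by omega
    exact abs_sawRem_le l t

lemma sum_sawPart (Λ : ℕ) (t : ℝ) : ∑ l ∈ range (Λ + 1), sawPart Λ l t = sawtooth t := by
  rw [sum_range_succ, sum_congr rfl fun l hl => congrFun (sawPart_of_lt (mem_range.1 hl)) t,
    sawPart, if_neg (lt_irrefl _), sawRem]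
  ring

lemma exists_isTrig_sawPiece (Λ l : ℕ) :
    ∃ c : ℤ → ℂ, IsTrig (4 ^ Λ) (sawPiece Λ l) c ∧ c 0 = 0 ∧ ∀ n, ‖c n‖ ≤ dyadicWeight l n := by
  have h := ((isTrig_sawDiffTrunc (4 ^ Λ) (2⁻¹ ^ (l + 1))).shift (2⁻¹ ^ (l + 1))).const_mul 2⁻¹
  refine ⟨_, h, by simp [sawCoeff_zero], fun n => ?_⟩
  have hpos : (0 : ℝ) < 2⁻¹ ^ (l + 1) := by positivity
  have hhalf : (2 : ℝ)⁻¹ ^ (l + 1) = 2⁻¹ ^ l / 2 := by rw [pow_succ]; ring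
  have hnonneg := sawCoeff_nonneg hpos n.natAbs
  have hle := sawCoeff_le_dyadicWeight (l := l) hpos (n := n) (by linarith) (by linarith)
  rw [norm_mul, norm_mul, Circle.norm_coe, Complex.norm_real, Complex.norm_real, mul_one,
    Real.norm_of_nonneg (by positivity), Real.norm_of_nonneg (by positivity)]
  linarith

lemma exists_isTrig_sawPoly {Λ l : ℕ} (hl : l ≤ Λ) :
    ∃ c : ℤ → ℂ, IsTrig (4 ^ Λ) (sawPoly Λ l) c ∧ c 0 = 0 ∧ ∀ n, ‖c n‖ ≤ dyadicWeight l n := by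
  unfold sawPoly
  rcases hl.lt_or_eq with hlt | rfl
  · simp only [hlt, if_true]
    exact exists_isTrig_sawPiece Λ l
  · simp only [lt_irrefl, if_false]
    refine ⟨_, isTrig_sawDiffTrunc _ _, by simp [sawCoeff_zero], fun n => ?_⟩
    have hpos : (0 : ℝ) < 2⁻¹ ^ l := by positivity
    have hnonneg := sawCoeff_nonneg hpos n.natAbs
    rw [Complex.norm_real, Real.norm_of_nonneg (by positivity)]
    exact sawCoeff_le_dyadicWeight hpos (by linarith) le_rfl

lemma exists_isTrig_sawMaj {Λ l : ℕ} (hl : l ≤ Λ) :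
    ∃ c : ℤ → ℂ, IsTrig (4 ^ Λ) (sawMaj Λ l) c ∧ ∀ n, ‖c n‖ ≤ 10 * dyadicWeight l n := by
  obtain ⟨c, hc, hc0, hcn⟩ := exists_isTrig_sawPoly hl
  refine ⟨_, hc.add (isTrig_const _ (10 * 2⁻¹ ^ l)), fun n => ?_⟩
  rcases eq_or_ne n 0 with rfl | hn
  · rw [hc0, dyadicWeight_zero]
    simp
  · simp only [hn, if_false, add_zero]
    linarith [hcn n, dyadicWeight_nonneg l n]

/-! ### Dyadic decomposition of the indicator of an arc -/

lemma indicator_eq_add_sawtooth_sub {x : ℝ} (hx : x ∈ Set.Icc (0 : ℝ) 1) (y : ℝ) :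
    (if Int.fract y < x then (1 : ℝ) else 0) = x + sawtooth (y - x) - sawtooth y := by
  have hfract_nonneg := Int.fract_nonneg y
  have hfract_lt := Int.fract_lt_one y
  have hfloor := Int.floor_add_fract y
  unfold sawtooth
  split_ifs with h
  · have : Int.fract (y - x) = Int.fract y - x + 1 := by
      rw [Int.fract_eq_iff]
      refine ⟨by linarith [hx.2], by linarith, ⌊y⌋ - 1, ?_⟩
      push_cast
      linarith
    rw [this]
    ring
  · have : Int.fract (y - x) = Int.fract y - x := by
      rw [Int.fract_eq_iff]
      exact ⟨by linarith, by linarith [hx.1], ⌊y⌋, by linarith⟩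
    rw [this]
    ring

/-- The `l`-th term of the dyadic decomposition of the indicator of the arc `[0, x)`; its mean `x`
is put into the term `l = 0`. -/
def arcPart (Λ : ℕ) (x : ℝ) (l : ℕ) (y : ℝ) : ℝ :=
  (if l = 0 then x else 0) + sawPart Λ l (y + -x) - sawPart Λ l y

/-- A trigonometric polynomial majorising the absolute value of `arcPart`. -/
def arcMaj (Λ : ℕ) (x : ℝ) (l : ℕ) (y : ℝ) : ℝ :=
  (if l = 0 then 1 else 0) + sawMaj Λ l (y + -x) + sawMaj Λ l y

section

variable {Λ : ℕ} {x : ℝ}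

lemma sum_arcPart (hx : x ∈ Set.Icc (0 : ℝ) 1) (y : ℝ) :
    ∑ l ∈ range (Λ + 1), arcPart Λ x l y = if Int.fract y < x then (1 : ℝ) else 0 := by
  simp only [arcPart]
  rw [sum_sub_distrib, sum_add_distrib, sum_sawPart, sum_sawPart, indicator_eq_add_sawtooth_sub hx,
    sum_ite_eq' (range (Λ + 1)) 0]
  simp [sub_eq_add_neg]

lemma abs_arcPart_le (hx : x ∈ Set.Icc (0 : ℝ) 1) {l : ℕ} (hl : l ≤ Λ) (y : ℝ) :
    |arcPart Λ x l y| ≤ arcMaj Λ x l y := by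
  have hmean : |if l = 0 then x else 0| ≤ if l = 0 then (1 : ℝ) else 0 := by
    split_ifs
    exacts [abs_le.2 ⟨by linarith [hx.1], hx.2⟩, abs_zero.le]
  exact (abs_sub _ _).trans (add_le_add ((abs_add_le _ _).trans
    (add_le_add hmean (abs_sawPart_le hl _))) (abs_sawPart_le hl y))

lemma norm_ite_add_add_le {l : ℕ} {n : ℤ} {a : ℝ} (ha : a ∈ Set.Icc (0 : ℝ) 1) {p q : ℂ}
    (hp : ‖p‖ ≤ 10 * dyadicWeight l n) (hq : ‖q‖ ≤ 10 * dyadicWeight l n) :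
    ‖(if n = 0 then (((if l = 0 then a else 0 : ℝ)) : ℂ) else 0) + p + q‖ ≤
      21 * dyadicWeight l n := by
  have hmean : ‖(if n = 0 then (((if l = 0 then a else 0 : ℝ)) : ℂ) else 0)‖ ≤
      dyadicWeight l n := by
    split_ifs with hn hl
    · subst hn hl
      rw [dyadicWeight_zero, Complex.norm_real, Real.norm_of_nonneg ha.1]
      simpa using ha.2
    all_goals simpa using dyadicWeight_nonneg l n
  linarith [norm_add₃_le (a := if n = 0 then (((if l = 0 then a else 0 : ℝ)) : ℂ) else 0)
    (b := p) (c := q)]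

lemma exists_isTrig_arcPart (hx : x ∈ Set.Icc (0 : ℝ) 1) {l : ℕ} (hl : l < Λ) :
    ∃ c : ℤ → ℂ, IsTrig (4 ^ Λ) (arcPart Λ x l) c ∧ (c 0 = if l = 0 then (x : ℂ) else 0) ∧
      ∀ n, ‖c n‖ ≤ 21 * dyadicWeight l n := by
  obtain ⟨c, hc, hc0, hcn⟩ := exists_isTrig_sawPiece Λ l
  have htrig := ((isTrig_const _ (if l = 0 then x else 0)).add (hc.shift (-x))).sub hc
  simp only [← sawPart_of_lt hl] at htrig
  have hcn' : ∀ n, ‖c n‖ ≤ 10 * dyadicWeight l n := fun n => by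
    linarith [hcn n, dyadicWeight_nonneg l n]
  refine ⟨_, htrig, by simp [hc0, apply_ite Complex.ofReal], fun n => ?_⟩
  rw [sub_eq_add_neg]
  exact norm_ite_add_add_le hx (by rw [norm_mul, Circle.norm_coe, mul_one]; exact hcn' n)
    (by rw [norm_neg]; exact hcn' n)

lemma exists_isTrig_arcMaj (x : ℝ) {l : ℕ} (hl : l ≤ Λ) :
    ∃ c : ℤ → ℂ, IsTrig (4 ^ Λ) (arcMaj Λ x l) c ∧ ∀ n, ‖c n‖ ≤ 21 * dyadicWeight l n := by
  obtain ⟨c, hc, hcn⟩ := exists_isTrig_sawMaj hl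
  exact ⟨_, ((isTrig_const _ (if l = 0 then 1 else 0)).add (hc.shift (-x))).add hc, fun n =>
    norm_ite_add_add_le ⟨zero_le_one, le_rfl⟩
      (by rw [norm_mul, Circle.norm_coe, mul_one]; exact hcn n) (hcn n)⟩

end

/-! ### Averages of exponential sums -/

lemma norm_fourierChar_sub_one (θ : ℝ) : ‖(𝐞 θ : ℂ) - 1‖ = 2 * |Real.sin (π * θ)| := by
  rw [Real.fourierChar_apply, mul_comm, Complex.norm_exp_I_mul_ofReal_sub_one, Real.norm_eq_abs,
    abs_mul, abs_two, mul_assoc 2, mul_div_cancel_left₀ _ two_ne_zero]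

lemma four_mul_norm_le (θ : ℝ) : 4 * ‖(θ : UnitAddCircle)‖ ≤ ‖(𝐞 θ : ℂ) - 1‖ := by
  have hround := abs_sub_round θ
  have hperiod : |Real.sin (π * θ)| = |Real.sin (π * (θ - round θ))| := by
    rw [mul_sub, mul_comm π (round θ : ℝ), Real.sin_sub_int_mul_pi, abs_mul, abs_zpow, abs_neg,
      abs_one, one_zpow, one_mul]
  have hsin := Real.mul_abs_le_abs_sin (x := π * (θ - round θ))
    (by rw [abs_mul, abs_of_pos Real.pi_pos]; nlinarith [Real.pi_pos])
  rw [norm_fourierChar_sub_one, hperiod, UnitAddCircle.norm_eq]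
  rw [abs_mul, abs_of_pos Real.pi_pos, ← mul_assoc, div_mul_cancel₀ _ Real.pi_ne_zero] at hsin
  linarith

lemma fourierChar_natCast_mul (t : ℕ) (θ : ℝ) : (𝐞 (t * θ) : ℂ) = (𝐞 θ : ℂ) ^ t := by
  rw [← nsmul_eq_mul, AddChar.map_nsmul_eq_pow, Circle.coe_pow]

lemma norm_geom_sum_fourierChar_le {θ : ℝ} (hθ : 0 < ‖(θ : UnitAddCircle)‖) (J : ℕ) :
    ‖∑ t ∈ range J, (𝐞 (t * θ) : ℂ)‖ ≤ 1 / ‖(θ : UnitAddCircle)‖ := by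
  have hgap := four_mul_norm_le θ
  have hne : (𝐞 θ : ℂ) ≠ 1 := by
    intro h
    rw [h, sub_self, norm_zero] at hgap
    linarith
  have hnum : ‖(𝐞 θ : ℂ) ^ J - 1‖ ≤ 2 := by
    refine (norm_sub_le _ _).trans ?_
    rw [norm_pow, Circle.norm_coe]
    norm_num
  simp only [fourierChar_natCast_mul]
  rw [geom_sum_eq hne, norm_div, div_le_div_iff₀ (by linarith) hθ]
  nlinarith

lemma norm_sum_fourierChar_le_card (θ : ℝ) (J : ℕ) : ‖∑ t ∈ range J, (𝐞 (t * θ) : ℂ)‖ ≤ J := by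
  simpa only [Circle.norm_coe, sum_const, card_range, nsmul_eq_mul, mul_one] using
    norm_sum_le (range J) fun t => (𝐞 (t * θ) : ℂ)

/-- Weight with which a frequency `θ` enters an average of length `M` of exponential sums. -/
def avgWeight (M : ℕ) (θ : ℝ) : ℝ :=
  min 1 (1 / (M * ‖(θ : UnitAddCircle)‖)) / ‖(θ : UnitAddCircle)‖

lemma avgWeight_nonneg (M : ℕ) (θ : ℝ) : 0 ≤ avgWeight M θ := by
  unfold avgWeight
  positivity

lemma norm_double_sum_fourierChar_le {θ : ℝ} (hθ : 0 < ‖(θ : UnitAddCircle)‖) {M : ℕ}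
    (hM : 1 ≤ M) (J : ℕ) (a : ℤ) :
    ‖∑ s ∈ range M, ∑ t ∈ range J, (𝐞 (((a + s + t : ℤ) : ℝ) * θ) : ℂ)‖ ≤ M * avgWeight M θ := by
  have hfactor : ∑ s ∈ range M, ∑ t ∈ range J, (𝐞 (((a + s + t : ℤ) : ℝ) * θ) : ℂ) =
      𝐞 (a * θ) * ((∑ s ∈ range M, (𝐞 (s * θ) : ℂ)) * ∑ t ∈ range J, (𝐞 (t * θ) : ℂ)) := by
    rw [sum_mul_sum]
    simp only [mul_sum, Int.cast_add, Int.cast_natCast, add_mul, AddChar.map_add_eq_mul,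
      Circle.coe_mul, mul_assoc]
  have hM' : (0 : ℝ) < M := by exact_mod_cast hM
  rw [hfactor, norm_mul, Circle.norm_coe, one_mul, norm_mul, avgWeight, ← mul_div_assoc,
    ← mul_one_div]
  refine mul_le_mul ?_ (norm_geom_sum_fourierChar_le hθ J) (norm_nonneg _) (by positivity)
  rw [mul_min_of_nonneg _ _ hM'.le, mul_one]
  refine le_min (norm_sum_fourierChar_le_card θ M)
    ((norm_geom_sum_fourierChar_le hθ M).trans (le_of_eq ?_))
  field_simp

section

variable {ι : Type*} {S : Finset ι} {θ : ι → ℝ}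

/-- `F` is the real exponential sum over the integers with constant term `c₀`, frequencies `θ n`
and coefficients `c n` for `n ∈ S`. -/
def IsExpSum (S : Finset ι) (θ : ι → ℝ) (F : ℤ → ℝ) (c₀ : ℂ) (c : ι → ℂ) : Prop :=
  ∀ τ : ℤ, (F τ : ℂ) = c₀ + ∑ n ∈ S, c n * 𝐞 (τ * θ n)

lemma IsExpSum.norm_average_sub_le {F : ℤ → ℝ} {c₀ : ℂ} {c : ι → ℂ} (hF : IsExpSum S θ F c₀ c)
    (hθ : ∀ n ∈ S, 0 < ‖(θ n : UnitAddCircle)‖) {M : ℕ} (hM : 1 ≤ M) (J : ℕ) (a : ℤ) :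
    ‖((∑ s ∈ range M, ∑ t ∈ range J, F (a + s + t) : ℝ) : ℂ) - M * (J * c₀)‖ ≤
      M * ∑ n ∈ S, ‖c n‖ * avgWeight M (θ n) := by
  have hswap : ((∑ s ∈ range M, ∑ t ∈ range J, F (a + s + t) : ℝ) : ℂ) - M * (J * c₀) =
      ∑ n ∈ S, c n * ∑ s ∈ range M, ∑ t ∈ range J,
        (𝐞 (((a + s + t : ℤ) : ℝ) * θ n) : ℂ) := by
    push_cast
    simp only [hF _, sum_add_distrib, sum_const, card_range, nsmul_eq_mul]
    rw [add_sub_cancel_left]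
    simp only [mul_sum]
    rw [sum_comm (s := S)]
    refine sum_congr rfl fun s _ => ?_
    rw [sum_comm (s := S)]
    simp only [Int.cast_add, Int.cast_natCast]
  rw [hswap, mul_sum]
  refine (norm_sum_le _ _).trans (sum_le_sum fun n hn => ?_)
  rw [norm_mul, mul_left_comm]
  exact mul_le_mul_of_nonneg_left (norm_double_sum_fourierChar_le (hθ n hn) hM J a) (norm_nonneg _)

lemma sum_block_le_sum_shifted {V : ℤ → ℝ} (hV : ∀ τ, 0 ≤ V τ) {M s : ℕ} (hs : s ≤ M) (a : ℤ) :
    ∑ t ∈ range M, V (a + t) ≤ ∑ t ∈ range (2 * M), V (a - M + s + t) := by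
  have hshift : ∑ t ∈ range M, V (a + t) =
      ∑ t ∈ (range M).image (· + (M - s)), V (a - M + s + t) := by
    rw [sum_image fun x _ y _ h => by simpa using h]
    refine sum_congr rfl fun t _ => congrArg V ?_
    push_cast [Nat.cast_sub hs]
    ring
  rw [hshift]
  refine sum_le_sum_of_subset_of_nonneg (fun t ht => ?_) fun _ _ _ => hV _
  simp only [mem_image, mem_range] at ht ⊢
  omega

lemma IsExpSum.sum_block_le {V : ℤ → ℝ} {d₀ : ℂ} {d : ι → ℂ} (hV : IsExpSum S θ V d₀ d)
    (hθ : ∀ n ∈ S, 0 < ‖(θ n : UnitAddCircle)‖) (hV0 : ∀ τ, 0 ≤ V τ) {M : ℕ} (hM : 1 ≤ M)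
    (a : ℤ) :
    ∑ t ∈ range M, V (a + t) ≤ 2 * (M * ‖d₀‖) + ∑ n ∈ S, ‖d n‖ * avgWeight M (θ n) := by
  have hM' : (0 : ℝ) < M := by exact_mod_cast hM
  set A := ∑ s ∈ range M, ∑ t ∈ range (2 * M), V (a - M + s + t)
  have hblock : M * ∑ t ∈ range M, V (a + t) ≤ A := by
    simpa using sum_le_sum fun s hs => sum_block_le_sum_shifted hV0 (mem_range.1 hs).le a
  have hmain : ‖M * (((2 * M : ℕ) : ℂ) * d₀)‖ = M * (2 * (M * ‖d₀‖)) := by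
    simp only [norm_mul, Complex.norm_natCast]
    push_cast
    ring
  refine le_of_mul_le_mul_left (hblock.trans ?_) hM'
  calc A ≤ ‖(A : ℂ)‖ := by rw [Complex.norm_real]; exact Real.le_norm_self A
    _ ≤ ‖(A : ℂ) - M * (((2 * M : ℕ) : ℂ) * d₀)‖ + ‖M * (((2 * M : ℕ) : ℂ) * d₀)‖ :=
      norm_le_norm_sub_add _ _
    _ ≤ _ := by
      rw [hmain, mul_add, add_comm]
      exact add_le_add_right (hV.norm_average_sub_le hθ hM (2 * M) (a - M)) _

lemma abs_sum_sub_sum_shift_le (f : ℤ → ℝ) (a : ℤ) (m s : ℕ) :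
    |∑ t ∈ range m, f (a + t) - ∑ t ∈ range m, f (a + s + t)| ≤
      ∑ t ∈ range s, |f (a + t)| + ∑ t ∈ range s, |f (a + m + t)| := by
  have hends : ∑ t ∈ range m, f (a + t) - ∑ t ∈ range m, f (a + s + t) =
      ∑ t ∈ range s, f (a + t) - ∑ t ∈ range s, f (a + m + t) := by
    have hleft := sum_range_add (fun t : ℕ => f (a + t)) m s
    have hright := sum_range_add (fun t : ℕ => f (a + t)) s m
    rw [add_comm s m, hleft] at hright
    simp only [Nat.cast_add, ← add_assoc] at hright
    linarith
  rw [hends]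
  exact (abs_sub _ _).trans (add_le_add (abs_sum_le_sum_abs _ _) (abs_sum_le_sum_abs _ _))

lemma abs_mul_sum_sub_average_le {f : ℤ → ℝ} {M : ℕ} {B : ℝ}
    (hB : ∀ b : ℤ, ∑ t ∈ range M, |f (b + t)| ≤ B) (a : ℤ) (m : ℕ) :
    |M * ∑ t ∈ range m, f (a + t) - ∑ s ∈ range M, ∑ t ∈ range m, f (a + s + t)| ≤
      M * (2 * B) := by
  have hsplit : M * ∑ t ∈ range m, f (a + t) - ∑ s ∈ range M, ∑ t ∈ range m, f (a + s + t) =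
      ∑ s ∈ range M, (∑ t ∈ range m, f (a + t) - ∑ t ∈ range m, f (a + s + t)) := by
    simp [sum_sub_distrib]
  have hshort : ∀ b : ℤ, ∀ s ∈ range M, ∑ t ∈ range s, |f (b + t)| ≤ B := fun b s hs =>
    (sum_le_sum_of_subset_of_nonneg (range_mono (mem_range.1 hs).le)
      fun _ _ _ => abs_nonneg _).trans (hB b)
  rw [hsplit]
  calc _ ≤ ∑ _ ∈ range M, (B + B) := (abs_sum_le_sum_abs _ _).trans <| sum_le_sum fun _ hs =>
        (abs_sum_sub_sum_shift_le f a m _).trans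
          (add_le_add (hshort a _ hs) (hshort (a + m) _ hs))
    _ = M * (2 * B) := by rw [sum_const, card_range, nsmul_eq_mul, two_mul]

/-- The average of the `M` shifts of the sum only involves Fourier coefficients of `f`, and the
error made in passing to it only involves those of the majorant `V`. -/
lemma IsExpSum.norm_sum_sub_le {f V : ℤ → ℝ} {c₀ d₀ : ℂ} {c d : ι → ℂ} {w : ι → ℝ}
    (hf : IsExpSum S θ f c₀ c) (hV : IsExpSum S θ V d₀ d)
    (hθ : ∀ n ∈ S, 0 < ‖(θ n : UnitAddCircle)‖) (hfV : ∀ τ, |f τ| ≤ V τ)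
    (hc : ∀ n ∈ S, ‖c n‖ ≤ w n) (hd : ∀ n ∈ S, ‖d n‖ ≤ w n) {M : ℕ} (hM : 1 ≤ M) (a : ℤ)
    (m : ℕ) :
    ‖((∑ t ∈ range m, f (a + t) : ℝ) : ℂ) - m * c₀‖ ≤
      4 * (M * ‖d₀‖) + 3 * ∑ n ∈ S, w n * avgWeight M (θ n) := by
  have hM' : (0 : ℝ) < M := by exact_mod_cast hM
  set W := ∑ n ∈ S, w n * avgWeight M (θ n)
  have hcw : ∑ n ∈ S, ‖c n‖ * avgWeight M (θ n) ≤ W :=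
    sum_le_sum fun n hn => mul_le_mul_of_nonneg_right (hc n hn) (avgWeight_nonneg _ _)
  have hdw : ∑ n ∈ S, ‖d n‖ * avgWeight M (θ n) ≤ W :=
    sum_le_sum fun n hn => mul_le_mul_of_nonneg_right (hd n hn) (avgWeight_nonneg _ _)
  have hblock : ∀ b : ℤ, ∑ t ∈ range M, |f (b + t)| ≤ 2 * (M * ‖d₀‖) + W := fun b =>
    calc _ ≤ ∑ t ∈ range M, V (b + t) := sum_le_sum fun t _ => hfV _
      _ ≤ _ := (hV.sum_block_le hθ (fun τ => (abs_nonneg _).trans (hfV τ)) hM b).trans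
        (by linarith)
  have hshift := abs_mul_sum_sub_average_le hblock a m
  have haverage := hf.norm_average_sub_le hθ hM m a
  set A := ∑ s ∈ range M, ∑ t ∈ range m, f (a + s + t)
  set s := ∑ t ∈ range m, f (a + t)
  refine le_of_mul_le_mul_left ?_ hM'
  calc (M : ℝ) * ‖(s : ℂ) - m * c₀‖ = ‖((M * s - A : ℝ) : ℂ) + ((A : ℂ) - M * (m * c₀))‖ := by
        nth_rewrite 1 [← Complex.norm_natCast]
        rw [← norm_mul]
        congr 1
        push_cast
        ring
    _ ≤ |M * s - A| + ‖(A : ℂ) - M * (m * c₀)‖ := by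
        rw [← Real.norm_eq_abs, ← Complex.norm_real]
        exact norm_add_le _ _
    _ ≤ M * (2 * (2 * (M * ‖d₀‖) + W)) + M * W :=
        add_le_add hshift (haverage.trans (mul_le_mul_of_nonneg_left hcw hM'.le))
    _ = M * (4 * (M * ‖d₀‖) + 3 * W) := by ring

end

/-! ### The deterministic bound for the discrepancy -/

/-- The linear form `n · α`. -/
def linForm {k : ℕ} (n : Fin k → ℤ) (α : Fin k → ℝ) : ℝ := ∑ i, (n i : ℝ) * α i

/-- The multiplicative height `∏ max(1, |nᵢ|)`. -/
def hypHeight {k : ℕ} (n : Fin k → ℤ) : ℝ := ∏ i, max 1 |(n i : ℝ)|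

/-- The symmetric interval `[-N, N]` of integers. -/
def symIcc (N : ℕ) : Finset ℤ := Icc (-(N : ℤ)) N

/-- The cube `[-N, N]^k` of frequencies. -/
def freqCube (k N : ℕ) : Finset (Fin k → ℤ) := Fintype.piFinset fun _ : Fin k => symIcc N

/-- The nonzero frequencies in the cube `[-4^Λ, 4^Λ]^k`. -/
def freqBox (k Λ : ℕ) : Finset (Fin k → ℤ) := (freqCube k (4 ^ Λ)).erase 0

lemma hypHeight_pos {k : ℕ} (n : Fin k → ℤ) : 0 < hypHeight n :=
  prod_pos fun _ _ => lt_max_of_lt_left one_pos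

lemma one_le_hypHeight {k : ℕ} (n : Fin k → ℤ) : 1 ≤ hypHeight n :=
  prod_induction _ (fun y : ℝ => 1 ≤ y) (fun _ _ => one_le_mul_of_one_le_of_one_le) le_rfl
    fun _ _ => le_max_left _ _

lemma fourierChar_sum {ι : Type*} (s : Finset ι) (f : ι → ℝ) :
    (𝐞 (∑ i ∈ s, f i) : ℂ) = ∏ i ∈ s, (𝐞 (f i) : ℂ) := by
  simp only [Real.fourierChar_apply, ← Complex.exp_sum, mul_sum, Complex.ofReal_sum, sum_mul]

lemma isExpSum_prod {k Λ : ℕ} (α : Fin k → ℝ) {F : Fin k → ℝ → ℝ} {c : Fin k → ℤ → ℂ}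
    (h : ∀ i, IsTrig (4 ^ Λ) (F i) (c i)) :
    IsExpSum (freqBox k Λ) (fun n => linForm n α) (fun τ => ∏ i, F i (τ * α i)) (∏ i, c i 0)
      (fun n => ∏ i, c i (n i)) := fun τ => by
  have hchar : ∀ n : Fin k → ℤ, (𝐞 (τ * linForm n α) : ℂ) = ∏ i, (𝐞 (n i * (τ * α i)) : ℂ) := by
    intro n
    rw [← fourierChar_sum, linForm, mul_sum]
    simp only [mul_left_comm]
  simp only [Complex.ofReal_prod, h _ (τ * α _), prod_univ_sum, prod_mul_distrib, hchar]
  rw [freqBox, freqCube, symIcc, ← add_sum_erase _ _ (a := (0 : Fin k → ℤ)) (by simp)]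
  simp

section

variable {k Λ : ℕ} {α x : Fin k → ℝ} {l : Fin k → ℕ}

/-- The bound for the `n`-th Fourier coefficient of a product of dyadic parts of scales `l i`. -/
def pieceWeight (l : Fin k → ℕ) (n : Fin k → ℤ) : ℝ := ∏ i, 21 * dyadicWeight (l i) (n i)

lemma pieceWeight_nonneg (l : Fin k → ℕ) (n : Fin k → ℤ) : 0 ≤ pieceWeight l n :=
  prod_nonneg fun i _ => mul_nonneg (by norm_num) (dyadicWeight_nonneg _ _)

lemma pieceWeight_zero (l : Fin k → ℕ) : pieceWeight l 0 = 21 ^ k / 2 ^ ∑ i, l i := by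
  simp only [pieceWeight, Pi.zero_apply, dyadicWeight_zero]
  rw [prod_mul_distrib, prod_pow_eq_pow_sum]
  simp [div_eq_mul_inv]

lemma norm_prod_le_pieceWeight {c : Fin k → ℤ → ℂ}
    (hc : ∀ i n, ‖c i n‖ ≤ 21 * dyadicWeight (l i) n) (n : Fin k → ℤ) :
    ‖∏ i, c i (n i)‖ ≤ pieceWeight l n := by
  rw [norm_prod]
  exact prod_le_prod (fun _ _ => norm_nonneg _) fun i _ => hc i _

lemma exists_isExpSum_prod_arcMaj (α x : Fin k → ℝ) (hl : ∀ i, l i ≤ Λ) :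
    ∃ d₀ d, IsExpSum (freqBox k Λ) (fun n => linForm n α)
        (fun τ => ∏ i, arcMaj Λ (x i) (l i) (τ * α i)) d₀ d ∧
      2 ^ (∑ i, l i) * ‖d₀‖ ≤ 21 ^ k ∧ ∀ n, ‖d n‖ ≤ pieceWeight l n := by
  choose d hd hdn using fun i => exists_isTrig_arcMaj (x i) (hl i)
  refine ⟨_, _, isExpSum_prod α hd, ?_, norm_prod_le_pieceWeight hdn⟩
  have hmean : ‖∏ i, d i 0‖ ≤ 21 ^ k / 2 ^ ∑ i, l i := by
    simpa only [pieceWeight_zero, Pi.zero_apply] using norm_prod_le_pieceWeight hdn 0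
  rwa [le_div_iff₀' (by positivity)] at hmean

lemma exists_isExpSum_prod_arcPart (α : Fin k → ℝ) (hx : ∀ i, x i ∈ Set.Icc (0 : ℝ) 1)
    (hl : ∀ i, l i < Λ) :
    ∃ c, IsExpSum (freqBox k Λ) (fun n => linForm n α)
        (fun τ => ∏ i, arcPart Λ (x i) (l i) (τ * α i))
        (((if l = 0 then ∏ i, x i else 0 : ℝ)) : ℂ) c ∧ ∀ n, ‖c n‖ ≤ pieceWeight l n := by
  choose c hc hc0 hcn using fun i => exists_isTrig_arcPart (hx i) (hl i)
  have hmean : ∏ i, c i 0 = (((if l = 0 then ∏ i, x i else 0 : ℝ)) : ℂ) := by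
    simp only [hc0, prod_ite_zero, mem_univ, forall_true_left, funext_iff, Pi.zero_apply]
    split_ifs <;> simp
  exact ⟨_, hmean ▸ isExpSum_prod α hc, norm_prod_le_pieceWeight hcn⟩

lemma abs_prod_arcPart_le (hx : ∀ i, x i ∈ Set.Icc (0 : ℝ) 1) (hl : ∀ i, l i ≤ Λ)
    (y : Fin k → ℝ) :
    |∏ i, arcPart Λ (x i) (l i) (y i)| ≤ ∏ i, arcMaj Λ (x i) (l i) (y i) := by
  rw [abs_prod]
  exact prod_le_prod (fun _ _ => abs_nonneg _) fun i _ => abs_arcPart_le (hx i) (hl i) _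

lemma abs_sum_prod_arcPart_sub_le (hα : ∀ n ∈ freqBox k Λ, 0 < ‖(linForm n α : UnitAddCircle)‖)
    (hx : ∀ i, x i ∈ Set.Icc (0 : ℝ) 1) (hl : ∀ i, l i < Λ) (m : ℕ) :
    |∑ t ∈ range m, ∏ i, arcPart Λ (x i) (l i) (((1 + t : ℤ) : ℝ) * α i)
        - m * (if l = 0 then ∏ i, x i else 0)| ≤
      4 * 21 ^ k + 3 * ∑ n ∈ freqBox k Λ,
        pieceWeight l n * avgWeight (2 ^ ∑ i, l i) (linForm n α) := by
  obtain ⟨c, hc, hcn⟩ := exists_isExpSum_prod_arcPart α hx hl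
  obtain ⟨d₀, d, hd, hd0, hdn⟩ := exists_isExpSum_prod_arcMaj α x fun i => (hl i).le
  have h := hc.norm_sum_sub_le hd hα (fun τ => abs_prod_arcPart_le hx (fun i => (hl i).le) _)
    (fun n _ => hcn n) (fun n _ => hdn n) (Nat.one_le_two_pow (n := ∑ i, l i)) 1 m
  rw [← Complex.ofReal_natCast m, ← Complex.ofReal_mul, ← Complex.ofReal_sub, Complex.norm_real,
    Real.norm_eq_abs] at h
  refine h.trans ?_
  push_cast
  gcongr

/-- At the last scale there is no trigonometric polynomial, but the sum is shorter than the
averaging length and can be estimated by the majorant. -/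
lemma abs_sum_prod_arcPart_le (hα : ∀ n ∈ freqBox k Λ, 0 < ‖(linForm n α : UnitAddCircle)‖)
    (hx : ∀ i, x i ∈ Set.Icc (0 : ℝ) 1) (hl : ∀ i, l i ≤ Λ) {m : ℕ} (hm : m ≤ 2 ^ ∑ i, l i) :
    |∑ t ∈ range m, ∏ i, arcPart Λ (x i) (l i) (((1 + t : ℤ) : ℝ) * α i)| ≤
      2 * 21 ^ k + ∑ n ∈ freqBox k Λ,
        pieceWeight l n * avgWeight (2 ^ ∑ i, l i) (linForm n α) := by
  obtain ⟨d₀, d, hd, hd0, hdn⟩ := exists_isExpSum_prod_arcMaj α x hl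
  have hmaj : ∀ τ : ℤ, _ ≤ ∏ i, arcMaj Λ (x i) (l i) (τ * α i) :=
    fun τ => abs_prod_arcPart_le hx hl _
  have hmaj0 : ∀ τ : ℤ, 0 ≤ ∏ i, arcMaj Λ (x i) (l i) (τ * α i) :=
    fun τ => (abs_nonneg _).trans (hmaj τ)
  calc _ ≤ ∑ t ∈ range m, ∏ i, arcMaj Λ (x i) (l i) (((1 + t : ℤ) : ℝ) * α i) :=
        (abs_sum_le_sum_abs _ _).trans (sum_le_sum fun t _ => hmaj _)
    _ ≤ ∑ t ∈ range (2 ^ ∑ i, l i), ∏ i, arcMaj Λ (x i) (l i) (((1 + t : ℤ) : ℝ) * α i) :=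
        sum_le_sum_of_subset_of_nonneg (range_mono hm) fun _ _ _ => hmaj0 _
    _ ≤ _ := hd.sum_block_le hα hmaj0 Nat.one_le_two_pow 1
    _ ≤ _ := by
        push_cast
        gcongr with n
        exacts [avgWeight_nonneg _ _, hdn n]

/-- The contribution to the discrepancy of the product of the dyadic parts of scales `l i`. -/
def discPiece (Λ : ℕ) (α x : Fin k → ℝ) (m : ℕ) (l : Fin k → ℕ) : ℝ :=
  ∑ t ∈ range m, ∏ i, arcPart Λ (x i) (l i) (((1 + t : ℤ) : ℝ) * α i)
    - m * (if l = 0 then ∏ i, x i else 0)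

lemma abs_discPiece_le (hΛ : 1 ≤ Λ)
    (hα : ∀ n ∈ freqBox k Λ, 0 < ‖(linForm n α : UnitAddCircle)‖)
    (hx : ∀ i, x i ∈ Set.Icc (0 : ℝ) 1) {m : ℕ} (hm : m ≤ 2 ^ Λ) (hl : ∀ i, l i ≤ Λ) :
    |discPiece Λ α x m l| ≤ 4 * 21 ^ k + 3 * ∑ n ∈ freqBox k Λ,
        pieceWeight l n * avgWeight (2 ^ ∑ i, l i) (linForm n α) := by
  by_cases hlast : ∀ i, l i < Λ
  · exact abs_sum_prod_arcPart_sub_le hα hx hlast m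
  push Not at hlast
  obtain ⟨i, hi⟩ := hlast
  have hl0 : l ≠ 0 := by
    rintro rfl
    simp only [Pi.zero_apply] at hi
    omega
  have hm' : m ≤ 2 ^ ∑ i, l i := hm.trans <| Nat.pow_le_pow_right two_pos <|
    hi.trans (single_le_sum (f := l) (fun _ _ => Nat.zero_le _) (mem_univ i))
  have hnonneg : 0 ≤ ∑ n ∈ freqBox k Λ,
      pieceWeight l n * avgWeight (2 ^ ∑ i, l i) (linForm n α) :=
    sum_nonneg fun n _ => mul_nonneg (pieceWeight_nonneg l n) (avgWeight_nonneg _ _)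
  rw [discPiece, if_neg hl0, mul_zero, sub_zero]
  linarith [abs_sum_prod_arcPart_le hα hx hl hm', pow_pos (show (0 : ℝ) < 21 by norm_num) k]

lemma DiscT_eq_sum_discPiece (α : Fin k → ℝ) (hx : ∀ i, x i ∈ Set.Icc (0 : ℝ) 1) (m : ℕ) :
    DiscT k α x m =
      ∑ l ∈ Fintype.piFinset fun _ : Fin k => range (Λ + 1), discPiece Λ α x m l := by
  simp only [discPiece, DiscT]
  rw [sum_sub_distrib, ← mul_sum, sum_ite_eq', if_pos (by simp), sum_comm,
    ← Ico_add_one_right_eq_Icc, sum_Ico_eq_sum_range]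
  refine congrArg (· - _) (sum_congr rfl fun t _ => ?_)
  rw [← prod_univ_sum (fun _ => range (Λ + 1))
    fun i l => arcPart Λ (x i) l (((1 + t : ℤ) : ℝ) * α i)]
  simp only [fun i => sum_arcPart (Λ := Λ) (hx i), prod_ite_zero]
  simp

end

lemma dyadicWeight_mul_le (l : ℕ) (n : ℤ) :
    dyadicWeight l n * 2⁻¹ ^ l ≤ 1 / (max 1 |(n : ℝ)|) ^ 2 := by
  refine (mul_le_mul_of_nonneg_right (min_le_right _ _) (by positivity)).trans (le_of_eq ?_)
  rw [inv_pow]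
  field_simp

lemma sum_dyadicWeight_le (Λ : ℕ) (n : ℤ) :
    ∑ l ∈ range Λ, dyadicWeight l n ≤ 4 / max 1 |(n : ℝ)| := by
  set R := max 1 |(n : ℝ)|
  have hR1 : 1 ≤ R := le_max_left _ _
  have hR0 : 0 < R := by linarith
  obtain ⟨p, hp_le, hp_lt⟩ := exists_nat_pow_near hR1 (show (1 : ℝ) < 2 by norm_num)
  have hgeom (q : ℕ) : ∑ l ∈ range q, (2 : ℝ)⁻¹ ^ l ≤ 2 := by
    simpa only [one_div] using sum_geometric_two_le q
  have hlow : ∑ l ∈ range (p + 1), dyadicWeight l n ≤ 2 / R :=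
    calc _ ≤ ∑ l ∈ range (p + 1), 2 ^ l / R ^ 2 := sum_le_sum fun l _ => min_le_right _ _
      _ ≤ 2 ^ (p + 1) / R ^ 2 := by
        rw [← sum_div]
        gcongr
        exact sum_two_pow_le _
      _ ≤ 2 / R := by
        rw [div_le_div_iff₀ (by positivity) hR0, pow_succ]
        nlinarith
  have hhigh : ∑ l ∈ range Λ, dyadicWeight (p + 1 + l) n ≤ 2 / R :=
    calc _ ≤ ∑ l ∈ range Λ, (2 : ℝ)⁻¹ ^ (p + 1) * 2⁻¹ ^ l :=
          sum_le_sum fun l _ => (min_le_left _ _).trans (pow_add _ _ _).le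
      _ ≤ 2⁻¹ ^ (p + 1) * 2 := by
        rw [← mul_sum]
        gcongr
        exact hgeom _
      _ ≤ 2 / R := by
        rw [inv_pow, inv_mul_eq_div]
        gcongr
  calc ∑ l ∈ range Λ, dyadicWeight l n ≤ ∑ l ∈ range ((p + 1) + Λ), dyadicWeight l n :=
        sum_le_sum_of_subset_of_nonneg (range_mono (by omega)) fun _ _ _ => dyadicWeight_nonneg _ _
    _ ≤ 2 / R + 2 / R := by
        rw [sum_range_add]
        exact add_le_add hlow hhigh
    _ = 4 / R := by ring

section

variable {k : ℕ} {α : Fin k → ℝ}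

lemma sum_pieceWeight_le (Λ : ℕ) (n : Fin k → ℤ) :
    ∑ l ∈ Fintype.piFinset fun _ : Fin k => range (Λ + 1), pieceWeight l n ≤
      84 ^ k / hypHeight n := by
  simp only [pieceWeight]
  rw [← prod_univ_sum (fun _ => range (Λ + 1)) fun i l => 21 * dyadicWeight l (n i)]
  calc _ ≤ ∏ i, 84 / max 1 |(n i : ℝ)| := by
        refine prod_le_prod (fun i _ =>
          sum_nonneg fun l _ => mul_nonneg (by norm_num) (dyadicWeight_nonneg _ _)) fun i _ => ?_
        rw [← mul_sum, show (84 : ℝ) = 21 * 4 by norm_num, mul_div_assoc]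
        gcongr
        exact sum_dyadicWeight_le _ _
    _ = _ := by simp [prod_div_distrib, hypHeight]

lemma pieceWeight_mul_le (l : Fin k → ℕ) (n : Fin k → ℤ) :
    pieceWeight l n * 2⁻¹ ^ ∑ i, l i ≤ 21 ^ k / hypHeight n ^ 2 := by
  rw [pieceWeight, ← prod_pow_eq_pow_sum, ← prod_mul_distrib]
  calc _ ≤ ∏ i, 21 * (1 / max 1 |(n i : ℝ)| ^ 2) := by
        refine prod_le_prod (fun i _ => mul_nonneg
          (mul_nonneg (by norm_num) (dyadicWeight_nonneg _ _)) (by positivity)) fun i _ => ?_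
        rw [mul_assoc]
        gcongr
        exact dyadicWeight_mul_le _ _
    _ = _ := by simp [prod_mul_distrib, prod_pow, hypHeight, div_eq_mul_inv]

lemma avgWeight_le_inv (M : ℕ) (θ : ℝ) : avgWeight M θ ≤ 1 / ‖(θ : UnitAddCircle)‖ := by
  unfold avgWeight
  gcongr
  exact min_le_left _ _

lemma avgWeight_two_pow_le (p : ℕ) (θ : ℝ) :
    avgWeight (2 ^ p) θ ≤ 2⁻¹ ^ p * (1 / ‖(θ : UnitAddCircle)‖ ^ 2) :=
  calc _ ≤ (1 / (((2 ^ p : ℕ) : ℝ) * ‖(θ : UnitAddCircle)‖)) / ‖(θ : UnitAddCircle)‖ := by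
        unfold avgWeight
        gcongr
        exact min_le_right _ _
    _ = _ := by
      push_cast
      rw [inv_pow, div_div, mul_assoc, ← sq, one_div, mul_inv, one_div]

/-- The contribution of a small denominator `g` to the discrepancy bound, where `L` is the number
of products of dyadic parts. -/
def denomTerm (L g : ℝ) : ℝ := min (1 / g) (L / g ^ 2)

lemma sum_pieceWeight_mul_avgWeight_le (Λ : ℕ) (n : Fin k → ℤ) (α : Fin k → ℝ) :
    ∑ l ∈ Fintype.piFinset fun _ : Fin k => range (Λ + 1),
      pieceWeight l n * avgWeight (2 ^ ∑ i, l i) (linForm n α) ≤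
      84 ^ k * denomTerm ((Λ + 1) ^ k) (hypHeight n * ‖(linForm n α : UnitAddCircle)‖) := by
  rw [denomTerm, mul_min_of_nonneg _ _ (by positivity)]
  set δ := ‖(linForm n α : UnitAddCircle)‖
  refine le_min ?_ ?_
  · calc _ ≤ ∑ l ∈ Fintype.piFinset fun _ : Fin k => range (Λ + 1), pieceWeight l n * (1 / δ) :=
          sum_le_sum fun l _ =>
            mul_le_mul_of_nonneg_left (avgWeight_le_inv _ _) (pieceWeight_nonneg l n)
      _ ≤ 84 ^ k / hypHeight n * (1 / δ) := by
          rw [← sum_mul]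
          gcongr
          exact sum_pieceWeight_le Λ n
      _ = _ := by rw [div_mul_div_comm, mul_one, mul_one_div]
  · calc _ ≤ ∑ l ∈ Fintype.piFinset fun _ : Fin k => range (Λ + 1),
            21 ^ k / hypHeight n ^ 2 * (1 / δ ^ 2) := by
          refine sum_le_sum fun l _ => (mul_le_mul_of_nonneg_left (avgWeight_two_pow_le _ _)
            (pieceWeight_nonneg l n)).trans ?_
          rw [← mul_assoc]
          gcongr
          exact pieceWeight_mul_le l n
      _ = 21 ^ k * ((Λ + 1) ^ k / (hypHeight n * δ) ^ 2) := by
          rw [sum_const, Fintype.card_piFinset, mul_pow]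
          simp
          ring
      _ ≤ _ := by gcongr; norm_num

theorem abs_DiscT_le {Λ : ℕ} (hΛ : 1 ≤ Λ)
    (hα : ∀ n ∈ freqBox k Λ, 0 < ‖(linForm n α : UnitAddCircle)‖) {x : Fin k → ℝ}
    (hx : ∀ i, x i ∈ Set.Icc (0 : ℝ) 1) {m : ℕ} (hm : m ≤ 2 ^ Λ) :
    |DiscT k α x m| ≤ 4 * 84 ^ k * ((Λ + 1) ^ k + ∑ n ∈ freqBox k Λ,
      denomTerm ((Λ + 1) ^ k) (hypHeight n * ‖(linForm n α : UnitAddCircle)‖)) := by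
  set T := fun n => denomTerm ((Λ + 1) ^ k) (hypHeight n * ‖(linForm n α : UnitAddCircle)‖)
  set Q := Fintype.piFinset fun _ : Fin k => range (Λ + 1)
  have hcard : (#Q : ℝ) = (Λ + 1) ^ k := by simp [Q]
  have hfreq : 0 ≤ ∑ n ∈ freqBox k Λ, T n :=
    sum_nonneg fun n _ => by have := hypHeight_pos n; simp only [T, denomTerm]; positivity
  rw [DiscT_eq_sum_discPiece α hx]
  calc _ ≤ ∑ l ∈ Q, (4 * 21 ^ k + 3 * ∑ n ∈ freqBox k Λ,
        pieceWeight l n * avgWeight (2 ^ ∑ i, l i) (linForm n α)) :=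
        (abs_sum_le_sum_abs _ _).trans <| sum_le_sum fun l hl => abs_discPiece_le hΛ hα hx hm
          fun i => Nat.lt_succ_iff.1 (mem_range.1 (Fintype.mem_piFinset.1 hl i))
    _ = 4 * 21 ^ k * (Λ + 1) ^ k + 3 * ∑ n ∈ freqBox k Λ, ∑ l ∈ Q,
        pieceWeight l n * avgWeight (2 ^ ∑ i, l i) (linForm n α) := by
        rw [sum_comm, sum_add_distrib, mul_sum, sum_const, nsmul_eq_mul, hcard, mul_comm]
    _ ≤ 4 * 84 ^ k * (Λ + 1) ^ k + 4 * ∑ n ∈ freqBox k Λ, 84 ^ k * T n := by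
        have hpieces := sum_le_sum fun n (_ : n ∈ freqBox k Λ) =>
          sum_pieceWeight_mul_avgWeight_le Λ n α
        have hpow : (21 : ℝ) ^ k ≤ 84 ^ k := by gcongr; norm_num
        rw [← mul_sum] at hpieces ⊢
        gcongr ?_ + ?_
        · gcongr
        · nlinarith [show (0 : ℝ) < 84 ^ k by positivity]
    _ = _ := by
        rw [← mul_sum]
        ring

end

/-! ### Linear forms on the torus -/

instance isProbabilityMeasure_unitAddCircle :
    IsProbabilityMeasure (volume : Measure UnitAddCircle) := ⟨UnitAddCircle.measure_univ⟩

section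

variable {k : ℕ} {n n' : Fin k → ℤ}

/-- The linear form `n · a` on the torus. -/
def torusForm (n : Fin k → ℤ) : (Fin k → UnitAddCircle) →+ UnitAddCircle where
  toFun a := ∑ i, n i • a i
  map_zero' := by simp
  map_add' a b := by simp [sum_add_distrib]

lemma torusForm_coe (n : Fin k → ℤ) (α : Fin k → ℝ) :
    torusForm n (fun i => (α i : UnitAddCircle)) = (linForm n α : UnitAddCircle) := by
  rw [linForm]
  change ∑ i, n i • (α i : UnitAddCircle) = _
  refine Eq.trans ?_ (map_sum (QuotientAddGroup.mk' (AddSubgroup.zmultiples (1 : ℝ))) _ _).symm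
  refine sum_congr rfl fun i _ => ?_
  rw [← zsmul_eq_mul]
  rfl

lemma continuous_torusForm (n : Fin k → ℤ) : Continuous (torusForm n) := by
  change Continuous fun a : Fin k → UnitAddCircle => ∑ i, n i • a i
  fun_prop

lemma exists_linForm_eq (hn : n ≠ 0) (y : ℝ) : ∃ β, linForm n β = y := by
  obtain ⟨i, hi⟩ := Function.ne_iff.1 hn
  have hi' : (n i : ℝ) ≠ 0 := by exact_mod_cast hi
  refine ⟨Pi.single i (y / n i), ?_⟩
  rw [linForm, Fintype.sum_eq_single i fun j hj => by simp [Pi.single_eq_of_ne hj],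
    Pi.single_eq_same, mul_div_cancel₀ _ hi']

lemma exists_linForm_eq_and_linForm_eq {i j : Fin k} (h : n i * n' j - n j * n' i ≠ 0)
    (y z : ℝ) : ∃ β, linForm n β = y ∧ linForm n' β = z := by
  have hij : i ≠ j := by
    rintro rfl
    exact h (by ring)
  have hdet : (n i * n' j - n j * n' i : ℝ) ≠ 0 := by exact_mod_cast h
  set D : ℝ := n i * n' j - n j * n' i with hD
  have hpair (p : Fin k → ℤ) (s t : ℝ) :
      linForm p (Pi.single i s + Pi.single j t) = p i * s + p j * t := by
    rw [linForm, Fintype.sum_eq_add i j hij fun l hl => by simp [hl.1, hl.2]]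
    simp [hij, hij.symm]
  refine ⟨Pi.single i ((n' j * y - n j * z) / D) + Pi.single j ((n i * z - n' i * y) / D),
    ?_, ?_⟩ <;>
  · rw [hpair]
    field_simp
    rw [hD]
    ring

lemma measurePreserving_torusForm (hn : n ≠ 0) :
    MeasurePreserving (torusForm n) volume volume := by
  refine AddMonoidHom.measurePreserving (continuous_torusForm n) (fun y => ?_)
    (by simp only [measure_univ])
  obtain ⟨y, rfl⟩ := QuotientAddGroup.mk_surjective y
  obtain ⟨β, rfl⟩ := exists_linForm_eq hn y
  exact ⟨_, torusForm_coe n β⟩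

lemma indepFun_torusForm {i j : Fin k} (h : n i * n' j - n j * n' i ≠ 0) :
    ProbabilityTheory.IndepFun (torusForm n) (torusForm n') volume := by
  have hn : n ≠ 0 := by
    rintro rfl
    simp at h
  have hn' : n' ≠ 0 := by
    rintro rfl
    simp at h
  rw [ProbabilityTheory.indepFun_iff_map_prod_eq_prod_map_map
    (continuous_torusForm n).aemeasurable (continuous_torusForm n').aemeasurable,
    (measurePreserving_torusForm hn).map_eq, (measurePreserving_torusForm hn').map_eq]
  refine (AddMonoidHom.measurePreserving (f := (torusForm n).prod (torusForm n'))
    ((continuous_torusForm n).prodMk (continuous_torusForm n')) ?_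
    (by simp only [measure_univ])).map_eq
  rintro ⟨y, z⟩
  obtain ⟨y, rfl⟩ := QuotientAddGroup.mk_surjective y
  obtain ⟨z, rfl⟩ := QuotientAddGroup.mk_surjective z
  obtain ⟨β, rfl, rfl⟩ := exists_linForm_eq_and_linForm_eq h y z
  exact ⟨_, Prod.ext (torusForm_coe n β) (torusForm_coe n' β)⟩

end

/-! ### Truncated reciprocals on the circle -/

/-- The contribution `denomTerm L g` of a small denominator `g`, truncated at `κ`. -/
def truncTerm (κ L g : ℝ) : ℝ := if κ ≤ g then denomTerm L g else 0

lemma measurable_truncTerm (κ L : ℝ) : Measurable (truncTerm κ L) := by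
  unfold truncTerm denomTerm
  exact Measurable.ite measurableSet_Ici (by fun_prop) measurable_const

section

variable {κ L : ℝ}

lemma truncTerm_nonneg (hκ : 0 < κ) (hL : 0 ≤ L) (g : ℝ) : 0 ≤ truncTerm κ L g := by
  unfold truncTerm denomTerm
  split_ifs with h
  · have : 0 < g := hκ.trans_le h
    positivity
  · exact le_rfl

lemma truncTerm_le (hκ : 0 < κ) (g : ℝ) : truncTerm κ L g ≤ 1 / κ := by
  unfold truncTerm
  split_ifs with h
  · exact (min_le_left _ _).trans (one_div_le_one_div_of_le hκ h)
  · positivity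

lemma truncTerm_antitone {κ' : ℝ} (hκ : 0 < κ) (hL : 0 ≤ L) (h : κ ≤ κ') (g : ℝ) :
    truncTerm κ' L g ≤ truncTerm κ L g := by
  by_cases h' : κ' ≤ g
  · rw [truncTerm, truncTerm, if_pos h', if_pos (h.trans h')]
  · rw [truncTerm, if_neg h']
    exact truncTerm_nonneg hκ hL g

lemma truncTerm_sq_le_indicator (hκ : 0 < κ) (hL : 0 ≤ L) (g : ℝ) :
    truncTerm κ L g ^ 2 ≤ (Set.Ici κ).indicator (fun g => 1 / g ^ 2) g := by
  by_cases h : κ ≤ g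
  · have hg : 0 < g := hκ.trans_le h
    rw [Set.indicator_of_mem (Set.mem_Ici.2 h), truncTerm, if_pos h, ← one_div_pow, denomTerm]
    gcongr
    exact min_le_left _ _
  · rw [Set.indicator_of_notMem (by simpa using h), truncTerm, if_neg h, zero_pow two_ne_zero]

lemma truncTerm_le_indicator_add_indicator (hκL : κ ≤ L) (g : ℝ) :
    truncTerm κ L g ≤ (Set.Icc κ L).indicator (fun g => 1 / g) g +
      (Set.Ioi L).indicator (fun g => L * (1 / g ^ 2)) g := by
  unfold truncTerm denomTerm
  by_cases h : κ ≤ g <;> by_cases h' : g ≤ L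
  · simp [h, h', Set.indicator, not_lt.2 h']
  · simp [h, h', div_eq_mul_inv, Set.indicator, not_le.1 h']
  · simp [h, h']
  · exact absurd (hκL.trans (not_le.1 h').le) h

lemma integrableOn_Ioi_one_div_sq {c : ℝ} (hc : 0 < c) :
    IntegrableOn (fun g : ℝ => 1 / g ^ 2) (Set.Ioi c) ∧ ∫ g in Set.Ioi c, 1 / g ^ 2 = 1 / c := by
  have hrpow : Set.EqOn (fun g : ℝ => g ^ (-2 : ℝ)) (fun g => 1 / g ^ 2) (Set.Ioi c) := by
    intro g hg
    simp only [Real.rpow_neg (hc.trans hg).le, Real.rpow_two, one_div]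
  refine ⟨(integrableOn_Ioi_rpow_of_lt (by norm_num) hc).congr_fun hrpow measurableSet_Ioi, ?_⟩
  rw [← setIntegral_congr_fun measurableSet_Ioi hrpow, integral_Ioi_rpow_of_lt (by norm_num) hc]
  norm_num [Real.rpow_neg_one]

lemma integrableOn_and_setIntegral_le {X : Type*} [MeasurableSpace X] {μ : Measure X}
    {f g : X → ℝ} (hf : AEStronglyMeasurable f μ) (hf₀ : 0 ≤ f) (hg : Integrable g μ)
    (hfg : f ≤ g) (s : Set X) : IntegrableOn f s μ ∧ ∫ x in s, f x ∂μ ≤ ∫ x, g x ∂μ := by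
  have hfi : Integrable f μ := hg.mono' hf
    (Filter.Eventually.of_forall fun x => (Real.norm_of_nonneg (hf₀ x)).trans_le (hfg x))
  exact ⟨hfi.integrableOn,
    (setIntegral_le_integral hfi (Filter.Eventually.of_forall hf₀)).trans
      (integral_mono hfi hg hfg)⟩

lemma integral_truncTerm_sq_le (hκ : 0 < κ) (hL : 0 ≤ L) :
    IntegrableOn (fun g => truncTerm κ L g ^ 2) (Set.Ioi 0) ∧
      ∫ g in Set.Ioi 0, truncTerm κ L g ^ 2 ≤ 1 / κ := by
  obtain ⟨hinteg, hval⟩ := integrableOn_Ioi_one_div_sq hκ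
  have hmajorant : Integrable ((Set.Ici κ).indicator fun g : ℝ => 1 / g ^ 2) :=
    (integrable_indicator_iff measurableSet_Ici).2
      ((integrableOn_Ici_iff_integrableOn_Ioi (by simp)).2 hinteg)
  have hle := integrableOn_and_setIntegral_le
    ((measurable_truncTerm κ L).pow_const 2).aestronglyMeasurable (fun _ => sq_nonneg _)
    hmajorant (truncTerm_sq_le_indicator hκ hL) (Set.Ioi 0)
  rwa [integral_indicator measurableSet_Ici, integral_Ici_eq_integral_Ioi, hval] at hle

lemma integral_truncTerm_le (hκ : 0 < κ) (hκL : κ ≤ L) :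
    IntegrableOn (truncTerm κ L) (Set.Ioi 0) ∧
      ∫ g in Set.Ioi 0, truncTerm κ L g ≤ Real.log (L / κ) + 1 := by
  have hL : 0 < L := hκ.trans_le hκL
  obtain ⟨htail, htail_val⟩ := integrableOn_Ioi_one_div_sq hL
  have hnear : IntegrableOn (fun g : ℝ => 1 / g) (Set.Icc κ L) :=
    ContinuousOn.integrableOn_Icc
      (continuousOn_const.div continuousOn_id fun x hx => (hκ.trans_le hx.1).ne')
  have hnear_ind := (integrable_indicator_iff measurableSet_Icc).2 hnear
  have htail_ind := (integrable_indicator_iff measurableSet_Ioi).2 (htail.const_mul L)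
  have hle := integrableOn_and_setIntegral_le (measurable_truncTerm κ L).aestronglyMeasurable
    (truncTerm_nonneg hκ hL.le) (hnear_ind.add htail_ind)
    (truncTerm_le_indicator_add_indicator hκL) (Set.Ioi 0)
  simp only [Pi.add_apply] at hle
  rwa [integral_add hnear_ind htail_ind, integral_indicator measurableSet_Icc,
    integral_indicator measurableSet_Ioi, integral_const_mul, htail_val,
    integral_Icc_eq_integral_Ioc, ← intervalIntegral.integral_of_le hκL,
    integral_one_div_of_pos hκ hL, mul_one_div_cancel hL.ne'] at hle

end

lemma integrable_comp_abs {f : ℝ → ℝ} (hf : IntegrableOn f (Set.Ioi 0)) :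
    Integrable fun x => f |x| := by
  have hpos : IntegrableOn (fun x => f |x|) (Set.Ioi 0) :=
    hf.congr_fun (fun x hx => by rw [abs_of_pos hx]) measurableSet_Ioi
  have hneg : IntegrableOn (fun x => f |x|) (Set.Iic 0) := by
    have hemb : MeasurableEmbedding fun x : ℝ => -x := (Homeomorph.neg ℝ).measurableEmbedding
    rw [← Measure.map_neg_eq_self (volume : Measure ℝ), hemb.integrableOn_map_iff]
    simpa [Function.comp_def, integrableOn_Ici_iff_integrableOn_Ioi] using hpos
  rw [← integrableOn_univ, ← Set.Iic_union_Ioi (a := (0 : ℝ))]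
  exact hneg.union hpos

lemma integral_unitAddCircle_norm_le {ψ : ℝ → ℝ} (hψ : 0 ≤ ψ)
    (hψint : IntegrableOn ψ (Set.Ioi 0)) :
    ∫ θ : UnitAddCircle, ψ ‖θ‖ ≤ 2 * ∫ g in Set.Ioi 0, ψ g := by
  rw [← UnitAddCircle.integral_preimage (-(1 / 2))]
  calc ∫ a in Set.Ioc (-(1 / 2) : ℝ) (-(1 / 2) + 1), ψ ‖(a : UnitAddCircle)‖
      = ∫ a in Set.Ioc (-(1 / 2) : ℝ) (-(1 / 2) + 1), ψ |a| := by
        refine setIntegral_congr_fun measurableSet_Ioc fun a ha => ?_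
        have hnorm : ‖(a : UnitAddCircle)‖ = |a| := by
          refine (AddCircle.norm_coe_eq_abs_iff 1 one_ne_zero).2 ?_
          rw [abs_one, abs_le]
          exact ⟨ha.1.le, ha.2.trans (by norm_num)⟩
        simp only [hnorm]
    _ ≤ ∫ a : ℝ, ψ |a| := setIntegral_le_integral (integrable_comp_abs hψint)
        (Filter.Eventually.of_forall fun x => hψ |x|)
    _ = 2 * ∫ x in Set.Ioi 0, ψ x := integral_comp_abs

/-! ### Moments of the truncated small denominators on the torus -/

section

variable {k : ℕ} {n : Fin k → ℤ} {κ L : ℝ}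

/-- The normalized small denominator of the frequency `n` at the point `a` of the torus. -/
def torusDenom (n : Fin k → ℤ) (a : Fin k → UnitAddCircle) : ℝ :=
  hypHeight n * ‖torusForm n a‖

lemma measurable_torusDenom (n : Fin k → ℤ) : Measurable (torusDenom n) :=
  (continuous_torusForm n).norm.measurable.const_mul _

lemma integral_comp_torusDenom_le (hn : n ≠ 0) {ψ : ℝ → ℝ} (hm : Measurable ψ) (hψ : 0 ≤ ψ)
    (hψint : IntegrableOn ψ (Set.Ioi 0)) :
    ∫ a, ψ (torusDenom n a) ≤ 2 / hypHeight n * ∫ g in Set.Ioi 0, ψ g := by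
  have hP := hypHeight_pos n
  have hscaled : IntegrableOn (fun g => ψ (hypHeight n * g)) (Set.Ioi 0) := by
    simpa using (integrableOn_Ioi_comp_mul_left_iff ψ 0 hP).2 (by simpa using hψint)
  calc ∫ a, ψ (torusDenom n a) = ∫ θ : UnitAddCircle, ψ (hypHeight n * ‖θ‖) := by
        rw [← (measurePreserving_torusForm hn).map_eq,
          integral_map (continuous_torusForm n).aemeasurable]
        · rfl
        · exact (hm.comp (continuous_norm.measurable.const_mul _)).aestronglyMeasurable
    _ ≤ 2 * ∫ g in Set.Ioi 0, ψ (hypHeight n * g) :=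
        integral_unitAddCircle_norm_le (ψ := fun g => ψ (hypHeight n * g))
          (fun g => hψ (hypHeight n * g)) hscaled
    _ = 2 / hypHeight n * ∫ g in Set.Ioi 0, ψ g := by
        rw [integral_comp_mul_left_Ioi ψ 0 hP, mul_zero, smul_eq_mul]
        ring

lemma measure_torusDenom_lt_le (hn : n ≠ 0) (κ : ℝ) :
    volume {a | torusDenom n a < κ} ≤ ENNReal.ofReal (2 * κ / hypHeight n) := by
  have hsub : {a | torusDenom n a < κ} ⊆
      torusForm n ⁻¹' Metric.closedBall (0 : UnitAddCircle) (κ / hypHeight n) := by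
    intro a ha
    rw [Set.mem_preimage, mem_closedBall_zero_iff, le_div_iff₀' (hypHeight_pos n)]
    exact le_of_lt ha
  refine (measure_mono hsub).trans ?_
  rw [(measurePreserving_torusForm hn).measure_preimage
    Metric.isClosed_closedBall.measurableSet.nullMeasurableSet, AddCircle.volume_closedBall]
  exact ENNReal.ofReal_le_ofReal ((min_le_right _ _).trans (le_of_eq (by ring)))

lemma memLp_truncTerm_torusDenom (n : Fin k → ℤ) (hκ : 0 < κ) (hL : 0 ≤ L) (p : ENNReal) :
    MemLp (fun a => truncTerm κ L (torusDenom n a)) p volume :=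
  MemLp.of_bound ((measurable_truncTerm κ L).comp (measurable_torusDenom n)).aestronglyMeasurable
    (1 / κ) (Filter.Eventually.of_forall fun a => by
      rw [Real.norm_of_nonneg (truncTerm_nonneg hκ hL _)]
      exact truncTerm_le hκ _)

lemma integral_truncTerm_torusDenom_le (hn : n ≠ 0) (hκ : 0 < κ) (hκL : κ ≤ L) :
    ∫ a, truncTerm κ L (torusDenom n a) ≤ 2 / hypHeight n * (Real.log (L / κ) + 1) := by
  obtain ⟨hinteg, hle⟩ := integral_truncTerm_le hκ hκL
  have hP := hypHeight_pos n
  exact (integral_comp_torusDenom_le hn (measurable_truncTerm κ L)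
    (truncTerm_nonneg hκ (hκ.le.trans hκL)) hinteg).trans
    (mul_le_mul_of_nonneg_left hle (by positivity))

lemma variance_truncTerm_torusDenom_le (hn : n ≠ 0) (hκ : 0 < κ) (hL : 0 ≤ L) :
    ProbabilityTheory.variance (fun a => truncTerm κ L (torusDenom n a)) volume ≤
      2 / hypHeight n * (1 / κ) := by
  obtain ⟨hinteg, hle⟩ := integral_truncTerm_sq_le hκ hL
  have hP := hypHeight_pos n
  exact (ProbabilityTheory.variance_le_expectation_sq
    (memLp_truncTerm_torusDenom n hκ hL 1).aestronglyMeasurable).trans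
    ((integral_comp_torusDenom_le hn ((measurable_truncTerm κ L).pow_const 2)
      (fun _ => sq_nonneg _) hinteg).trans (mul_le_mul_of_nonneg_left hle (by positivity)))

end

/-! ### Harmonic sums over frequency cubes -/

section

variable {k : ℕ}

lemma mem_freqCube {N : ℕ} {n : Fin k → ℤ} : n ∈ freqCube k N ↔ ∀ i, |n i| ≤ N := by
  simp [freqCube, symIcc, abs_le]

/-- The sum of `1 / max(1, |n|)` over `|n| ≤ N`, the one-dimensional factor of the sum of
reciprocal heights over a frequency cube. -/
def symHarmonic (N : ℕ) : ℝ := ∑ n ∈ symIcc N, 1 / max 1 |(n : ℝ)|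

lemma symHarmonic_nonneg (N : ℕ) : 0 ≤ symHarmonic N := sum_nonneg fun _ _ => by positivity

lemma symHarmonic_eq (N : ℕ) : symHarmonic N = 1 + 2 * (harmonic N : ℝ) := by
  induction N with
  | zero => simp [symHarmonic, symIcc]
  | succ N ih =>
    have hinsert : symIcc (N + 1) = insert ((N : ℤ) + 1) (insert (-((N : ℤ) + 1)) (symIcc N)) := by
      ext n
      simp only [symIcc, mem_Icc, mem_insert]
      push_cast
      omega
    have hmax : max 1 ((N : ℝ) + 1) = N + 1 := max_eq_right (by simp)
    have hnonneg : (0 : ℝ) ≤ (N : ℝ) + 1 := by positivity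
    rw [symHarmonic, hinsert, sum_insert, sum_insert, ← symHarmonic, ih, harmonic_succ]
    · push_cast
      rw [abs_neg, abs_of_nonneg hnonneg, hmax]
      ring
    · simp [symIcc]
    · simp only [symIcc, mem_insert, mem_Icc]
      omega

lemma symHarmonic_four_pow_le (Λ : ℕ) : symHarmonic (4 ^ Λ) ≤ 3 * (Λ + 1) := by
  have hharmonic := harmonic_le_one_add_log (4 ^ Λ)
  have hlog : Real.log (4 : ℝ) ≤ 3 / 2 := by
    rw [show (4 : ℝ) = 2 ^ 2 by norm_num, Real.log_pow]
    have := Real.log_two_lt_d9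
    push_cast
    linarith
  push_cast at hharmonic
  rw [Real.log_pow] at hharmonic
  rw [symHarmonic_eq]
  nlinarith [Nat.cast_nonneg (α := ℝ) Λ]

lemma one_div_hypHeight (n : Fin k → ℤ) : 1 / hypHeight n = ∏ i, 1 / max 1 |(n i : ℝ)| := by
  rw [hypHeight, prod_div_distrib, prod_const_one]

lemma one_div_hypHeight_nonneg (n : Fin k → ℤ) : 0 ≤ 1 / hypHeight n :=
  one_div_nonneg.2 (hypHeight_pos n).le

lemma sum_piFinset_one_div_hypHeight (t : Fin k → Finset ℤ) :
    ∑ n ∈ Fintype.piFinset t, 1 / hypHeight n = ∏ i, ∑ n ∈ t i, 1 / max 1 |(n : ℝ)| := by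
  simp only [one_div_hypHeight]
  exact (prod_univ_sum t fun _ n => 1 / max 1 |(n : ℝ)|).symm

lemma sum_freqCube_one_div_hypHeight (k N : ℕ) :
    ∑ n ∈ freqCube k N, 1 / hypHeight n = symHarmonic N ^ k := by
  rw [freqCube, sum_piFinset_one_div_hypHeight, ← symHarmonic, prod_const, card_univ,
    Fintype.card_fin]

/-! ### Degenerate frequencies and classes of constant content -/

/-- The frequencies of the cube `[-N, N]^k` with a vanishing coordinate. -/
def degenFreq (k N : ℕ) : Finset (Fin k → ℤ) := {n ∈ freqCube k N | ∃ i, n i = 0}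

lemma degenFreq_subset_biUnion (k N : ℕ) :
    degenFreq k N ⊆ univ.biUnion fun i : Fin k =>
      Fintype.piFinset (Function.update (fun _ => symIcc N) i {0}) := by
  intro n hn
  simp only [degenFreq, freqCube, mem_filter, Fintype.mem_piFinset] at hn
  obtain ⟨hn, i, hi⟩ := hn
  simp only [mem_biUnion, mem_univ, true_and, Fintype.mem_piFinset]
  refine ⟨i, fun j => ?_⟩
  rcases eq_or_ne j i with rfl | hj
  · simp [hi]
  · simpa [hj] using hn j

lemma sum_biUnion_le_sum_sum {ι β : Type*} [DecidableEq β] (s : Finset ι) (t : ι → Finset β)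
    {f : β → ℝ} (hf : ∀ x, 0 ≤ f x) : ∑ x ∈ s.biUnion t, f x ≤ ∑ i ∈ s, ∑ x ∈ t i, f x := by
  classical
  induction s using Finset.induction_on with
  | empty => simp
  | insert i s hi ih =>
    rw [biUnion_insert, sum_insert hi]
    have hinter : 0 ≤ ∑ x ∈ t i ∩ s.biUnion t, f x := sum_nonneg fun x _ => hf x
    linarith [sum_union_inter (s₁ := t i) (s₂ := s.biUnion t) (f := f)]

lemma sum_degenFreq_le (k N : ℕ) :
    ∑ n ∈ degenFreq k N, 1 / hypHeight n ≤ k * symHarmonic N ^ (k - 1) := by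
  calc ∑ n ∈ degenFreq k N, 1 / hypHeight n
      ≤ ∑ n ∈ univ.biUnion fun i : Fin k =>
          Fintype.piFinset (Function.update (fun _ => symIcc N) i {0}), 1 / hypHeight n :=
        sum_le_sum_of_subset_of_nonneg (degenFreq_subset_biUnion k N)
          fun n _ _ => one_div_hypHeight_nonneg n
    _ ≤ ∑ i : Fin k, ∑ n ∈ Fintype.piFinset (Function.update (fun _ => symIcc N) i {0}),
          1 / hypHeight n := sum_biUnion_le_sum_sum _ _ one_div_hypHeight_nonneg
    _ = ∑ _i : Fin k, symHarmonic N ^ (k - 1) := by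
        refine sum_congr rfl fun i _ => ?_
        rw [sum_piFinset_one_div_hypHeight, ← mul_prod_erase _ _ (mem_univ i),
          prod_congr rfl (g := fun _ => symHarmonic N)]
        · simp
        · intro j hj
          rw [Function.update_of_ne (ne_of_mem_erase hj), symHarmonic]
    _ = k * symHarmonic N ^ (k - 1) := by simp

/-- The content of an integer vector, that is, the greatest common divisor of its coordinates. -/
def vecGcd (n : Fin k → ℤ) : ℕ := univ.gcd fun i => (n i).natAbs

/-- The frequencies of the cube `[-N, N]^k` with nonzero coordinates, one from each pair `±n`:
the coordinate `i₀` is positive. -/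
def fullFreq (i₀ : Fin k) (N : ℕ) : Finset (Fin k → ℤ) :=
  {n ∈ freqCube k N | 0 < n i₀ ∧ ∀ i, n i ≠ 0}

/-- The frequencies of `fullFreq i₀ N` of content `a`. Distinct ones are linearly independent. -/
def gcdClass (i₀ : Fin k) (N a : ℕ) : Finset (Fin k → ℤ) :=
  {n ∈ fullFreq i₀ N | vecGcd n = a}

lemma vecGcd_mem_Icc {i₀ : Fin k} {N : ℕ} {n : Fin k → ℤ} (hn : n ∈ fullFreq i₀ N) :
    vecGcd n ∈ Icc 1 N := by
  simp only [fullFreq, mem_filter, mem_freqCube] at hn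
  have hdvd : vecGcd n ∣ (n i₀).natAbs := Finset.gcd_dvd (mem_univ i₀)
  have hpos : 0 < (n i₀).natAbs := Int.natAbs_pos.2 hn.2.1.ne'
  refine mem_Icc.2 ⟨Nat.pos_of_dvd_of_pos hdvd hpos, (Nat.le_of_dvd hpos hdvd).trans ?_⟩
  have habs := hn.1 i₀
  rw [Int.abs_eq_natAbs] at habs
  exact_mod_cast habs

lemma sum_fullFreq_eq_sum_gcdClass (i₀ : Fin k) (N : ℕ) {M : Type*} [AddCommMonoid M]
    (f : (Fin k → ℤ) → M) :
    ∑ n ∈ fullFreq i₀ N, f n = ∑ a ∈ Icc 1 N, ∑ n ∈ gcdClass i₀ N a, f n :=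
  (sum_fiberwise_of_maps_to (fun _ => vecGcd_mem_Icc) f).symm

lemma sum_fullFreq_one_div_hypHeight_le (i₀ : Fin k) (N : ℕ) :
    ∑ n ∈ fullFreq i₀ N, 1 / hypHeight n ≤ symHarmonic N ^ k := by
  rw [← sum_freqCube_one_div_hypHeight]
  exact sum_le_sum_of_subset_of_nonneg (filter_subset _ _) fun n _ _ => one_div_hypHeight_nonneg n

lemma exists_natCast_mul_eq {a : ℕ} {n : Fin k → ℤ} (ha : a ∣ vecGcd n) :
    ∃ m : Fin k → ℤ, (fun i => (a : ℤ) * m i) = n := by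
  have hdvd (i : Fin k) : (a : ℤ) ∣ n i :=
    Int.natCast_dvd.2 (ha.trans (Finset.gcd_dvd (mem_univ i)))
  choose m hm using hdvd
  exact ⟨m, funext fun i => (hm i).symm⟩

lemma natCast_mul_injective {a : ℕ} (ha : 1 ≤ a) :
    Function.Injective fun (n : Fin k → ℤ) i => (a : ℤ) * n i := fun _ _ h =>
  funext fun i => mul_left_cancel₀ (by positivity) (congrFun h i)

lemma gcdClass_subset_image (i₀ : Fin k) (N : ℕ) {a : ℕ} (ha : 1 ≤ a) :
    gcdClass i₀ N a ⊆ {n ∈ freqCube k N | ∀ i, n i ≠ 0}.image fun n i => (a : ℤ) * n i := by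
  intro n hn
  simp only [gcdClass, fullFreq, mem_filter, mem_freqCube] at hn
  obtain ⟨⟨hN, -, hne⟩, hg⟩ := hn
  obtain ⟨m, rfl⟩ := exists_natCast_mul_eq hg.symm.dvd
  refine mem_image_of_mem _ ?_
  simp only [mem_filter, mem_freqCube]
  refine ⟨fun i => le_trans ?_ (hN i), fun i => right_ne_zero_of_mul (hne i)⟩
  rw [abs_mul, Nat.abs_cast]
  exact le_mul_of_one_le_left (abs_nonneg _) (by exact_mod_cast ha)

lemma hypHeight_natCast_mul {a : ℕ} (ha : 1 ≤ a) {n : Fin k → ℤ} (hn : ∀ i, n i ≠ 0) :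
    hypHeight (fun i => (a : ℤ) * n i) = (a : ℝ) ^ k * hypHeight n := by
  rw [hypHeight, hypHeight, ← Fin.prod_const, ← prod_mul_distrib]
  refine prod_congr rfl fun i _ => ?_
  have ha' : (1 : ℝ) ≤ a := by exact_mod_cast ha
  have hi : (1 : ℝ) ≤ |(n i : ℝ)| := by exact_mod_cast Int.one_le_abs (hn i)
  push_cast
  rw [abs_mul, Nat.abs_cast, max_eq_right hi,
    max_eq_right (one_le_mul_of_one_le_of_one_le ha' hi)]

lemma sum_gcdClass_le (i₀ : Fin k) (N : ℕ) {a : ℕ} (ha : 1 ≤ a) :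
    ∑ n ∈ gcdClass i₀ N a, 1 / hypHeight n ≤ 1 / (a : ℝ) ^ k * symHarmonic N ^ k := by
  calc ∑ n ∈ gcdClass i₀ N a, 1 / hypHeight n
      ≤ ∑ n ∈ {n ∈ freqCube k N | ∀ i, n i ≠ 0}.image fun n i => (a : ℤ) * n i,
          1 / hypHeight n :=
        sum_le_sum_of_subset_of_nonneg (gcdClass_subset_image i₀ N ha)
          fun n _ _ => one_div_hypHeight_nonneg n
    _ = ∑ n ∈ freqCube k N with ∀ i, n i ≠ 0, 1 / (a : ℝ) ^ k * (1 / hypHeight n) := by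
        rw [sum_image (natCast_mul_injective ha).injOn]
        refine sum_congr rfl fun n hn => ?_
        rw [hypHeight_natCast_mul ha (mem_filter.1 hn).2, one_div_mul_one_div]
    _ ≤ ∑ n ∈ freqCube k N, 1 / (a : ℝ) ^ k * (1 / hypHeight n) :=
        sum_le_sum_of_subset_of_nonneg (filter_subset _ _) fun n _ _ =>
          mul_nonneg (by positivity) (one_div_hypHeight_nonneg n)
    _ = 1 / (a : ℝ) ^ k * symHarmonic N ^ k := by
        rw [← mul_sum, sum_freqCube_one_div_hypHeight]

lemma natAbs_mul_vecGcd (c : ℤ) (n : Fin k → ℤ) :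
    c.natAbs * vecGcd n = vecGcd fun j => c * n j := by
  simp only [vecGcd, Int.natAbs_mul, Finset.gcd_mul_left, normalize_eq]

lemma exists_minor_ne_zero {i₀ : Fin k} {n n' : Fin k → ℤ} (hn : 0 < n i₀) (hn' : 0 < n' i₀)
    (hg : vecGcd n = vecGcd n') (hne : n ≠ n') : ∃ j, n i₀ * n' j - n j * n' i₀ ≠ 0 := by
  by_contra! h
  have hprop (j : Fin k) : n i₀ * n' j = n' i₀ * n j := by linarith [h j]
  have hgcd : (n i₀).natAbs * vecGcd n' = (n' i₀).natAbs * vecGcd n := by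
    simp only [natAbs_mul_vecGcd, hprop]
  have hpos : 0 < vecGcd n := by
    rw [vecGcd, Nat.pos_iff_ne_zero, Ne, Finset.gcd_eq_zero_iff]
    intro h₀
    have := h₀ i₀ (mem_univ _)
    omega
  rw [← hg] at hgcd
  have heq : n i₀ = n' i₀ := by
    have := Nat.eq_of_mul_eq_mul_right hpos hgcd
    omega
  refine hne (funext fun j => ?_)
  have := hprop j
  rw [heq] at this
  exact (mul_left_cancel₀ hn'.ne' this).symm

end

/-! ### First and second moments of sums over small denominators -/

section

variable {k : ℕ} {S : Finset (Fin k → ℤ)} {κ : (Fin k → ℤ) → ℝ} {L lam : ℝ}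

/-- The sum of the truncated contributions of the small denominators of the frequencies in `S`,
the frequency `n` being truncated at `κ n`. -/
def truncSum (S : Finset (Fin k → ℤ)) (κ : (Fin k → ℤ) → ℝ) (L : ℝ) (b : Fin k → UnitAddCircle) :
    ℝ :=
  ∑ n ∈ S, truncTerm (κ n) L (torusDenom n b)

/-- The logarithmic factor in the mean of a sum of small denominators truncated at
`1 / (lam * L)`. -/
def logFactor (lam L : ℝ) : ℝ := lam + Real.log L + 1

lemma one_le_logFactor (hlam : 1 ≤ lam) (hL : 1 ≤ L) : 1 ≤ logFactor lam L := by
  have := Real.log_nonneg hL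
  unfold logFactor
  linarith

lemma log_div_add_one_le (hlam : 1 ≤ lam) (hL : 1 ≤ L) :
    Real.log (L / (1 / (lam * L))) + 1 ≤ 2 * logFactor lam L := by
  have hdiv : L / (1 / (lam * L)) = lam * (L * L) := by field_simp
  rw [hdiv, Real.log_mul (by positivity) (by positivity),
    Real.log_mul (by positivity) (by positivity), logFactor]
  have := Real.log_le_sub_one_of_pos (show 0 < lam by linarith)
  linarith

lemma truncSum_nonneg (hκ : ∀ n ∈ S, 0 < κ n) (hL : 0 ≤ L) : 0 ≤ truncSum S κ L :=
  fun _ => sum_nonneg fun n hn => truncTerm_nonneg (hκ n hn) hL _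

lemma memLp_truncSum (hκ : ∀ n ∈ S, 0 < κ n) (hL : 0 ≤ L) (p : ENNReal) :
    MemLp (truncSum S κ L) p volume :=
  memLp_finsetSum _ fun n hn => memLp_truncTerm_torusDenom n (hκ n hn) hL p

lemma sum_denomTerm_eq_truncSum {b : Fin k → UnitAddCircle}
    (hb : ∀ n ∈ S, κ n ≤ torusDenom n b) :
    ∑ n ∈ S, denomTerm L (torusDenom n b) = truncSum S κ L b :=
  sum_congr rfl fun n hn => (if_pos (hb n hn)).symm

lemma integral_truncSum_le (hS : ∀ n ∈ S, n ≠ 0) (hlam : 1 ≤ lam) (hL : 1 ≤ L)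
    (hκ : ∀ n ∈ S, 1 / (lam * L) ≤ κ n) :
    ∫ b, truncSum S κ L b ≤ 4 * logFactor lam L * ∑ n ∈ S, 1 / hypHeight n := by
  have hL₀ : 0 ≤ L := by linarith
  have hmin_pos : 0 < 1 / (lam * L) := by positivity
  have hmin_le : 1 / (lam * L) ≤ L := by
    rw [div_le_iff₀ (by positivity)]
    exact one_le_mul_of_one_le_of_one_le hL (one_le_mul_of_one_le_of_one_le hlam hL)
  have hinteg (n : Fin k → ℤ) {c : ℝ} (hc : 0 < c) :
      Integrable fun b => truncTerm c L (torusDenom n b) :=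
    (memLp_truncTerm_torusDenom n hc hL₀ 1).integrable le_rfl
  have hκ₀ (n : Fin k → ℤ) (hn : n ∈ S) : 0 < κ n := hmin_pos.trans_le (hκ n hn)
  simp only [truncSum]
  rw [integral_finsetSum S fun n hn => hinteg n (hκ₀ n hn), mul_sum]
  refine sum_le_sum fun n hn => ?_
  have hP := hypHeight_pos n
  calc ∫ b, truncTerm (κ n) L (torusDenom n b)
      ≤ ∫ b, truncTerm (1 / (lam * L)) L (torusDenom n b) :=
        integral_mono (hinteg n (hκ₀ n hn)) (hinteg n hmin_pos)
          fun b => truncTerm_antitone hmin_pos hL₀ (hκ n hn) _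
    _ ≤ 2 / hypHeight n * (Real.log (L / (1 / (lam * L))) + 1) :=
        integral_truncTerm_torusDenom_le (hS n hn) hmin_pos hmin_le
    _ ≤ 2 / hypHeight n * (2 * logFactor lam L) := by
        gcongr
        exact log_div_add_one_le hlam hL
    _ = 4 * logFactor lam L * (1 / hypHeight n) := by ring

lemma measureReal_exists_torusDenom_lt_le (hS : ∀ n ∈ S, n ≠ 0) (hκ : ∀ n ∈ S, 0 ≤ κ n) :
    volume.real {b | ∃ n ∈ S, torusDenom n b < κ n} ≤ 2 * ∑ n ∈ S, κ n * (1 / hypHeight n) := by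
  have hunion : {b | ∃ n ∈ S, torusDenom n b < κ n} = ⋃ n ∈ S, {b | torusDenom n b < κ n} := by
    ext b
    simp
  rw [hunion, mul_sum]
  refine (measureReal_biUnion_finset_le _ _).trans (sum_le_sum fun n hn => ?_)
  have hnonneg : 0 ≤ 2 * κ n / hypHeight n :=
    div_nonneg (mul_nonneg zero_le_two (hκ n hn)) (hypHeight_pos n).le
  calc volume.real {b | torusDenom n b < κ n} ≤ 2 * κ n / hypHeight n :=
        ENNReal.toReal_le_of_le_ofReal hnonneg (measure_torusDenom_lt_le (hS n hn) (κ n))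
    _ = 2 * (κ n * (1 / hypHeight n)) := by ring

lemma exists_exceptional_set_of_ne_zero (hS : ∀ n ∈ S, n ≠ 0) (hlam : 1 ≤ lam) (hL : 1 ≤ L) :
    ∃ B : Set (Fin k → UnitAddCircle), volume.real B ≤ 6 / L * ∑ n ∈ S, 1 / hypHeight n ∧
      ∀ b ∉ B, (∀ n ∈ S, 0 < torusDenom n b) ∧
        ∑ n ∈ S, denomTerm L (torusDenom n b) ≤ L * logFactor lam L := by
  set Q := logFactor lam L
  have hQ : 1 ≤ Q := one_le_logFactor hlam hL
  set H := ∑ n ∈ S, 1 / hypHeight n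
  have hH : 0 ≤ H := sum_nonneg fun n _ => one_div_hypHeight_nonneg n
  set κ : (Fin k → ℤ) → ℝ := fun _ => 1 / (lam * L)
  have hκ (n : Fin k → ℤ) (_ : n ∈ S) : 0 < κ n := by positivity
  have hsmall : volume.real {b | ∃ n ∈ S, torusDenom n b < κ n} ≤ 2 / L * H := by
    refine (measureReal_exists_torusDenom_lt_le hS fun n hn => (hκ n hn).le).trans ?_
    calc 2 * ∑ n ∈ S, κ n * (1 / hypHeight n) = 2 / L * H / lam := by
          rw [← mul_sum]
          simp only [H]
          field_simp
      _ ≤ 2 / L * H := div_le_self (by positivity) hlam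
  have hlarge : volume.real {b | L * Q ≤ truncSum S κ L b} ≤ 4 / L * H := by
    have hmarkov := mul_meas_ge_le_integral_of_nonneg
      (Filter.Eventually.of_forall (truncSum_nonneg hκ (zero_le_one.trans hL)))
      ((memLp_truncSum hκ (zero_le_one.trans hL) 1).integrable le_rfl) (L * Q)
    have hmean := integral_truncSum_le hS hlam hL (κ := κ) fun _ _ => le_rfl
    refine le_of_mul_le_mul_left (hmarkov.trans (hmean.trans_eq ?_))
      (show 0 < L * Q by positivity)
    field_simp
    rfl
  refine ⟨{b | ∃ n ∈ S, torusDenom n b < κ n} ∪ {b | L * Q ≤ truncSum S κ L b}, ?_,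
    fun b hb => ?_⟩
  · exact (measureReal_union_le _ _).trans ((add_le_add hsmall hlarge).trans_eq (by ring))
  · simp only [Set.mem_union, Set.mem_ofPred_eq, not_or, not_exists, not_and, not_lt,
      not_le] at hb
    exact ⟨fun n hn => (hκ n hn).trans_le (hb.1 n hn),
      (sum_denomTerm_eq_truncSum hb.1).trans_le hb.2.le⟩

end

/-! ### Frequencies without vanishing coordinates -/

/-- The sum of the weights `a ^ (-5/4)` given to the classes of content `a`. The exponent lies
strictly between `1`, for the convergence, and `3/2`, for the second moment with `k = 2`. -/
def gcdZeta : ℝ := ∑' a : ℕ, (a : ℝ) ^ (-(5 / 4) : ℝ)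

lemma sum_gcdWeight_le (S : Finset ℕ) : ∑ a ∈ S, (a : ℝ) ^ (-(5 / 4) : ℝ) ≤ gcdZeta :=
  (Real.summable_nat_rpow.2 (by norm_num)).sum_le_tsum S fun _ _ => by positivity

lemma gcdZeta_nonneg : 0 ≤ gcdZeta := tsum_nonneg fun _ => by positivity

lemma sqrt_mul_one_div_pow_le {x : ℝ} {k : ℕ} (hx : 1 ≤ x) (hk : 2 ≤ k) :
    √x * (1 / x ^ k) ≤ x ^ (-(5 / 4) : ℝ) := by
  have hx₀ : 0 < x := by linarith
  have hk' : (2 : ℝ) ≤ k := by exact_mod_cast hk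
  rw [Real.sqrt_eq_rpow, ← Real.rpow_natCast, one_div (x ^ (k : ℝ)), ← Real.rpow_neg hx₀.le,
    ← Real.rpow_add hx₀]
  exact Real.rpow_le_rpow_of_exponent_le hx (by linarith)

lemma one_div_sqrt_mul_one_div_pow_div_le {x : ℝ} {k : ℕ} (hx : 1 ≤ x) (hk : 2 ≤ k) :
    1 / √x * (1 / x ^ k) / x ^ (-(5 / 4) : ℝ) ≤ x ^ (-(5 / 4) : ℝ) := by
  have hx₀ : 0 < x := by linarith
  have hk' : (2 : ℝ) ≤ k := by exact_mod_cast hk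
  rw [Real.sqrt_eq_rpow, ← Real.rpow_natCast, one_div (x ^ (k : ℝ)), ← Real.rpow_neg hx₀.le,
    one_div (x ^ (1 / 2 : ℝ)), ← Real.rpow_neg hx₀.le, ← Real.rpow_add hx₀, ← Real.rpow_sub hx₀]
  exact Real.rpow_le_rpow_of_exponent_le hx (by linarith)

lemma variance_sum_le_weighted {Ω ι : Type*} [MeasurableSpace Ω] {μ : Measure Ω}
    [IsProbabilityMeasure μ] (S : Finset ι) {X : ι → Ω → ℝ} (hX : ∀ i ∈ S, MemLp (X i) 2 μ)
    {w : ι → ℝ} (hw : ∀ i ∈ S, 0 < w i) :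
    ProbabilityTheory.variance (∑ i ∈ S, X i) μ ≤
      (∑ i ∈ S, w i) * ∑ i ∈ S, ProbabilityTheory.variance (X i) μ / w i := by
  have hdev (i : ι) (hi : i ∈ S) : Integrable (fun ω => (X i ω - ∫ ω, X i ω ∂μ) ^ 2) μ :=
    ((hX i hi).sub (memLp_const _)).integrable_sq
  have hsum : MemLp (∑ i ∈ S, X i) 2 μ := memLp_finsetSum' S hX
  have hmean : ∫ ω, (∑ i ∈ S, X i) ω ∂μ = ∑ i ∈ S, ∫ ω, X i ω ∂μ := by
    simp only [Finset.sum_apply]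
    exact integral_finsetSum S fun i hi => (hX i hi).integrable (by norm_num)
  have hmajorant : Integrable (fun ω => (∑ i ∈ S, w i) *
      ∑ i ∈ S, (X i ω - ∫ ω, X i ω ∂μ) ^ 2 / w i) μ :=
    (integrable_finsetSum S fun i hi => (hdev i hi).div_const _).const_mul _
  calc ProbabilityTheory.variance (∑ i ∈ S, X i) μ
      = ∫ ω, ((∑ i ∈ S, X i) ω - ∑ i ∈ S, ∫ ω, X i ω ∂μ) ^ 2 ∂μ := by
        rw [ProbabilityTheory.variance_eq_integral hsum.aemeasurable, hmean]
    _ ≤ ∫ ω, (∑ i ∈ S, w i) * ∑ i ∈ S, (X i ω - ∫ ω, X i ω ∂μ) ^ 2 / w i ∂μ := by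
        refine integral_mono (hsum.sub (memLp_const _)).integrable_sq hmajorant fun ω => ?_
        simp only [Finset.sum_apply, ← sum_sub_distrib]
        refine sum_sq_le_sum_mul_sum_of_sq_le_mul S (fun i hi => (hw i hi).le)
          (fun i hi => div_nonneg (sq_nonneg _) (hw i hi).le) fun i hi => ?_
        rw [mul_div_cancel₀ _ (hw i hi).ne']
    _ = (∑ i ∈ S, w i) * ∑ i ∈ S, ProbabilityTheory.variance (X i) μ / w i := by
        rw [integral_const_mul, integral_finsetSum S fun i hi => (hdev i hi).div_const _]
        congr 1
        refine sum_congr rfl fun i hi => ?_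
        rw [integral_div, ProbabilityTheory.variance_eq_integral (hX i hi).aemeasurable]

section

variable {k : ℕ} {i₀ : Fin k} {N a : ℕ} {L lam : ℝ}

lemma ne_zero_of_mem_fullFreq {n : Fin k → ℤ} (hn : n ∈ fullFreq i₀ N) : n ≠ 0 := by
  rintro rfl
  simp [fullFreq] at hn

lemma indepFun_gcdClass {n n' : Fin k → ℤ} (hn : n ∈ gcdClass i₀ N a)
    (hn' : n' ∈ gcdClass i₀ N a) (hne : n ≠ n') :
    ProbabilityTheory.IndepFun (torusForm n) (torusForm n') volume := by
  simp only [gcdClass, fullFreq, mem_filter] at hn hn'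
  obtain ⟨j, hj⟩ := exists_minor_ne_zero hn.1.2.1 hn'.1.2.1 (hn.2.trans hn'.2.symm) hne
  exact indepFun_torusForm hj

lemma variance_truncSum_gcdClass_le (ha : 1 ≤ a) {κ : ℝ} (hκ : 0 < κ) (hL : 0 ≤ L) :
    ProbabilityTheory.variance (truncSum (gcdClass i₀ N a) (fun _ => κ) L) volume ≤
      2 * (1 / κ) * (1 / (a : ℝ) ^ k * symHarmonic N ^ k) := by
  have hindep : Set.Pairwise (gcdClass i₀ N a : Set (Fin k → ℤ)) fun n n' =>
      ProbabilityTheory.IndepFun (fun b => truncTerm κ L (torusDenom n b))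
        (fun b => truncTerm κ L (torusDenom n' b)) volume := by
    intro n hn n' hn' hne
    have hm (n : Fin k → ℤ) :
        Measurable fun y : UnitAddCircle => truncTerm κ L (hypHeight n * ‖y‖) :=
      (measurable_truncTerm κ L).comp (measurable_norm.const_mul _)
    exact (indepFun_gcdClass hn hn' hne).comp (hm n) (hm n')
  have hsum : truncSum (gcdClass i₀ N a) (fun _ => κ) L =
      ∑ n ∈ gcdClass i₀ N a, fun b => truncTerm κ L (torusDenom n b) := by
    ext b
    simp [truncSum]
  rw [hsum, ProbabilityTheory.IndepFun.variance_sum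
    (fun n _ => memLp_truncTerm_torusDenom n hκ hL 2) hindep]
  calc ∑ n ∈ gcdClass i₀ N a,
        ProbabilityTheory.variance (fun b => truncTerm κ L (torusDenom n b)) volume
      ≤ ∑ n ∈ gcdClass i₀ N a, 2 * (1 / κ) * (1 / hypHeight n) := by
        refine sum_le_sum fun n hn => (variance_truncTerm_torusDenom_le
          (ne_zero_of_mem_fullFreq (mem_filter.1 hn).1) hκ hL).trans_eq (by ring)
    _ ≤ 2 * (1 / κ) * (1 / (a : ℝ) ^ k * symHarmonic N ^ k) := by
        rw [← mul_sum]
        gcongr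
        exact sum_gcdClass_le i₀ N ha

/-- The truncation level of a frequency: it grows with the content, so that the variances of the
classes `gcdClass` stay summable against the weights of `gcdZeta`. -/
def gcdCutoff (lam L : ℝ) (n : Fin k → ℤ) : ℝ := √(vecGcd n : ℝ) * (1 / (lam * L))

lemma one_div_le_gcdCutoff (hlam : 1 ≤ lam) (hL : 1 ≤ L) {n : Fin k → ℤ}
    (hn : n ∈ fullFreq i₀ N) : 1 / (lam * L) ≤ gcdCutoff lam L n := by
  have hgcd : (1 : ℝ) ≤ vecGcd n := by exact_mod_cast (mem_Icc.1 (vecGcd_mem_Icc hn)).1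
  exact le_mul_of_one_le_left (by positivity) (Real.one_le_sqrt.2 hgcd)

lemma sum_gcdCutoff_mul_le (hk : 2 ≤ k) (i₀ : Fin k) (N : ℕ) (hlam : 1 ≤ lam) (hL : 1 ≤ L) :
    ∑ n ∈ fullFreq i₀ N, gcdCutoff lam L n * (1 / hypHeight n) ≤
      gcdZeta * (symHarmonic N ^ k / (lam * L)) := by
  have hH : 0 ≤ symHarmonic N ^ k := pow_nonneg (symHarmonic_nonneg N) k
  rw [sum_fullFreq_eq_sum_gcdClass]
  calc ∑ a ∈ Icc 1 N, ∑ n ∈ gcdClass i₀ N a, gcdCutoff lam L n * (1 / hypHeight n)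
      ≤ ∑ a ∈ Icc 1 N, (a : ℝ) ^ (-(5 / 4) : ℝ) * (symHarmonic N ^ k / (lam * L)) := by
        refine sum_le_sum fun a ha => ?_
        have ha₁ := (mem_Icc.1 ha).1
        calc ∑ n ∈ gcdClass i₀ N a, gcdCutoff lam L n * (1 / hypHeight n)
            = √(a : ℝ) * (1 / (lam * L)) * ∑ n ∈ gcdClass i₀ N a, 1 / hypHeight n := by
              rw [mul_sum]
              refine sum_congr rfl fun n hn => ?_
              rw [gcdCutoff, (mem_filter.1 hn).2]
          _ ≤ √(a : ℝ) * (1 / (lam * L)) * (1 / (a : ℝ) ^ k * symHarmonic N ^ k) := by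
              gcongr
              exact sum_gcdClass_le i₀ N ha₁
          _ = √(a : ℝ) * (1 / (a : ℝ) ^ k) * (symHarmonic N ^ k / (lam * L)) := by ring
          _ ≤ (a : ℝ) ^ (-(5 / 4) : ℝ) * (symHarmonic N ^ k / (lam * L)) := by
              gcongr
              exact sqrt_mul_one_div_pow_le (by exact_mod_cast ha₁) hk
    _ ≤ gcdZeta * (symHarmonic N ^ k / (lam * L)) := by
        rw [← sum_mul]
        gcongr
        exact sum_gcdWeight_le _

lemma variance_truncSum_gcdClass_div_le (hk : 2 ≤ k) (ha : 1 ≤ a) (hlam : 1 ≤ lam)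
    (hL : 1 ≤ L) :
    ProbabilityTheory.variance (truncSum (gcdClass i₀ N a) (gcdCutoff lam L) L) volume /
        (a : ℝ) ^ (-(5 / 4) : ℝ) ≤
      2 * (lam * L * symHarmonic N ^ k) * (a : ℝ) ^ (-(5 / 4) : ℝ) := by
  have ha' : (1 : ℝ) ≤ a := by exact_mod_cast ha
  have hH : 0 ≤ symHarmonic N ^ k := pow_nonneg (symHarmonic_nonneg N) k
  have hcutoff : truncSum (gcdClass i₀ N a) (gcdCutoff lam L) L =
      truncSum (gcdClass i₀ N a) (fun _ => √(a : ℝ) * (1 / (lam * L))) L := by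
    ext b
    refine sum_congr rfl fun n hn => ?_
    rw [gcdCutoff, (mem_filter.1 hn).2]
  calc _ ≤ 2 * (1 / (√(a : ℝ) * (1 / (lam * L)))) * (1 / (a : ℝ) ^ k * symHarmonic N ^ k) /
        (a : ℝ) ^ (-(5 / 4) : ℝ) := by
        rw [hcutoff]
        gcongr
        exact variance_truncSum_gcdClass_le ha (by positivity) (by linarith)
    _ = 2 * (lam * L * symHarmonic N ^ k) *
          (1 / √(a : ℝ) * (1 / (a : ℝ) ^ k) / (a : ℝ) ^ (-(5 / 4) : ℝ)) := by
        field_simp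
    _ ≤ 2 * (lam * L * symHarmonic N ^ k) * (a : ℝ) ^ (-(5 / 4) : ℝ) := by
        gcongr
        exact one_div_sqrt_mul_one_div_pow_div_le ha' hk

lemma variance_truncSum_fullFreq_le (hk : 2 ≤ k) (i₀ : Fin k) (N : ℕ) (hlam : 1 ≤ lam)
    (hL : 1 ≤ L) :
    ProbabilityTheory.variance (truncSum (fullFreq i₀ N) (gcdCutoff lam L) L) volume ≤
      2 * gcdZeta ^ 2 * (lam * L * symHarmonic N ^ k) := by
  have hH : 0 ≤ symHarmonic N ^ k := pow_nonneg (symHarmonic_nonneg N) k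
  have hmem (a : ℕ) :
      MemLp (truncSum (gcdClass i₀ N a) (gcdCutoff lam L) L) 2 volume :=
    memLp_truncSum (fun n hn => lt_of_lt_of_le (by positivity)
      (one_div_le_gcdCutoff hlam hL (mem_filter.1 hn).1)) (by linarith) 2
  have hsum : truncSum (fullFreq i₀ N) (gcdCutoff lam L) L =
      ∑ a ∈ Icc 1 N, truncSum (gcdClass i₀ N a) (gcdCutoff lam L) L := by
    ext b
    rw [truncSum, sum_fullFreq_eq_sum_gcdClass, Finset.sum_apply]
    rfl
  have hweight (a : ℕ) (ha : a ∈ Icc 1 N) : 0 < (a : ℝ) ^ (-(5 / 4) : ℝ) := by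
    have := (mem_Icc.1 ha).1
    positivity
  rw [hsum]
  calc _ ≤ (∑ a ∈ Icc 1 N, (a : ℝ) ^ (-(5 / 4) : ℝ)) * ∑ a ∈ Icc 1 N,
          ProbabilityTheory.variance (truncSum (gcdClass i₀ N a) (gcdCutoff lam L) L) volume /
            (a : ℝ) ^ (-(5 / 4) : ℝ) := variance_sum_le_weighted _ (fun a _ => hmem a) hweight
    _ ≤ (∑ a ∈ Icc 1 N, (a : ℝ) ^ (-(5 / 4) : ℝ)) * ∑ a ∈ Icc 1 N,
          2 * (lam * L * symHarmonic N ^ k) * (a : ℝ) ^ (-(5 / 4) : ℝ) := by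
        gcongr with a ha
        exact variance_truncSum_gcdClass_div_le hk (mem_Icc.1 ha).1 hlam hL
    _ ≤ gcdZeta * (2 * (lam * L * symHarmonic N ^ k) * gcdZeta) := by
        rw [← mul_sum]
        have hZ := gcdZeta_nonneg
        gcongr <;> exact sum_gcdWeight_le _
    _ = 2 * gcdZeta ^ 2 * (lam * L * symHarmonic N ^ k) := by ring

lemma exists_exceptional_set_fullFreq (hk : 2 ≤ k) (i₀ : Fin k) (N : ℕ) (hlam : 1 ≤ lam)
    (hL : 1 ≤ L) :
    ∃ B : Set (Fin k → UnitAddCircle),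
      volume.real B ≤ 2 * (gcdZeta + gcdZeta ^ 2) * (symHarmonic N ^ k / (lam * L)) ∧
      ∀ b ∉ B, (∀ n ∈ fullFreq i₀ N, 0 < torusDenom n b) ∧
        ∑ n ∈ fullFreq i₀ N, denomTerm L (torusDenom n b) ≤
          lam * L + 4 * logFactor lam L * symHarmonic N ^ k := by
  set T := truncSum (fullFreq i₀ N) (gcdCutoff lam L) L
  have hne (n : Fin k → ℤ) (hn : n ∈ fullFreq i₀ N) : n ≠ 0 := ne_zero_of_mem_fullFreq hn
  have hcutoff (n : Fin k → ℤ) (hn : n ∈ fullFreq i₀ N) : 1 / (lam * L) ≤ gcdCutoff lam L n :=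
    one_div_le_gcdCutoff hlam hL hn
  have hcutoff_pos (n : Fin k → ℤ) (hn : n ∈ fullFreq i₀ N) : 0 < gcdCutoff lam L n :=
    lt_of_lt_of_le (by positivity) (hcutoff n hn)
  have hmean : ∫ b, T b ≤ 4 * logFactor lam L * symHarmonic N ^ k := by
    have := one_le_logFactor hlam hL
    refine (integral_truncSum_le hne hlam hL hcutoff).trans ?_
    gcongr
    exact sum_fullFreq_one_div_hypHeight_le i₀ N
  have hsmall : volume.real {b | ∃ n ∈ fullFreq i₀ N, torusDenom n b < gcdCutoff lam L n} ≤
      2 * (gcdZeta * (symHarmonic N ^ k / (lam * L))) := by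
    refine (measureReal_exists_torusDenom_lt_le hne fun n hn => (hcutoff_pos n hn).le).trans ?_
    gcongr
    exact sum_gcdCutoff_mul_le hk i₀ N hlam hL
  have hlarge : volume.real {b | lam * L ≤ |T b - ∫ b, T b|} ≤
      2 * gcdZeta ^ 2 * (lam * L * symHarmonic N ^ k) / (lam * L) ^ 2 := by
    have hH : 0 ≤ symHarmonic N ^ k := pow_nonneg (symHarmonic_nonneg N) k
    refine ENNReal.toReal_le_of_le_ofReal (by positivity)
      ((ProbabilityTheory.meas_ge_le_variance_div_sq (memLp_truncSum hcutoff_pos (by linarith) 2)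
        (by positivity)).trans (ENNReal.ofReal_le_ofReal ?_))
    gcongr
    exact variance_truncSum_fullFreq_le hk i₀ N hlam hL
  refine ⟨{b | ∃ n ∈ fullFreq i₀ N, torusDenom n b < gcdCutoff lam L n} ∪
    {b | lam * L ≤ |T b - ∫ b, T b|}, ?_, fun b hb => ?_⟩
  · refine (measureReal_union_le _ _).trans ((add_le_add hsmall hlarge).trans_eq ?_)
    field_simp
  · simp only [Set.mem_union, Set.mem_ofPred_eq, not_or, not_exists, not_and, not_lt,
      not_le] at hb
    refine ⟨fun n hn => (hcutoff_pos n hn).trans_le (hb.1 n hn), ?_⟩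
    rw [sum_denomTerm_eq_truncSum hb.1]
    linarith [(abs_lt.1 hb.2).2]

end

/-! ### The exceptional set -/

section

variable {k : ℕ}

lemma torusDenom_neg (n : Fin k → ℤ) (b : Fin k → UnitAddCircle) :
    torusDenom (-n) b = torusDenom n b := by
  have hneg : torusForm (-n) b = -torusForm n b := by simp [torusForm]
  simp [torusDenom, hypHeight, hneg]

lemma denomTerm_torusDenom_nonneg {L : ℝ} (hL : 0 ≤ L) (n : Fin k → ℤ)
    (b : Fin k → UnitAddCircle) : 0 ≤ denomTerm L (torusDenom n b) :=
  le_min (one_div_nonneg.2 (mul_nonneg (hypHeight_pos n).le (norm_nonneg _))) (by positivity)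

lemma freqBox_subset (i₀ : Fin k) (Λ : ℕ) :
    freqBox k Λ ⊆ (degenFreq k (4 ^ Λ)).erase 0 ∪
      (fullFreq i₀ (4 ^ Λ) ∪ (fullFreq i₀ (4 ^ Λ)).image Neg.neg) := by
  intro n hn
  rw [freqBox, mem_erase, mem_freqCube] at hn
  simp only [mem_union, mem_erase, degenFreq, fullFreq, mem_filter, mem_freqCube, mem_image]
  by_cases hzero : ∃ i, n i = 0
  · exact Or.inl ⟨hn.1, hn.2, hzero⟩
  · push Not at hzero
    refine Or.inr ?_
    rcases lt_or_gt_of_ne (hzero i₀) with hneg | hpos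
    · exact Or.inr ⟨-n, ⟨by simpa using hn.2, by simpa using hneg, by simpa using hzero⟩,
        neg_neg n⟩
    · exact Or.inl ⟨hn.2, hpos, hzero⟩

lemma sum_freqBox_le (i₀ : Fin k) (Λ : ℕ) {f : (Fin k → ℤ) → ℝ} (hf : ∀ n, 0 ≤ f n)
    (hneg : ∀ n, f (-n) = f n) :
    ∑ n ∈ freqBox k Λ, f n ≤ ∑ n ∈ (degenFreq k (4 ^ Λ)).erase 0, f n +
      2 * ∑ n ∈ fullFreq i₀ (4 ^ Λ), f n := by
  have hunion (s t : Finset (Fin k → ℤ)) : ∑ n ∈ s ∪ t, f n ≤ ∑ n ∈ s, f n + ∑ n ∈ t, f n := by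
    rw [← sum_union_inter]
    exact le_add_of_nonneg_right (sum_nonneg fun n _ => hf n)
  have himage : ∑ n ∈ (fullFreq i₀ (4 ^ Λ)).image Neg.neg, f n =
      ∑ n ∈ fullFreq i₀ (4 ^ Λ), f n := by
    rw [sum_image neg_injective.injOn]
    exact sum_congr rfl fun n _ => hneg n
  refine (sum_le_sum_of_subset_of_nonneg (freqBox_subset i₀ Λ) fun n _ _ => hf n).trans ?_
  refine (hunion _ _).trans (add_le_add_right ?_ _)
  exact (hunion _ _).trans_eq (by rw [himage, two_mul])

lemma symHarmonic_pow_le (k Λ : ℕ) : symHarmonic (4 ^ Λ) ^ k ≤ 3 ^ k * (Λ + 1 : ℝ) ^ k := by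
  rw [← mul_pow]
  exact pow_le_pow_left₀ (symHarmonic_nonneg _) (symHarmonic_four_pow_le Λ) k

lemma sum_degenFreq_erase_le (hk : k ≠ 0) (Λ : ℕ) :
    ∑ n ∈ (degenFreq k (4 ^ Λ)).erase 0, 1 / hypHeight n ≤
      k * 3 ^ k * ((Λ + 1 : ℝ) ^ k / (Λ + 1)) := by
  have hpow : (Λ + 1 : ℝ) ^ k / (Λ + 1) = (Λ + 1 : ℝ) ^ (k - 1) := by
    rw [div_eq_iff (by positivity), pow_sub_one_mul hk]
  calc ∑ n ∈ (degenFreq k (4 ^ Λ)).erase 0, 1 / hypHeight n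
      ≤ ∑ n ∈ degenFreq k (4 ^ Λ), 1 / hypHeight n :=
        sum_le_sum_of_subset_of_nonneg (erase_subset _ _) fun n _ _ => one_div_hypHeight_nonneg n
    _ ≤ k * symHarmonic (4 ^ Λ) ^ (k - 1) := sum_degenFreq_le _ _
    _ ≤ k * (3 ^ (k - 1) * (Λ + 1 : ℝ) ^ (k - 1)) := by
        gcongr
        exact symHarmonic_pow_le _ _
    _ ≤ k * (3 ^ k * (Λ + 1 : ℝ) ^ (k - 1)) := by
        gcongr
        · norm_num
        · omega
    _ = k * 3 ^ k * ((Λ + 1 : ℝ) ^ k / (Λ + 1)) := by rw [hpow, mul_assoc]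

lemma exists_exceptional_set_degenFreq (hk : k ≠ 0) (Λ : ℕ) {lam : ℝ} (hlam : 1 ≤ lam) :
    ∃ B : Set (Fin k → UnitAddCircle), volume.real B ≤ 6 * k * 3 ^ k * (1 / (Λ + 1)) ∧
      ∀ b ∉ B, (∀ n ∈ (degenFreq k (4 ^ Λ)).erase 0, 0 < torusDenom n b) ∧
        ∑ n ∈ (degenFreq k (4 ^ Λ)).erase 0, denomTerm ((Λ + 1 : ℝ) ^ k) (torusDenom n b) ≤
          (Λ + 1 : ℝ) ^ k * logFactor lam ((Λ + 1 : ℝ) ^ k) := by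
  obtain ⟨B, hB, hb⟩ := exists_exceptional_set_of_ne_zero
    (S := (degenFreq k (4 ^ Λ)).erase 0) (fun _ => ne_of_mem_erase) hlam
    (one_le_pow₀ (by simp) : 1 ≤ (Λ + 1 : ℝ) ^ k)
  refine ⟨B, hB.trans ?_, hb⟩
  calc 6 / (Λ + 1 : ℝ) ^ k * ∑ n ∈ (degenFreq k (4 ^ Λ)).erase 0, 1 / hypHeight n
      ≤ 6 / (Λ + 1 : ℝ) ^ k * (k * 3 ^ k * ((Λ + 1 : ℝ) ^ k / (Λ + 1))) := by
        gcongr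
        exact sum_degenFreq_erase_le hk Λ
    _ = 6 * k * 3 ^ k * (1 / (Λ + 1)) := by field_simp

lemma exists_exceptional_set_fullFreq_four_pow (hk : 2 ≤ k) (i₀ : Fin k) (Λ : ℕ) {lam : ℝ}
    (hlam : 1 ≤ lam) :
    ∃ B : Set (Fin k → UnitAddCircle),
      volume.real B ≤ 2 * (gcdZeta + gcdZeta ^ 2) * 3 ^ k * (1 / lam) ∧
      ∀ b ∉ B, (∀ n ∈ fullFreq i₀ (4 ^ Λ), 0 < torusDenom n b) ∧
        ∑ n ∈ fullFreq i₀ (4 ^ Λ), denomTerm ((Λ + 1 : ℝ) ^ k) (torusDenom n b) ≤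
          (1 + 4 * 3 ^ k) * ((Λ + 1 : ℝ) ^ k * logFactor lam ((Λ + 1 : ℝ) ^ k)) := by
  set L : ℝ := (Λ + 1 : ℝ) ^ k
  have hL : 1 ≤ L := one_le_pow₀ (by simp)
  have hZ := gcdZeta_nonneg
  have hH : symHarmonic (4 ^ Λ) ^ k ≤ 3 ^ k * L := symHarmonic_pow_le k Λ
  obtain ⟨B, hB, hb⟩ := exists_exceptional_set_fullFreq hk i₀ (4 ^ Λ) hlam hL
  refine ⟨B, hB.trans ?_, fun b hbB => ⟨(hb b hbB).1, (hb b hbB).2.trans ?_⟩⟩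
  · calc 2 * (gcdZeta + gcdZeta ^ 2) * (symHarmonic (4 ^ Λ) ^ k / (lam * L))
        ≤ 2 * (gcdZeta + gcdZeta ^ 2) * (3 ^ k * L / (lam * L)) := by gcongr
      _ = 2 * (gcdZeta + gcdZeta ^ 2) * 3 ^ k * (1 / lam) := by field_simp
  · have hlamQ : lam ≤ logFactor lam L := by
      have := Real.log_nonneg hL
      unfold logFactor
      linarith
    have hQ := one_le_logFactor hlam hL
    calc lam * L + 4 * logFactor lam L * symHarmonic (4 ^ Λ) ^ k
        ≤ logFactor lam L * L + 4 * logFactor lam L * (3 ^ k * L) := by gcongr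
      _ = (1 + 4 * 3 ^ k) * (L * logFactor lam L) := by ring

theorem exists_exceptional_set (hk : 2 ≤ k) :
    ∃ C : ℝ, 0 < C ∧ ∀ (Λ : ℕ) (lam : ℝ), 1 ≤ lam → ∃ B : Set (Fin k → UnitAddCircle),
      volume.real B ≤ C * (1 / lam + 1 / (Λ + 1)) ∧
      ∀ b ∉ B, (∀ n ∈ freqBox k Λ, 0 < torusDenom n b) ∧
        ∑ n ∈ freqBox k Λ, denomTerm ((Λ + 1 : ℝ) ^ k) (torusDenom n b) ≤
          C * ((Λ + 1 : ℝ) ^ k * logFactor lam ((Λ + 1 : ℝ) ^ k)) := by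
  have hZ := gcdZeta_nonneg
  set C₁ : ℝ := 6 * k * 3 ^ k
  set C₂ : ℝ := 2 * (gcdZeta + gcdZeta ^ 2) * 3 ^ k
  have hC₁ : 0 ≤ C₁ := by positivity
  have hC₂ : 0 ≤ C₂ := by positivity
  refine ⟨C₁ + C₂ + (3 + 8 * 3 ^ k), by positivity, fun Λ lam hlam => ?_⟩
  let i₀ : Fin k := ⟨0, by omega⟩
  have hQ := one_le_logFactor hlam (one_le_pow₀ (by simp) : 1 ≤ (Λ + 1 : ℝ) ^ k)
  obtain ⟨B₁, hB₁, hb₁⟩ := exists_exceptional_set_degenFreq (by omega : k ≠ 0) Λ hlam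
  obtain ⟨B₂, hB₂, hb₂⟩ := exists_exceptional_set_fullFreq_four_pow hk i₀ Λ hlam
  refine ⟨B₁ ∪ B₂, ?_, fun b hb => ?_⟩
  · have hpow : (0 : ℝ) < 3 ^ k := by positivity
    calc volume.real (B₁ ∪ B₂) ≤ C₁ * (1 / (Λ + 1)) + C₂ * (1 / lam) :=
          (measureReal_union_le _ _).trans (add_le_add hB₁ hB₂)
      _ ≤ (C₁ + C₂ + (3 + 8 * 3 ^ k)) * (1 / (Λ + 1)) +
          (C₁ + C₂ + (3 + 8 * 3 ^ k)) * (1 / lam) := by gcongr <;> linarith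
      _ = (C₁ + C₂ + (3 + 8 * 3 ^ k)) * (1 / lam + 1 / (Λ + 1)) := by ring
  · simp only [Set.mem_union, not_or] at hb
    obtain ⟨hpos₁, hsum₁⟩ := hb₁ b hb.1
    obtain ⟨hpos₂, hsum₂⟩ := hb₂ b hb.2
    refine ⟨fun n hn => ?_, ?_⟩
    · have hmem := freqBox_subset i₀ Λ hn
      simp only [mem_union, mem_image] at hmem
      obtain hdegen | hfull | ⟨n', hfull, rfl⟩ := hmem
      exacts [hpos₁ n hdegen, hpos₂ n hfull,
        (hpos₂ n' hfull).trans_eq (torusDenom_neg n' b).symm]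
    · have hsum := sum_freqBox_le i₀ Λ
        (fun n => denomTerm_torusDenom_nonneg (by positivity : 0 ≤ (Λ + 1 : ℝ) ^ k) n b)
        fun n => by rw [torusDenom_neg]
      have hnonneg : 0 ≤ (C₁ + C₂) * ((Λ + 1 : ℝ) ^ k * logFactor lam ((Λ + 1 : ℝ) ^ k)) := by
        positivity
      linarith

end

/-! ### The convergence case -/

section

variable {k : ℕ}

lemma ae_of_ae_torus {p : (Fin k → UnitAddCircle) → Prop} (hp : ∀ᵐ b, p b) :
    ∀ᵐ α : Fin k → ℝ, p fun i => (α i : UnitAddCircle) := by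
  have hcover : (⋃ z : Fin k → ℤ, Set.pi Set.univ fun i => Set.Ioc (z i : ℝ) (z i + 1)) =
      (Set.univ : Set (Fin k → ℝ)) := by
    refine Set.eq_univ_of_forall fun α => Set.mem_iUnion.2 ⟨fun i => ⌈α i⌉ - 1, fun i _ => ?_⟩
    have hlt := Int.ceil_lt_add_one (α i)
    have hle := Int.le_ceil (α i)
    constructor <;> push_cast <;> linarith
  rw [← Measure.restrict_univ (μ := (volume : Measure (Fin k → ℝ))), ← hcover,
    ae_restrict_iUnion_iff]
  intro z
  have hmk : MeasurePreserving (fun (α : Fin k → ℝ) i => (α i : UnitAddCircle))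
      (volume.restrict (Set.pi Set.univ fun i => Set.Ioc (z i : ℝ) (z i + 1))) volume := by
    rw [volume_pi, Measure.restrict_pi_pi, volume_pi]
    exact measurePreserving_pi _ _ fun i => UnitAddCircle.measurePreserving_mk (z i : ℝ)
  exact hmk.quasiMeasurePreserving.ae hp

lemma abs_DiscT_le_natCast (α : Fin k → ℝ) {x : Fin k → ℝ}
    (hx : ∀ i, x i ∈ Set.Icc (0 : ℝ) 1) (m : ℕ) : |DiscT k α x m| ≤ m := by
  have hvol₀ : 0 ≤ ∏ i, x i := prod_nonneg fun i _ => (hx i).1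
  have hvol₁ : ∏ i, x i ≤ 1 := prod_le_one (fun i _ => (hx i).1) fun i _ => (hx i).2
  have hcount : ∑ n ∈ Icc 1 m, (if ∀ i, Int.fract ((n : ℝ) * α i) < x i then (1 : ℝ) else 0) ≤
      m :=
    calc _ ≤ ∑ _n ∈ Icc 1 m, (1 : ℝ) := sum_le_sum fun n _ => by split_ifs <;> simp
      _ = m := by simp
  exact abs_sub_le_of_nonneg_of_le (sum_nonneg fun n _ => by split_ifs <;> simp) hcount
    (by positivity) (mul_le_of_le_one_right (by positivity) hvol₁)

lemma one_le_log_natCast {N : ℕ} (hN : 3 ≤ N) : 1 ≤ Real.log N := by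
  rw [Real.le_log_iff_exp_le (by positivity)]
  have : (3 : ℝ) ≤ N := by exact_mod_cast hN
  linarith [Real.exp_one_lt_d9]

lemma log_le_exp_ceil {N : ℕ} (hN : 3 ≤ N) :
    Real.log N ≤ Real.exp ⌈Real.log (Real.log N)⌉₊ := by
  rw [← Real.log_le_iff_le_exp (by linarith [one_le_log_natCast hN])]
  exact Nat.le_ceil _

lemma exp_ceil_le {N : ℕ} (hN : 3 ≤ N) :
    Real.exp ⌈Real.log (Real.log N)⌉₊ ≤ 3 * Real.log N := by
  have hlog := one_le_log_natCast hN
  calc Real.exp ⌈Real.log (Real.log N)⌉₊ ≤ Real.exp (Real.log (Real.log N) + 1) :=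
        Real.exp_le_exp.2 (Nat.ceil_lt_add_one (Real.log_nonneg hlog)).le
    _ = Real.log N * Real.exp 1 := by rw [Real.exp_add, Real.exp_log (by linarith)]
    _ ≤ 3 * Real.log N := by nlinarith [Real.exp_one_lt_d9]

/-- A dyadic exponent `Λ` with `N ≤ 2 ^ Λ` for every `N` with `⌈log log N⌉ = J`. -/
def blockScale (J : ℕ) : ℕ := ⌈2 * Real.exp J⌉₊

lemma le_blockScale (J : ℕ) : 2 * Real.exp J ≤ blockScale J := Nat.le_ceil _

lemma blockScale_add_one_le (J : ℕ) : (blockScale J : ℝ) + 1 ≤ 4 * Real.exp J := by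
  have hceil := Nat.ceil_lt_add_one (show 0 ≤ 2 * Real.exp (J : ℝ) by positivity)
  have hexp := Real.one_le_exp (Nat.cast_nonneg (α := ℝ) J)
  unfold blockScale
  linarith

lemma le_two_pow_blockScale {N : ℕ} (hN : 3 ≤ N) :
    N ≤ 2 ^ blockScale ⌈Real.log (Real.log N)⌉₊ := by
  set J := ⌈Real.log (Real.log N)⌉₊
  have hlog : Real.log N ≤ blockScale J * Real.log 2 := by
    nlinarith [le_blockScale J, log_le_exp_ceil hN, one_le_log_natCast hN, Real.log_two_gt_d9]
  have : (N : ℝ) ≤ (2 : ℝ) ^ blockScale J := by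
    rwa [← Real.log_le_log_iff (by positivity) (by positivity), Real.log_pow]
  exact_mod_cast this

lemma log_blockScale_add_one_le (J : ℕ) : Real.log ((blockScale J : ℝ) + 1) ≤ J + 2 := by
  have hexp_two : (4 : ℝ) ≤ Real.exp 2 := by
    have hsq : Real.exp 2 = Real.exp 1 * Real.exp 1 := by
      rw [← Real.exp_add, one_add_one_eq_two]
    nlinarith [Real.exp_one_gt_d9]
  rw [Real.log_le_iff_le_exp (by positivity), Real.exp_add, mul_comm]
  exact (blockScale_add_one_le J).trans (by gcongr)

variable {φ : ℕ → ℝ}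

lemma add_one_le_tsum_one_div_mul (hφpos : ∀ n, 0 < φ n) (hφmono : Monotone φ)
    (hs : Summable fun n => 1 / φ n) (J : ℕ) : (J : ℝ) + 1 ≤ (∑' n, 1 / φ n) * φ J := by
  rw [← div_le_iff₀ (hφpos J)]
  calc ((J : ℝ) + 1) / φ J = ∑ _n ∈ range (J + 1), 1 / φ J := by
        rw [sum_const, card_range, nsmul_eq_mul, mul_one_div, Nat.cast_add_one]
    _ ≤ ∑ n ∈ range (J + 1), 1 / φ n := sum_le_sum fun n hn =>
        one_div_le_one_div_of_le (hφpos n) (hφmono (Nat.lt_succ_iff.1 (mem_range.1 hn)))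
    _ ≤ ∑' n, 1 / φ n := hs.sum_le_tsum _ fun n _ => (one_div_pos.2 (hφpos n)).le

lemma one_le_div_zero (hφpos : ∀ n, 0 < φ n) (hφmono : Monotone φ) (J : ℕ) : 1 ≤ φ J / φ 0 :=
  (one_le_div (hφpos 0)).2 (hφmono J.zero_le)

lemma logFactor_blockScale_le (hφpos : ∀ n, 0 < φ n) (hφmono : Monotone φ)
    (hs : Summable fun n => 1 / φ n) (k J : ℕ) :
    logFactor (φ J / φ 0) ((blockScale J + 1 : ℝ) ^ k) ≤
      (2 / φ 0 + 2 * k * ∑' n, 1 / φ n) * φ J := by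
  have hratio := one_le_div_zero hφpos hφmono J
  have hsum := add_one_le_tsum_one_div_mul hφpos hφmono hs J
  have hlog : (k : ℝ) * Real.log ((blockScale J : ℝ) + 1) ≤
      k * (2 * ((∑' n, 1 / φ n) * φ J)) := by
    gcongr
    linarith [log_blockScale_add_one_le J, Nat.cast_nonneg (α := ℝ) J]
  rw [logFactor, Real.log_pow]
  calc _ ≤ φ J / φ 0 + k * (2 * ((∑' n, 1 / φ n) * φ J)) + φ J / φ 0 := by linarith
    _ = (2 / φ 0 + 2 * k * ∑' n, 1 / φ n) * φ J := by ring

lemma ae_eventually_sum_denomTerm_le (hk : 2 ≤ k) (hφpos : ∀ n, 0 < φ n) (hφmono : Monotone φ)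
    (hs : Summable fun n => 1 / φ n) :
    ∃ C : ℝ, 0 < C ∧ ∀ᵐ α : Fin k → ℝ, ∀ᶠ J in Filter.atTop,
      (∀ n ∈ freqBox k (blockScale J), 0 < ‖(linForm n α : UnitAddCircle)‖) ∧
      ∑ n ∈ freqBox k (blockScale J), denomTerm ((blockScale J + 1 : ℝ) ^ k)
          (hypHeight n * ‖(linForm n α : UnitAddCircle)‖) ≤
        C * ((blockScale J + 1 : ℝ) ^ k *
          logFactor (φ J / φ 0) ((blockScale J + 1 : ℝ) ^ k)) := by
  obtain ⟨C, hC, hB⟩ := exists_exceptional_set hk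
  choose B hmeas hbound using fun J =>
    hB (blockScale J) (φ J / φ 0) (one_le_div_zero hφpos hφmono J)
  have hscale (J : ℕ) : 1 / ((blockScale J : ℝ) + 1) ≤ Real.exp (-1) ^ J := by
    rw [← Real.exp_nat_mul, mul_neg_one, Real.exp_neg, ← one_div]
    refine one_div_le_one_div_of_le (Real.exp_pos _) ?_
    linarith [le_blockScale J, Real.exp_pos (J : ℝ)]
  have hgeom : Summable fun J : ℕ => Real.exp (-1) ^ J :=
    summable_geometric_of_lt_one (Real.exp_pos _).le (Real.exp_lt_one_iff.2 (by norm_num))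
  have hsum : Summable fun J => volume.real (B J) := by
    refine .of_nonneg_of_le (fun _ => measureReal_nonneg) (fun J => ?_)
      (((hs.mul_left (φ 0)).add hgeom).mul_left C)
    refine (hmeas J).trans ?_
    rw [one_div_div, mul_one_div]
    gcongr
    exact hscale J
  have htop : ∑' J, volume (B J) ≠ ⊤ := by
    simpa only [ofReal_measureReal (measure_ne_top _ _)] using hsum.tsum_ofReal_ne_top
  refine ⟨C, hC, ?_⟩
  filter_upwards [ae_of_ae_torus (ae_eventually_notMem htop)] with α hα
  filter_upwards [hα] with J hJ
  have := hbound J _ hJ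
  simp only [torusDenom, torusForm_coe] at this
  exact ⟨fun n hn => pos_of_mul_pos_right (this.1 n hn) (hypHeight_pos n).le, this.2⟩

lemma ae_eventually_abs_DiscT_le (hk : 2 ≤ k) (hφpos : ∀ n, 0 < φ n) (hφmono : Monotone φ)
    (hs : Summable fun n => 1 / φ n) :
    ∃ C : ℝ, 0 ≤ C ∧ ∀ᵐ α : Fin k → ℝ, ∀ᶠ J in Filter.atTop, ∀ m ≤ 2 ^ blockScale J,
      ∀ x : Fin k → ℝ, (∀ i, x i ∈ Set.Icc (0 : ℝ) 1) →
        |DiscT k α x m| ≤ C * Real.exp J ^ k * φ J := by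
  obtain ⟨C, hC, hae⟩ := ae_eventually_sum_denomTerm_le hk hφpos hφmono hs
  set A := 2 / φ 0 + 2 * k * ∑' n, 1 / φ n
  have hA₀ : 0 ≤ A := by
    have := hφpos 0
    have : 0 ≤ ∑' n, 1 / φ n := tsum_nonneg fun n => (one_div_pos.2 (hφpos n)).le
    positivity
  refine ⟨4 * 84 ^ k * ((1 + C) * (4 ^ k * A)), by positivity, ?_⟩
  filter_upwards [hae] with α hα
  filter_upwards [hα] with J ⟨hpos, hsum⟩ m hm x hx
  set L : ℝ := (blockScale J + 1 : ℝ) ^ k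
  set Q := logFactor (φ J / φ 0) L
  have hL : L ≤ 4 ^ k * Real.exp J ^ k := by
    rw [← mul_pow]
    exact pow_le_pow_left₀ (by positivity) (blockScale_add_one_le J) k
  have hQ₁ : 1 ≤ Q :=
    one_le_logFactor (one_le_div_zero hφpos hφmono J) (one_le_pow₀ (by simp))
  have hQ : Q ≤ A * φ J := logFactor_blockScale_le hφpos hφmono hs k J
  have hΛ : 1 ≤ blockScale J := Nat.one_le_ceil_iff.2 (by positivity)
  calc |DiscT k α x m|
      ≤ 4 * 84 ^ k * (L + ∑ n ∈ freqBox k (blockScale J),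
          denomTerm L (hypHeight n * ‖(linForm n α : UnitAddCircle)‖)) :=
        abs_DiscT_le hΛ hpos hx hm
    _ ≤ 4 * 84 ^ k * (L * Q + C * (L * Q)) := by
        gcongr
        exact le_mul_of_one_le_right (by positivity) hQ₁
    _ = 4 * 84 ^ k * ((1 + C) * (L * Q)) := by ring
    _ ≤ 4 * 84 ^ k * ((1 + C) * (4 ^ k * Real.exp J ^ k * (A * φ J))) := by gcongr
    _ = 4 * 84 ^ k * ((1 + C) * (4 ^ k * A)) * Real.exp J ^ k * φ J := by ring

theorem ae_abs_DiscT_le_of_summable (hk : 2 ≤ k) (hφpos : ∀ n, 0 < φ n)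
    (hφmono : Monotone φ) (hs : Summable fun n => 1 / φ n) :
    ∀ᵐ α ∂(volume : Measure (Fin k → ℝ)),
      ∃ C : ℝ, ∀ N : ℕ, 3 ≤ N → ∀ m : ℕ, 1 ≤ m → m ≤ N → ∀ x : Fin k → ℝ,
        (∀ i, x i ∈ Set.Icc (0 : ℝ) 1) →
          |DiscT k α x m| ≤ C * Real.log N ^ k * φ ⌈Real.log (Real.log N)⌉₊ := by
  obtain ⟨C, hC, hae⟩ := ae_eventually_abs_DiscT_le hk hφpos hφmono hs
  filter_upwards [hae] with α hα
  obtain ⟨J₀, hJ₀⟩ := Filter.eventually_atTop.1 hα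
  have hφ₀ := hφpos 0
  set C' : ℝ := Real.exp (Real.exp J₀) / φ 0
  refine ⟨max (C * 3 ^ k) C', fun N hN m _ hmN x hx => ?_⟩
  have hlog := one_le_log_natCast hN
  set J := ⌈Real.log (Real.log N)⌉₊
  have hφJ := hφpos J
  rcases le_or_gt J₀ J with hle | hlt
  · calc |DiscT k α x m| ≤ C * Real.exp J ^ k * φ J :=
          hJ₀ J hle m (hmN.trans (le_two_pow_blockScale hN)) x hx
      _ ≤ C * (3 * Real.log N) ^ k * φ J := by
          gcongr
          exact exp_ceil_le hN
      _ = C * 3 ^ k * Real.log N ^ k * φ J := by ring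
      _ ≤ max (C * 3 ^ k) C' * Real.log N ^ k * φ J := by
          gcongr
          exact le_max_left _ _
  · have hN' : (N : ℝ) ≤ Real.exp (Real.exp J₀) := by
      rw [← Real.log_le_iff_le_exp (by positivity)]
      exact (log_le_exp_ceil hN).trans (Real.exp_le_exp.2 (by exact_mod_cast hlt.le))
    calc |DiscT k α x m| ≤ m := abs_DiscT_le_natCast α hx m
      _ ≤ N := by gcongr
      _ ≤ Real.exp (Real.exp J₀) := hN'
      _ = C' * 1 * φ 0 := by simp only [C']; field_simp
      _ ≤ C' * Real.log N ^ k * φ J := by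
          gcongr
          exacts [one_le_pow₀ hlog, hφmono J.zero_le]
      _ ≤ max (C * 3 ^ k) C' * Real.log N ^ k * φ J := by
          gcongr
          exact le_max_right _ _

end

/-! ### Exponential sums are controlled by the discrepancy -/

section

variable {k : ℕ}

lemma fourierChar_intCast (n : ℤ) : 𝐞 (n : ℝ) = 1 := by
  rw [Real.fourierChar_apply', mul_comm, Circle.exp_int_mul_two_pi]

lemma fourierChar_intCast_mul_fract (n : ℤ) (y : ℝ) : 𝐞 (n * Int.fract y) = 𝐞 (n * y) := by
  have hsplit : (n : ℝ) * y = n * Int.fract y + ((n * ⌊y⌋ : ℤ) : ℝ) := by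
    push_cast
    rw [← mul_add, Int.fract_add_floor]
  rw [hsplit, AddChar.map_add_eq_mul, fourierChar_intCast, mul_one]

lemma hasDerivAt_fourierChar_intCast_mul (n : ℤ) (x : ℝ) :
    HasDerivAt (fun x : ℝ => (𝐞 (n * x) : ℂ)) (2 * π * n * Complex.I * 𝐞 (n * x)) x := by
  have hlin : HasDerivAt (fun x : ℝ => (n : ℝ) * x) n x := by
    simpa using (hasDerivAt_id x).const_mul (n : ℝ)
  refine ((Real.hasDerivAt_fourierChar _).scomp x hlin).congr_deriv ?_
  rw [Complex.real_smul, Complex.ofReal_intCast]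
  ring

lemma continuous_coe_fourierChar_mul (n : ℝ) : Continuous fun x : ℝ => (𝐞 (n * x) : ℂ) :=
  continuous_subtype_val.comp (Real.continuous_fourierChar.comp (continuous_const_mul n))

/-- The measure against which a discrepancy function is integrated in each coordinate in order to
recover exponential sums from it. -/
def koksmaMeasure : Measure ℝ := Measure.dirac 1 + volume.restrict (Set.Ioo 0 1)

instance isFiniteMeasure_koksmaMeasure : IsFiniteMeasure koksmaMeasure := by
  unfold koksmaMeasure
  infer_instance

lemma koksmaMeasure_univ : koksmaMeasure Set.univ = 2 := by
  simp [koksmaMeasure, one_add_one_eq_two]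

/-- The density, with respect to `koksmaMeasure`, of the measure `δ₁ - d(𝐞(n x))` on `(0, 1]`.
Integrating the indicator of `y < x` against it gives `𝐞(n y)`, and integrating `x` gives `0`. -/
def koksmaKernel (n : ℤ) (x : ℝ) : ℂ :=
  if x = 1 then 1 else if x ∈ Set.Ioo (0 : ℝ) 1 then -(2 * π * n * Complex.I) * 𝐞 (n * x) else 0

lemma measurable_koksmaKernel (n : ℤ) : Measurable (koksmaKernel n) :=
  .ite (measurableSet_singleton 1) measurable_const <| .ite measurableSet_Ioo
    ((continuous_coe_fourierChar_mul n).const_mul _).measurable measurable_const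

lemma koksmaKernel_of_mem (n : ℤ) {x : ℝ} (hx : x ∈ Set.Ioo (0 : ℝ) 1) :
    koksmaKernel n x = -(2 * π * n * Complex.I) * 𝐞 (n * x) := by
  rw [koksmaKernel, if_neg hx.2.ne, if_pos hx]

lemma koksmaKernel_of_notMem (n : ℤ) {x : ℝ} (hx : x ∉ Set.Icc (0 : ℝ) 1) :
    koksmaKernel n x = 0 := by
  rw [koksmaKernel, if_neg fun h => hx (by simp [h]),
    if_neg fun h => hx (Set.Ioo_subset_Icc_self h)]

lemma norm_koksmaKernel_le (n : ℤ) (x : ℝ) : ‖koksmaKernel n x‖ ≤ 2 * π * max 1 |(n : ℝ)| := by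
  have hmax : (1 : ℝ) ≤ max 1 |(n : ℝ)| := le_max_left _ _
  have hpi := Real.pi_gt_three
  rw [koksmaKernel]
  split_ifs
  · rw [norm_one]
    nlinarith
  · simp only [norm_mul, norm_neg, Complex.norm_ofNat, Complex.norm_real, Real.norm_eq_abs,
      abs_of_pos Real.pi_pos, Complex.norm_intCast, Complex.norm_I, Circle.norm_coe, mul_one]
    gcongr
    exact le_max_right _ _
  · rw [norm_zero]
    positivity

lemma integrable_mul_koksmaKernel (n : ℤ) {μ : Measure ℝ} [IsFiniteMeasure μ]
    {g : ℝ → ℂ} (hg : Measurable g) (hg₁ : ∀ x ∈ Set.Icc (0 : ℝ) 1, ‖g x‖ ≤ 1) :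
    Integrable (fun x => g x * koksmaKernel n x) μ := by
  refine Integrable.of_bound (hg.mul (measurable_koksmaKernel n)).aestronglyMeasurable
    (2 * π * max 1 |(n : ℝ)|) (Filter.Eventually.of_forall fun x => ?_)
  by_cases hx : x ∈ Set.Icc (0 : ℝ) 1
  · rw [norm_mul]
    exact (mul_le_of_le_one_left (norm_nonneg _) (hg₁ x hx)).trans (norm_koksmaKernel_le n x)
  · rw [koksmaKernel_of_notMem n hx, mul_zero, norm_zero]
    positivity

lemma integral_mul_koksmaKernel (n : ℤ) {g : ℝ → ℂ} (hg : Measurable g)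
    (hg₁ : ∀ x ∈ Set.Icc (0 : ℝ) 1, ‖g x‖ ≤ 1) :
    ∫ x, g x * koksmaKernel n x ∂koksmaMeasure =
      g 1 + ∫ x in Set.Ioo (0 : ℝ) 1, g x * (-(2 * π * n * Complex.I) * 𝐞 (n * x)) := by
  have hone : koksmaKernel n 1 = 1 := if_pos rfl
  rw [koksmaMeasure, integral_add_measure (integrable_mul_koksmaKernel n hg hg₁)
    (integrable_mul_koksmaKernel n hg hg₁), integral_dirac, hone, mul_one]
  congr 1
  exact setIntegral_congr_fun measurableSet_Ioo fun x hx => by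
    simp only [koksmaKernel_of_mem n hx]

lemma measurable_indicator_lt (y : ℝ) : Measurable fun x : ℝ => if y < x then (1 : ℂ) else 0 :=
  Measurable.ite measurableSet_Ioi measurable_const measurable_const

lemma norm_indicator_lt_le (y x : ℝ) : ‖if y < x then (1 : ℂ) else 0‖ ≤ 1 := by
  split_ifs <;> simp

lemma norm_ofReal_le_one {x : ℝ} (hx : x ∈ Set.Icc (0 : ℝ) 1) : ‖(x : ℂ)‖ ≤ 1 := by
  simpa only [Complex.norm_real, Real.norm_eq_abs, abs_of_nonneg hx.1] using hx.2

lemma integral_indicator_mul_koksmaKernel (n : ℤ) {y : ℝ} (hy : y ∈ Set.Ico (0 : ℝ) 1) :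
    ∫ x, (if y < x then (1 : ℂ) else 0) * koksmaKernel n x ∂koksmaMeasure = 𝐞 (n * y) := by
  have hinteg : ∫ x in Set.Ioo (0 : ℝ) 1,
        (if y < x then (1 : ℂ) else 0) * (-(2 * π * n * Complex.I) * 𝐞 (n * x)) =
      ∫ x in y..1, -(2 * π * n * Complex.I * 𝐞 (n * x)) := by
    rw [intervalIntegral.integral_of_le hy.2.le, integral_Ioc_eq_integral_Ioo,
      ← Set.inter_eq_right.2 (Set.Ioo_subset_Ioo_left hy.1 : Set.Ioo y 1 ⊆ Set.Ioo 0 1),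
      ← setIntegral_indicator measurableSet_Ioo]
    refine setIntegral_congr_fun measurableSet_Ioo fun x hx => ?_
    by_cases h : y < x
    · simp [h, hx.2]
    · simp [h]
  rw [integral_mul_koksmaKernel n (measurable_indicator_lt y) fun x _ => norm_indicator_lt_le y x,
    if_pos hy.2, hinteg, intervalIntegral.integral_neg,
    intervalIntegral.integral_eq_sub_of_hasDerivAt
      fun x _ => hasDerivAt_fourierChar_intCast_mul n x, mul_one, fourierChar_intCast]
  · simp
  · exact ((continuous_coe_fourierChar_mul n).const_mul _).intervalIntegrable _ _

lemma integral_ofReal_mul_koksmaKernel {n : ℤ} (hn : n ≠ 0) :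
    ∫ x, (x : ℂ) * koksmaKernel n x ∂koksmaMeasure = 0 := by
  have hc : (2 * π * n * Complex.I : ℂ) ≠ 0 := by simp [Real.pi_ne_zero, hn]
  have hderiv (x : ℝ) : HasDerivAt
      (fun x : ℝ => -((x : ℂ) * 𝐞 (n * x)) + 𝐞 (n * x) / (2 * π * n * Complex.I))
      ((x : ℂ) * (-(2 * π * n * Complex.I) * 𝐞 (n * x))) x := by
    have h := (((hasDerivAt_id x).ofReal_comp.mul (hasDerivAt_fourierChar_intCast_mul n x)).neg).add
      ((hasDerivAt_fourierChar_intCast_mul n x).div_const (2 * π * n * Complex.I))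
    refine h.congr_deriv ?_
    rw [mul_div_cancel_left₀ _ hc]
    simp only [id, Complex.ofReal_one]
    ring
  rw [integral_mul_koksmaKernel n Complex.measurable_ofReal fun x hx => norm_ofReal_le_one hx,
    ← integral_Ioc_eq_integral_Ioo, ← intervalIntegral.integral_of_le zero_le_one,
    intervalIntegral.integral_eq_sub_of_hasDerivAt fun x _ => hderiv x]
  · simp [fourierChar_intCast]
  · exact (Complex.continuous_ofReal.mul
      ((continuous_coe_fourierChar_mul n).const_mul _)).intervalIntegrable _ _

lemma ofReal_DiscT_mul_prod (α x : Fin k → ℝ) (m : ℕ) (n : Fin k → ℤ) :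
    (DiscT k α x m : ℂ) * ∏ i, koksmaKernel (n i) (x i) =
      ∑ t ∈ Icc 1 m, ∏ i, ((if Int.fract ((t : ℝ) * α i) < x i then (1 : ℂ) else 0) *
        koksmaKernel (n i) (x i)) - m * ∏ i, ((x i : ℂ) * koksmaKernel (n i) (x i)) := by
  simp only [prod_mul_distrib, prod_ite_zero, prod_const_one, mem_univ, true_imp_iff, ← sum_mul,
    ← mul_assoc, ← sub_mul]
  congr 1
  rw [DiscT]
  push_cast
  congr 1
  exact sum_congr rfl fun t _ => by split_ifs <;> simp

lemma integral_prod_indicator_mul_koksmaKernel (n : Fin k → ℤ) (α : Fin k → ℝ) (t : ℕ) :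
    ∫ x : Fin k → ℝ, ∏ i, ((if Int.fract ((t : ℝ) * α i) < x i then (1 : ℂ) else 0) *
      koksmaKernel (n i) (x i)) ∂Measure.pi (fun _ => koksmaMeasure) = 𝐞 (t * linForm n α) := by
  rw [integral_fintype_prod_eq_prod fun i (x : ℝ) =>
    (if Int.fract ((t : ℝ) * α i) < x then (1 : ℂ) else 0) * koksmaKernel (n i) x]
  simp only [integral_indicator_mul_koksmaKernel _ ⟨Int.fract_nonneg _, Int.fract_lt_one _⟩,
    fourierChar_intCast_mul_fract]
  rw [← fourierChar_sum, linForm, mul_sum]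
  simp only [mul_left_comm]

lemma sum_fourierChar_linForm_eq_integral (hk : k ≠ 0) {n : Fin k → ℤ} (hn : ∀ i, n i ≠ 0)
    (α : Fin k → ℝ) (m : ℕ) :
    ∑ t ∈ Icc 1 m, (𝐞 (t * linForm n α) : ℂ) =
      ∫ x, (DiscT k α x m : ℂ) * ∏ i, koksmaKernel (n i) (x i)
        ∂Measure.pi (fun _ => koksmaMeasure) := by
  have hcount (t : ℕ) : Integrable (fun x : Fin k → ℝ => ∏ i,
      ((if Int.fract ((t : ℝ) * α i) < x i then (1 : ℂ) else 0) * koksmaKernel (n i) (x i)))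
      (Measure.pi fun _ => koksmaMeasure) :=
    .fintype_prod fun i => integrable_mul_koksmaKernel (n i) (measurable_indicator_lt _)
      fun x _ => norm_indicator_lt_le _ x
  have hvol : Integrable (fun x : Fin k → ℝ => ∏ i, ((x i : ℂ) * koksmaKernel (n i) (x i)))
      (Measure.pi fun _ => koksmaMeasure) :=
    .fintype_prod fun i => integrable_mul_koksmaKernel (n i) Complex.measurable_ofReal
      fun x hx => norm_ofReal_le_one hx
  have hvol_zero : ∫ x : Fin k → ℝ, ∏ i, ((x i : ℂ) * koksmaKernel (n i) (x i))
      ∂Measure.pi (fun _ => koksmaMeasure) = 0 := by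
    rw [integral_fintype_prod_eq_prod fun i (x : ℝ) => (x : ℂ) * koksmaKernel (n i) x]
    exact prod_eq_zero (mem_univ ⟨0, Nat.pos_of_ne_zero hk⟩)
      (integral_ofReal_mul_koksmaKernel (hn _))
  simp only [ofReal_DiscT_mul_prod]
  rw [integral_sub (integrable_finsetSum _ fun t _ => hcount t) (hvol.const_mul _),
    integral_finsetSum _ fun t _ => hcount t, integral_const_mul, hvol_zero, mul_zero, sub_zero]
  exact sum_congr rfl fun t _ => (integral_prod_indicator_mul_koksmaKernel n α t).symm

lemma norm_prod_koksmaKernel_le (n : Fin k → ℤ) (x : Fin k → ℝ) :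
    ‖∏ i, koksmaKernel (n i) (x i)‖ ≤ (2 * π) ^ k * hypHeight n := by
  rw [norm_prod, hypHeight, ← Fin.prod_const, ← prod_mul_distrib]
  exact prod_le_prod (fun _ _ => norm_nonneg _) fun i _ => norm_koksmaKernel_le (n i) (x i)

theorem norm_sum_fourierChar_linForm_le (hk : k ≠ 0) {α : Fin k → ℝ} {n : Fin k → ℤ}
    (hn : ∀ i, n i ≠ 0) {m : ℕ} {M : ℝ}
    (hM : ∀ x : Fin k → ℝ, (∀ i, x i ∈ Set.Icc (0 : ℝ) 1) → |DiscT k α x m| ≤ M) :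
    ‖∑ t ∈ Icc 1 m, (𝐞 (t * linForm n α) : ℂ)‖ ≤ (4 * π) ^ k * hypHeight n * M := by
  have hM₀ : 0 ≤ M := (abs_nonneg _).trans (hM (fun _ => 0) fun _ => by simp)
  have hP := hypHeight_pos n
  have hbound (x : Fin k → ℝ) : ‖(DiscT k α x m : ℂ) * ∏ i, koksmaKernel (n i) (x i)‖ ≤
      M * ((2 * π) ^ k * hypHeight n) := by
    by_cases hx : ∀ i, x i ∈ Set.Icc (0 : ℝ) 1
    · rw [norm_mul, Complex.norm_real, Real.norm_eq_abs]
      exact mul_le_mul (hM x hx) (norm_prod_koksmaKernel_le n x) (norm_nonneg _) hM₀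
    · push Not at hx
      obtain ⟨i, hi⟩ := hx
      rw [prod_eq_zero (mem_univ i) (koksmaKernel_of_notMem _ hi), mul_zero, norm_zero]
      positivity
  have hmass : (Measure.pi fun _ : Fin k => koksmaMeasure).real Set.univ = 2 ^ k := by
    rw [Measure.real, Measure.pi_univ]
    simp [koksmaMeasure_univ]
  rw [sum_fourierChar_linForm_eq_integral hk hn]
  calc _ ≤ M * ((2 * π) ^ k * hypHeight n) *
        (Measure.pi fun _ : Fin k => koksmaMeasure).real Set.univ :=
        norm_integral_le_of_norm_le_const (Filter.Eventually.of_forall hbound)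
    _ = (2 * π * 2) ^ k * hypHeight n * M := by
        rw [hmass, mul_pow (2 * π)]
        ring
    _ = (4 * π) ^ k * hypHeight n * M := by ring

end

/-! ### Shells of primitive frequencies -/

section

variable {k : ℕ}

/-- The cube `[1, R]^k` of frequencies. -/
def posCube (k R : ℕ) : Finset (Fin k → ℤ) := Fintype.piFinset fun _ : Fin k => Icc 1 (R : ℤ)

lemma mem_posCube {R : ℕ} {n : Fin k → ℤ} : n ∈ posCube k R ↔ ∀ i, 1 ≤ n i ∧ n i ≤ R := by
  simp [posCube]

lemma posCube_mono (k : ℕ) : Monotone (posCube k) := fun _ _ h _ hn =>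
  mem_posCube.2 fun i => (mem_posCube.1 hn i).imp_right fun hi => hi.trans (by exact_mod_cast h)

lemma sum_Icc_one_div_max_one_abs (R : ℕ) :
    ∑ n ∈ Icc 1 (R : ℤ), 1 / max 1 |(n : ℝ)| = (harmonic R : ℝ) := by
  induction R with
  | zero => simp
  | succ R ih =>
    have hinsert : Icc 1 ((R + 1 : ℕ) : ℤ) = insert ((R : ℤ) + 1) (Icc 1 (R : ℤ)) := by
      ext n
      simp only [mem_Icc, mem_insert]
      omega
    have hnonneg : (0 : ℝ) ≤ R + 1 := by positivity
    rw [hinsert, sum_insert (by simp), ih, harmonic_succ]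
    push_cast
    rw [abs_of_nonneg hnonneg, max_eq_right (by simp), one_div, add_comm]

lemma sum_posCube_one_div_hypHeight (k R : ℕ) :
    ∑ n ∈ posCube k R, 1 / hypHeight n = (harmonic R : ℝ) ^ k := by
  rw [posCube, sum_piFinset_one_div_hypHeight, sum_Icc_one_div_max_one_abs, prod_const, card_univ,
    Fintype.card_fin]

/-- The primitive frequencies of the cube `[1, R]^k`. -/
def primCube (k R : ℕ) : Finset (Fin k → ℤ) := {n ∈ posCube k R | vecGcd n = 1}

lemma posCube_subset_biUnion (hk : 0 < k) (R : ℕ) :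
    posCube k R ⊆ (Icc 1 R).biUnion fun a => (primCube k R).image fun n i => (a : ℤ) * n i := by
  intro n hn
  rw [mem_posCube] at hn
  have hfirst := hn ⟨0, hk⟩
  have hdvd : vecGcd n ∣ (n ⟨0, hk⟩).natAbs := Finset.gcd_dvd (mem_univ _)
  have hpos : 0 < vecGcd n := Nat.pos_of_dvd_of_pos hdvd (by omega)
  have hle : vecGcd n ≤ R := (Nat.le_of_dvd (by omega) hdvd).trans (by omega)
  obtain ⟨m, hm⟩ := exists_natCast_mul_eq (dvd_refl (vecGcd n))
  have hprim : vecGcd m = 1 := by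
    have hmul := natAbs_mul_vecGcd (vecGcd n) m
    rw [hm, Int.natAbs_natCast] at hmul
    exact Nat.eq_of_mul_eq_mul_left hpos (hmul.trans (mul_one _).symm)
  refine mem_biUnion.2 ⟨vecGcd n, mem_Icc.2 ⟨hpos, hle⟩, mem_image.2 ⟨m, ?_, hm⟩⟩
  refine mem_filter.2 ⟨mem_posCube.2 fun i => ?_, hprim⟩
  have hi : (vecGcd n : ℤ) * m i = n i := congrFun hm i
  have hmi : 0 < m i :=
    pos_of_mul_pos_right (hi ▸ (hn i).1 : (0 : ℤ) < vecGcd n * m i) (by positivity)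
  exact ⟨hmi, (le_mul_of_one_le_left hmi.le (by exact_mod_cast hpos)).trans (hi.trans_le (hn i).2)⟩

lemma sum_Icc_one_div_sq_le_two (R : ℕ) : ∑ a ∈ Icc 1 R, 1 / (a : ℝ) ^ 2 ≤ 2 := by
  have hIcc : Icc 1 R = Ioo 0 (R + 1) := by
    ext a
    simp only [mem_Icc, mem_Ioo]
    omega
  simpa [hIcc] using sum_Ioo_inv_sq_le (α := ℝ) 0 (R + 1)

/-- Sorting the frequencies of the cube by their content `a` costs a factor `∑ a⁻ᵏ ≤ 2`. -/
lemma harmonic_pow_le_two_mul_sum_primCube (hk : 2 ≤ k) (R : ℕ) :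
    (harmonic R : ℝ) ^ k ≤ 2 * ∑ n ∈ primCube k R, 1 / hypHeight n := by
  have hprim : 0 ≤ ∑ n ∈ primCube k R, 1 / hypHeight n :=
    sum_nonneg fun n _ => one_div_hypHeight_nonneg n
  calc (harmonic R : ℝ) ^ k = ∑ n ∈ posCube k R, 1 / hypHeight n :=
        (sum_posCube_one_div_hypHeight k R).symm
    _ ≤ ∑ n ∈ (Icc 1 R).biUnion fun a => (primCube k R).image fun n i => (a : ℤ) * n i,
          1 / hypHeight n :=
        sum_le_sum_of_subset_of_nonneg (posCube_subset_biUnion (by omega) R)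
          fun n _ _ => one_div_hypHeight_nonneg n
    _ ≤ ∑ a ∈ Icc 1 R, ∑ n ∈ (primCube k R).image fun n i => (a : ℤ) * n i, 1 / hypHeight n :=
        sum_biUnion_le_sum_sum _ _ one_div_hypHeight_nonneg
    _ = ∑ a ∈ Icc 1 R, 1 / (a : ℝ) ^ k * ∑ n ∈ primCube k R, 1 / hypHeight n := by
        refine sum_congr rfl fun a ha => ?_
        have ha₁ := (mem_Icc.1 ha).1
        rw [sum_image (natCast_mul_injective ha₁).injOn, mul_sum]
        refine sum_congr rfl fun n hn => ?_
        rw [hypHeight_natCast_mul ha₁ fun i => ?_, one_div_mul_one_div]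
        have := (mem_posCube.1 (mem_filter.1 hn).1 i).1
        omega
    _ ≤ ∑ a ∈ Icc 1 R, 1 / (a : ℝ) ^ 2 * ∑ n ∈ primCube k R, 1 / hypHeight n := by
        gcongr with a ha
        · have := (mem_Icc.1 ha).1
          positivity
        · exact_mod_cast (mem_Icc.1 ha).1
    _ ≤ 2 * ∑ n ∈ primCube k R, 1 / hypHeight n := by
        rw [← sum_mul]
        gcongr
        exact sum_Icc_one_div_sq_le_two R

/-- The side of the cube bounding the shells. It is chosen so that heights in `[1, R]^k` are at
most `exp (exp j / 2)`. -/
def shellRadius (k j : ℕ) : ℕ := ⌊Real.exp (Real.exp j / (2 * k))⌋₊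

lemma shellRadius_mono (k : ℕ) : Monotone (shellRadius k) := fun i j h => by
  unfold shellRadius
  gcongr

lemma exp_div_le_harmonic_shellRadius (k j : ℕ) :
    Real.exp j / (2 * k) ≤ harmonic (shellRadius k j) := by
  simpa only [Real.log_exp, shellRadius] using
    log_le_harmonic_floor (Real.exp (Real.exp j / (2 * k))) (Real.exp_pos _).le

lemma harmonic_shellRadius_le (k j : ℕ) :
    (harmonic (shellRadius k j) : ℝ) ≤ 1 + Real.exp j / (2 * k) := by
  simpa only [Real.log_exp, shellRadius] using
    harmonic_floor_le_one_add_log (Real.exp (Real.exp j / (2 * k)))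
      (Real.one_le_exp (by positivity))

/-- The `j`th shell of primitive frequencies. -/
def shell (k j : ℕ) : Finset (Fin k → ℤ) :=
  primCube k (shellRadius k (j + 1)) \ posCube k (shellRadius k j)

lemma mem_shell {j : ℕ} {n : Fin k → ℤ} : n ∈ shell k j ↔
    n ∈ posCube k (shellRadius k (j + 1)) ∧ vecGcd n = 1 ∧ n ∉ posCube k (shellRadius k j) := by
  rw [shell, mem_sdiff, primCube, mem_filter, and_assoc]

lemma one_le_of_mem_shell {j : ℕ} {n : Fin k → ℤ} (hn : n ∈ shell k j) (i : Fin k) : 1 ≤ n i :=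
  (mem_posCube.1 (mem_shell.1 hn).1 i).1

lemma vecGcd_of_mem_shell {j : ℕ} {n : Fin k → ℤ} (hn : n ∈ shell k j) : vecGcd n = 1 :=
  (mem_shell.1 hn).2.1

lemma hypHeight_le_of_mem_shell {j : ℕ} (hk : 0 < k) {n : Fin k → ℤ} (hn : n ∈ shell k j) :
    hypHeight n ≤ Real.exp (Real.exp ((j + 1 : ℕ) : ℝ) / 2) := by
  have hcube := mem_posCube.1 (mem_shell.1 hn).1
  calc hypHeight n ≤ ∏ _i : Fin k, Real.exp (Real.exp ((j + 1 : ℕ) : ℝ) / (2 * k)) := by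
        refine prod_le_prod (fun i _ => by positivity) fun i _ => ?_
        have hlow : (1 : ℝ) ≤ n i := by exact_mod_cast (hcube i).1
        have hhigh : (n i : ℝ) ≤ shellRadius k (j + 1) := by exact_mod_cast (hcube i).2
        rw [abs_of_pos (by linarith), max_eq_right hlow]
        exact hhigh.trans (Nat.floor_le (Real.exp_pos _).le)
    _ = Real.exp (Real.exp ((j + 1 : ℕ) : ℝ) / 2) := by
        rw [Fin.prod_const, ← Real.exp_nat_mul]
        congr 1
        field_simp

lemma eq_of_mem_shell_of_mem_shell {i j : ℕ} {n : Fin k → ℤ} (hi : n ∈ shell k i)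
    (hj : n ∈ shell k j) : i = j := by
  have hnot {i j : ℕ} (hi : n ∈ shell k i) (hj : n ∈ shell k j) : ¬ i < j := fun hij =>
    (mem_shell.1 hj).2.2 (posCube_mono k (shellRadius_mono k hij) (mem_shell.1 hi).1)
  exact le_antisymm (not_lt.1 (hnot hj hi)) (not_lt.1 (hnot hi hj))

lemma sum_primCube_shellRadius_le (k j : ℕ) :
    ∑ n ∈ primCube k (shellRadius k (j + 1)), 1 / hypHeight n ≤
      ∑ n ∈ shell k j, 1 / hypHeight n + (harmonic (shellRadius k j) : ℝ) ^ k := by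
  rw [← sum_posCube_one_div_hypHeight, ← sum_inter_add_sum_sdiff _ (posCube k (shellRadius k j)),
    add_comm]
  exact add_le_add_right (sum_le_sum_of_subset_of_nonneg inter_subset_right
    fun n _ _ => one_div_hypHeight_nonneg n) _

lemma four_mul_one_add_pow_le (hk : 2 ≤ k) {u : ℝ} (hu : 4 ≤ u) :
    4 * (1 + u) ^ k ≤ (Real.exp 1 * u) ^ k :=
  calc 4 * (1 + u) ^ k = 2 ^ 2 * (1 + u) ^ k := by norm_num
    _ ≤ 2 ^ k * (1 + u) ^ k := by
        gcongr
        norm_num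
    _ = (2 * (1 + u)) ^ k := (mul_pow _ _ _).symm
    _ ≤ (Real.exp 1 * u) ^ k := by
        refine pow_le_pow_left₀ (by positivity) ?_ k
        nlinarith [Real.exp_one_gt_d9]

lemma mul_exp_pow_le_sum_shell (hk : 2 ≤ k) {j : ℕ} (hj : 8 * k ≤ j) :
    1 / (4 * (2 * k : ℝ) ^ k) * Real.exp ((j + 1 : ℕ) : ℝ) ^ k ≤
      ∑ n ∈ shell k j, 1 / hypHeight n := by
  have : (0 : ℝ) < k := by positivity
  set u := Real.exp (j : ℝ) / (2 * k)
  have hu : 4 ≤ u := by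
    rw [le_div_iff₀ (by positivity)]
    have hexp := Real.add_one_le_exp (j : ℝ)
    have hj' : (8 * k : ℝ) ≤ j := by exact_mod_cast hj
    linarith
  have hsucc : Real.exp ((j + 1 : ℕ) : ℝ) / (2 * k) = Real.exp 1 * u := by
    push_cast
    rw [Real.exp_add, mul_comm (Real.exp j), mul_div_assoc]
  have hlow : (Real.exp 1 * u) ^ k ≤ (harmonic (shellRadius k (j + 1)) : ℝ) ^ k := by
    rw [← hsucc]
    gcongr
    exact exp_div_le_harmonic_shellRadius k (j + 1)
  have hhigh : (harmonic (shellRadius k j) : ℝ) ^ k ≤ (1 + u) ^ k :=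
    pow_le_pow_left₀ ((by positivity : 0 ≤ u).trans (exp_div_le_harmonic_shellRadius k j))
      (harmonic_shellRadius_le k j) k
  have hprim := harmonic_pow_le_two_mul_sum_primCube hk (shellRadius k (j + 1))
  have hshell := sum_primCube_shellRadius_le k j
  calc 1 / (4 * (2 * k : ℝ) ^ k) * Real.exp ((j + 1 : ℕ) : ℝ) ^ k
      = 1 / 4 * (Real.exp 1 * u) ^ k := by
        rw [← hsucc, div_pow]
        field_simp
    _ ≤ ∑ n ∈ shell k j, 1 / hypHeight n := by linarith [four_mul_one_add_pow_le hk hu]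

end

/-! ### A Borel–Cantelli lemma for pairwise independent events -/

section

variable {Ω ι : Type*} [MeasurableSpace Ω] {μ : Measure Ω} {s : ι → Set Ω}

lemma indepFun_indicator_one {t u : Set Ω} (h : ProbabilityTheory.IndepSet t u μ) :
    ProbabilityTheory.IndepFun (t.indicator (1 : Ω → ℝ)) (u.indicator (1 : Ω → ℝ)) μ := by
  have hcomap (v : Set Ω) : MeasurableSpace.comap (v.indicator (1 : Ω → ℝ)) inferInstance ≤
      MeasurableSpace.generateFrom {v} :=
    Measurable.comap_le <| Measurable.indicator (m := .generateFrom {v}) measurable_const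
      (MeasurableSpace.measurableSet_generateFrom rfl)
  rw [ProbabilityTheory.IndepSet_iff_Indep] at h
  rw [ProbabilityTheory.IndepFun_iff_Indep]
  exact ProbabilityTheory.indep_of_indep_of_le_left
    (ProbabilityTheory.indep_of_indep_of_le_right h (hcomap u)) (hcomap t)

variable [IsProbabilityMeasure μ]

lemma memLp_two_indicator_one {t : Set Ω} (ht : MeasurableSet t) :
    MemLp (t.indicator (1 : Ω → ℝ)) 2 μ :=
  memLp_indicator_const 2 ht 1 (Or.inr (measure_ne_top _ _))

lemma variance_indicator_one_le {t : Set Ω} (ht : MeasurableSet t) :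
    ProbabilityTheory.variance (t.indicator (1 : Ω → ℝ)) μ ≤ μ.real t := by
  have hsq : t.indicator (1 : Ω → ℝ) ^ 2 = t.indicator 1 := by
    ext ω
    by_cases h : ω ∈ t <;> simp [h]
  simpa only [hsq, integral_indicator_one ht] using
    ProbabilityTheory.variance_le_expectation_sq (μ := μ)
      (measurable_one.indicator ht).aestronglyMeasurable

lemma variance_sum_indicator_le (S : Finset ι) (hs : ∀ i, MeasurableSet (s i))
    (hind : (S : Set ι).Pairwise fun i j => ProbabilityTheory.IndepSet (s i) (s j) μ) :
    ProbabilityTheory.variance (∑ i ∈ S, (s i).indicator (1 : Ω → ℝ)) μ ≤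
      ∑ i ∈ S, μ.real (s i) := by
  rw [ProbabilityTheory.IndepFun.variance_sum (fun i _ => memLp_two_indicator_one (hs i))
    fun i hi j hj hij => indepFun_indicator_one (hind hi hj hij)]
  exact sum_le_sum fun i _ => variance_indicator_one_le (hs i)

lemma measureReal_forall_notMem_le (S : Finset ι) (hs : ∀ i, MeasurableSet (s i))
    (hind : (S : Set ι).Pairwise fun i j => ProbabilityTheory.IndepSet (s i) (s j) μ)
    (hpos : 0 < ∑ i ∈ S, μ.real (s i)) :
    μ.real {ω | ∀ i ∈ S, ω ∉ s i} ≤ 1 / ∑ i ∈ S, μ.real (s i) := by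
  set X : Ω → ℝ := ∑ i ∈ S, (s i).indicator 1 with hX
  set p := ∑ i ∈ S, μ.real (s i)
  have hLp (i : ι) : MemLp ((s i).indicator (1 : Ω → ℝ)) 2 μ := memLp_two_indicator_one (hs i)
  have hmean : ∫ ω, X ω ∂μ = p := by
    simp only [hX, Finset.sum_apply]
    rw [integral_finsetSum S fun i _ => (hLp i).integrable (by norm_num)]
    exact sum_congr rfl fun i _ => integral_indicator_one (hs i)
  have hchebyshev : μ.real {ω | p ≤ |X ω - p|} ≤ ProbabilityTheory.variance X μ / p ^ 2 := by
    have h := ENNReal.toReal_mono ENNReal.ofReal_ne_top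
      (ProbabilityTheory.meas_ge_le_variance_div_sq (memLp_finsetSum' S fun i _ => hLp i) hpos)
    rwa [hmean, ENNReal.toReal_ofReal
      (div_nonneg (ProbabilityTheory.variance_nonneg _ _) (sq_nonneg p))] at h
  calc μ.real {ω | ∀ i ∈ S, ω ∉ s i} ≤ μ.real {ω | p ≤ |X ω - p|} := by
        refine measureReal_mono fun ω hω => ?_
        have hzero : X ω = 0 := by
          rw [hX, Finset.sum_apply]
          exact sum_eq_zero fun i hi => Set.indicator_of_notMem (hω i hi) _
        rw [Set.mem_ofPred_eq, hzero, zero_sub, abs_neg, abs_of_pos hpos]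
    _ ≤ ProbabilityTheory.variance X μ / p ^ 2 := hchebyshev
    _ ≤ p / p ^ 2 := by
        gcongr
        exact variance_sum_indicator_le S hs hind
    _ = 1 / p := by field_simp

lemma ae_exists_mem_of_pairwise_indepSet (T : Set ι) (hs : ∀ i, MeasurableSet (s i))
    (hind : T.Pairwise fun i j => ProbabilityTheory.IndepSet (s i) (s j) μ)
    (hdiv : ∀ M : ℝ, ∃ S : Finset ι, ↑S ⊆ T ∧ M ≤ ∑ i ∈ S, μ.real (s i)) :
    ∀ᵐ ω ∂μ, ∃ i ∈ T, ω ∈ s i := by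
  have hzero : μ.real {ω | ∀ i ∈ T, ω ∉ s i} = 0 := by
    refine le_antisymm (le_of_forall_pos_le_add fun ε hε => ?_) measureReal_nonneg
    obtain ⟨S, hST, hS⟩ := hdiv (1 / ε)
    rw [zero_add]
    calc μ.real {ω | ∀ i ∈ T, ω ∉ s i} ≤ μ.real {ω | ∀ i ∈ S, ω ∉ s i} :=
          measureReal_mono fun ω (hω : ∀ i ∈ T, ω ∉ s i) i hi => hω i (hST hi)
      _ ≤ 1 / ∑ i ∈ S, μ.real (s i) := measureReal_forall_notMem_le S hs (hind.mono hST)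
          ((one_div_pos.2 hε).trans_le hS)
      _ ≤ ε := by rwa [one_div_le ((one_div_pos.2 hε).trans_le hS) hε]
  rw [measureReal_eq_zero_iff] at hzero
  rw [ae_iff]
  convert hzero using 3
  push Not
  rfl

end

/-! ### Small linear forms in the divergence case -/

section

variable {k : ℕ} {φ : ℕ → ℝ}

lemma le_measureReal_torusForm_preimage {n : Fin k → ℤ} (hn : n ≠ 0) {r : ℝ} (hr : 0 ≤ r)
    (hr₁ : r ≤ 1) :
    r ≤ volume.real (torusForm n ⁻¹' Metric.closedBall (0 : UnitAddCircle) r) := by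
  rw [(measurePreserving_torusForm hn).measureReal_preimage
    measurableSet_closedBall.nullMeasurableSet, Measure.real, AddCircle.volume_closedBall,
    ENNReal.toReal_ofReal (by positivity)]
  exact le_min hr₁ (by linarith)

lemma exists_finset_le_sum_one_div (hφpos : ∀ n, 0 < φ n) (hs : ¬ Summable fun n => 1 / φ n)
    (j₀ : ℕ) (M : ℝ) :
    ∃ G : Finset ℕ, (∀ j ∈ G, j₀ ≤ j ∧ φ (j + 1) ≤ 2 ^ (j + 1)) ∧
      M ≤ ∑ j ∈ G, 1 / φ (j + 1) := by
  by_contra! hbdd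
  have hnonneg (j : ℕ) : 0 ≤ 1 / φ j := (one_div_pos.2 (hφpos j)).le
  set f : ℕ → ℝ := fun j => if j₀ ≤ j ∧ φ (j + 1) ≤ 2 ^ (j + 1) then 1 / φ (j + 1) else 0 with hf
  have hfsum : Summable f := by
    refine summable_of_sum_le (c := M) (fun j => ?_) fun u => ?_
    · simp only [hf]
      split_ifs
      exacts [hnonneg _, le_rfl]
    · simp only [hf]
      rw [← sum_filter]
      exact (hbdd _ fun j hj => (mem_filter.1 hj).2).le
  have hgeom : Summable fun j : ℕ => (1 / 2 : ℝ) ^ (j + 1) :=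
    (summable_nat_add_iff 1).2 (summable_geometric_of_lt_one (by norm_num) (by norm_num))
  refine hs ((summable_nat_add_iff 1).1 (Summable.of_norm_bounded_eventually_nat
    (hfsum.add hgeom) (Filter.eventually_atTop.2 ⟨j₀, fun j hj => ?_⟩)))
  rw [Real.norm_of_nonneg (hnonneg _)]
  by_cases h : φ (j + 1) ≤ 2 ^ (j + 1)
  · simp only [hf, hj, h, and_self, if_true]
    exact le_add_of_nonneg_right (by positivity)
  · simp only [hf, h, and_false, if_false, zero_add]
    rw [one_div_pow]
    exact one_div_le_one_div_of_le (by positivity) (not_le.1 h).le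

/-- The reciprocal of the distance to the integers within which the linear form of a frequency `n`
of the `j`th shell is required to fall. -/
def approxDenom (φ : ℕ → ℝ) (B : ℝ) (j : ℕ) (n : Fin k → ℤ) : ℝ :=
  B * Real.exp ((j + 1 : ℕ) : ℝ) ^ k * φ (j + 1) * hypHeight n

lemma le_approxDenom (hφpos : ∀ n, 0 < φ n) (hφmono : Monotone φ) {B c : ℝ} (hc : 0 ≤ c)
    (hB : c / φ 0 ≤ B) (j : ℕ) (n : Fin k → ℤ) : c ≤ approxDenom φ B j n := by
  have hφ₀ := hφpos 0
  have hφj := hφpos (j + 1)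
  have hB₀ : 0 ≤ B := (div_nonneg hc hφ₀.le).trans hB
  calc c ≤ B * φ 0 := (div_le_iff₀ hφ₀).1 hB
    _ ≤ B * φ (j + 1) := by
        gcongr
        exact hφmono (j + 1).zero_le
    _ = B * 1 * φ (j + 1) * 1 := by ring
    _ ≤ approxDenom φ B j n := by
        unfold approxDenom
        gcongr
        exacts [one_le_pow₀ (Real.one_le_exp (Nat.cast_nonneg _)), one_le_hypHeight n]

lemma div_le_sum_one_div_approxDenom (hk : 2 ≤ k) (hφpos : ∀ n, 0 < φ n) {B : ℝ} (hB : 0 < B)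
    {j : ℕ} (hj : 8 * k ≤ j) :
    1 / (4 * (2 * k : ℝ) ^ k) / B * (1 / φ (j + 1)) ≤
      ∑ n ∈ shell k j, 1 / approxDenom φ B j n := by
  have hφj := hφpos (j + 1)
  set c : ℝ := 1 / (4 * (2 * k : ℝ) ^ k)
  set E := Real.exp ((j + 1 : ℕ) : ℝ) ^ k
  have hE₀ : 0 < E := by positivity
  calc c / B * (1 / φ (j + 1)) = 1 / (B * E * φ (j + 1)) * (c * E) := by field_simp
    _ ≤ 1 / (B * E * φ (j + 1)) * ∑ n ∈ shell k j, 1 / hypHeight n := by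
        gcongr
        exact mul_exp_pow_le_sum_shell hk hj
    _ = ∑ n ∈ shell k j, 1 / approxDenom φ B j n := by
        rw [mul_sum]
        exact sum_congr rfl fun n _ => one_div_mul_one_div _ _

lemma exists_finset_le_sum_sum_shell (hk : 2 ≤ k) (hφpos : ∀ n, 0 < φ n)
    (hs : ¬ Summable fun n => 1 / φ n) {B : ℝ} (hB : 0 < B) (j₀ : ℕ) (M : ℝ) :
    ∃ G : Finset ℕ, (∀ j ∈ G, j₀ ≤ j ∧ φ (j + 1) ≤ 2 ^ (j + 1)) ∧
      M ≤ ∑ j ∈ G, ∑ n ∈ shell k j, 1 / approxDenom φ B j n := by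
  set c : ℝ := 1 / (4 * (2 * k : ℝ) ^ k)
  have hc : 0 < c := by positivity
  obtain ⟨G, hG, hM⟩ := exists_finset_le_sum_one_div hφpos hs (max j₀ (8 * k)) (B / c * M)
  refine ⟨G, fun j hj => (hG j hj).imp_left (le_max_left _ _).trans, ?_⟩
  calc M = c / B * (B / c * M) := by field_simp
    _ ≤ c / B * ∑ j ∈ G, 1 / φ (j + 1) := by gcongr
    _ = ∑ j ∈ G, c / B * (1 / φ (j + 1)) := mul_sum _ _ _
    _ ≤ ∑ j ∈ G, ∑ n ∈ shell k j, 1 / approxDenom φ B j n := sum_le_sum fun j hj =>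
        div_le_sum_one_div_approxDenom hk hφpos hB ((le_max_right _ _).trans (hG j hj).1)

lemma ne_zero_of_mem_shell (hk : 0 < k) {j : ℕ} {n : Fin k → ℤ} (hn : n ∈ shell k j) : n ≠ 0 := by
  rintro rfl
  simpa using one_le_of_mem_shell hn ⟨0, hk⟩

lemma indepSet_torusForm_preimage_of_mem_shell (hk : 0 < k) {j j' : ℕ} {n n' : Fin k → ℤ}
    (hn : n ∈ shell k j) (hn' : n' ∈ shell k j') (hne : n ≠ n') {A A' : Set UnitAddCircle}
    (hA : MeasurableSet A) (hA' : MeasurableSet A') :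
    ProbabilityTheory.IndepSet (torusForm n ⁻¹' A) (torusForm n' ⁻¹' A') volume := by
  obtain ⟨l, hl⟩ := exists_minor_ne_zero (i₀ := ⟨0, hk⟩) (one_le_of_mem_shell hn _)
    (one_le_of_mem_shell hn' _) ((vecGcd_of_mem_shell hn).trans (vecGcd_of_mem_shell hn').symm) hne
  exact (ProbabilityTheory.indepFun_iff_indepSet_preimage (continuous_torusForm n).measurable
    (continuous_torusForm n').measurable).1 (indepFun_torusForm hl) A A' hA hA'

lemma ae_exists_norm_torusForm_le (hk : 2 ≤ k) (hφpos : ∀ n, 0 < φ n) (hφmono : Monotone φ)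
    (hs : ¬ Summable fun n => 1 / φ n) {B : ℝ} (hB : 1 / φ 0 ≤ B) (j₀ : ℕ) :
    ∀ᵐ b : Fin k → UnitAddCircle, ∃ j, j₀ ≤ j ∧ φ (j + 1) ≤ 2 ^ (j + 1) ∧
      ∃ n ∈ shell k j, ‖torusForm n b‖ ≤ 1 / approxDenom φ B j n := by
  have hk₀ : 0 < k := by omega
  have hdenom (j : ℕ) (n : Fin k → ℤ) : 1 ≤ approxDenom φ B j n :=
    le_approxDenom hφpos hφmono zero_le_one hB j n
  set T : Set (Σ _ : ℕ, Fin k → ℤ) :=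
    {q | j₀ ≤ q.1 ∧ φ (q.1 + 1) ≤ 2 ^ (q.1 + 1) ∧ q.2 ∈ shell k q.1}
  set s : (Σ _ : ℕ, Fin k → ℤ) → Set (Fin k → UnitAddCircle) := fun q =>
    torusForm q.2 ⁻¹' Metric.closedBall 0 (1 / approxDenom φ B q.1 q.2)
  have hmeas (q) : MeasurableSet (s q) :=
    (continuous_torusForm q.2).measurable measurableSet_closedBall
  have hind : T.Pairwise fun q q' => ProbabilityTheory.IndepSet (s q) (s q') volume := by
    rintro ⟨j, n⟩ ⟨-, -, hn⟩ ⟨j', n'⟩ ⟨-, -, hn'⟩ hne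
    have hnn' : n ≠ n' := by
      rintro rfl
      obtain rfl : j = j' := eq_of_mem_shell_of_mem_shell hn hn'
      exact hne rfl
    exact indepSet_torusForm_preimage_of_mem_shell hk₀ hn hn' hnn' measurableSet_closedBall
      measurableSet_closedBall
  have hdiv (M : ℝ) : ∃ S : Finset (Σ _ : ℕ, Fin k → ℤ),
      ↑S ⊆ T ∧ M ≤ ∑ q ∈ S, volume.real (s q) := by
    obtain ⟨G, hG, hM⟩ := exists_finset_le_sum_sum_shell hk hφpos hs
      ((one_div_pos.2 (hφpos 0)).trans_le hB) j₀ M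
    refine ⟨G.sigma (shell k), fun q hq => ?_, hM.trans ?_⟩
    · obtain ⟨hj, hn⟩ := mem_sigma.1 (mem_coe.1 hq)
      exact ⟨(hG q.1 hj).1, (hG q.1 hj).2, hn⟩
    · rw [sum_sigma]
      exact sum_le_sum fun j _ => sum_le_sum fun n hn =>
        le_measureReal_torusForm_preimage (ne_zero_of_mem_shell hk₀ hn)
          (one_div_nonneg.2 (zero_le_one.trans (hdenom j n)))
          (div_le_one_of_le₀ (hdenom j n) (zero_le_one.trans (hdenom j n)))
  filter_upwards [ae_exists_mem_of_pairwise_indepSet T hmeas hind hdiv] with b hb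
  obtain ⟨⟨j, n⟩, ⟨hj, hφj, hn⟩, hbn⟩ := hb
  exact ⟨j, hj, hφj, n, hn, mem_closedBall_zero_iff.1 hbn⟩

end

/-! ### Small linear forms force a large discrepancy -/

section

variable {k : ℕ} {φ : ℕ → ℝ} {α : Fin k → ℝ}

lemma norm_fourierChar_sub_one_le (θ : ℝ) :
    ‖(𝐞 θ : ℂ) - 1‖ ≤ 2 * π * ‖(θ : UnitAddCircle)‖ := by
  have hround : 𝐞 θ = 𝐞 (θ - round θ) := by
    rw [AddChar.map_sub_eq_div, fourierChar_intCast, div_one]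
  rw [hround, norm_fourierChar_sub_one, UnitAddCircle.norm_eq, mul_assoc]
  gcongr
  simpa only [abs_mul, abs_of_pos Real.pi_pos] using
    Real.abs_sin_le_abs (x := π * (θ - round θ))

lemma norm_natCast_mul_le (t : ℕ) (θ : ℝ) :
    ‖((t * θ : ℝ) : UnitAddCircle)‖ ≤ t * ‖(θ : UnitAddCircle)‖ := by
  simpa [← nsmul_eq_mul] using norm_nsmul_le (n := t) (a := (θ : UnitAddCircle))

lemma half_le_norm_sum_fourierChar {θ : ℝ} {m : ℕ} (h : 13 * (m : ℝ) * ‖(θ : UnitAddCircle)‖ ≤ 1) :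
    (m : ℝ) / 2 ≤ ‖∑ t ∈ Icc 1 m, (𝐞 (t * θ) : ℂ)‖ := by
  have hterm (t : ℕ) (ht : t ∈ Icc 1 m) : ‖(𝐞 (t * θ) : ℂ) - 1‖ ≤ 1 / 2 := by
    have htm : (t : ℝ) ≤ m := by exact_mod_cast (mem_Icc.1 ht).2
    have hθ : t * ‖(θ : UnitAddCircle)‖ ≤ 1 / 13 := by
      linarith [mul_le_mul_of_nonneg_right htm (norm_nonneg (θ : UnitAddCircle))]
    calc ‖(𝐞 (t * θ) : ℂ) - 1‖ ≤ 2 * π * ‖((t * θ : ℝ) : UnitAddCircle)‖ :=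
          norm_fourierChar_sub_one_le _
      _ ≤ 2 * 3.15 * (1 / 13) := by
          gcongr
          exacts [Real.pi_lt_d2.le, (norm_natCast_mul_le t θ).trans hθ]
      _ ≤ 1 / 2 := by norm_num
  have hsum : ‖(m : ℂ) - ∑ t ∈ Icc 1 m, (𝐞 (t * θ) : ℂ)‖ ≤ m / 2 := by
    have hneg : (m : ℂ) - ∑ t ∈ Icc 1 m, (𝐞 (t * θ) : ℂ) =
        -∑ t ∈ Icc 1 m, ((𝐞 (t * θ) : ℂ) - 1) := by
      simp [sum_sub_distrib]
    rw [hneg, norm_neg]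
    refine (norm_sum_le_of_le _ hterm).trans_eq ?_
    rw [sum_const, Nat.card_Icc, Nat.add_sub_cancel, nsmul_eq_mul, mul_one_div]
  have htriangle := norm_sub_norm_le (m : ℂ) (∑ t ∈ Icc 1 m, (𝐞 (t * θ) : ℂ))
  rw [Complex.norm_natCast] at htriangle
  linarith

/-- Koksma's inequality for `m = min ⌊A / 13⌋ N` terms, all of which are close to `1`. -/
lemma min_le_of_forall_abs_DiscT_le (hk : k ≠ 0) {n : Fin k → ℤ} (hn : ∀ i, n i ≠ 0) {A M : ℝ}
    (hA : 13 ≤ A) (hδ : ‖(linForm n α : UnitAddCircle)‖ ≤ 1 / A) {N : ℕ} (hN : 1 ≤ N)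
    (hM : ∀ m, 1 ≤ m → m ≤ N → ∀ x : Fin k → ℝ, (∀ i, x i ∈ Set.Icc (0 : ℝ) 1) →
      |DiscT k α x m| ≤ M) :
    min (A / 26) N ≤ 2 * ((4 * π) ^ k * hypHeight n * M) := by
  set m := min ⌊A / 13⌋₊ N
  have hfloor : (1 : ℝ) ≤ ⌊A / 13⌋₊ := by
    exact_mod_cast Nat.le_floor (by push_cast; linarith)
  have hm : 1 ≤ m := le_min (by exact_mod_cast hfloor) hN
  have hmA : (m : ℝ) ≤ A / 13 :=
    (Nat.cast_le.2 (min_le_left _ _)).trans (Nat.floor_le (by linarith))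
  have hsmall : 13 * (m : ℝ) * ‖(linForm n α : UnitAddCircle)‖ ≤ 1 :=
    calc 13 * (m : ℝ) * ‖(linForm n α : UnitAddCircle)‖ ≤ 13 * (A / 13) * (1 / A) := by gcongr
      _ = 1 := by field_simp
  have hmin : min (A / 26) N ≤ m := by
    rw [Nat.cast_min]
    exact min_le_min_right _ (by linarith [Nat.lt_floor_add_one (A / 13)])
  linarith [(half_le_norm_sum_fourierChar hsmall).trans
    (norm_sum_fourierChar_linForm_le hk hn (hM m hm (min_le_right _ _)))]

lemma eventually_mul_lt_exp_exp_half (k : ℕ) (K : ℝ) :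
    ∀ᶠ J : ℕ in .atTop, K * (Real.exp J ^ k * 2 ^ J) < Real.exp (Real.exp J / 2) := by
  have hgrowth :
      Filter.Tendsto (fun y : ℝ => Real.exp (1 / 2 * y) / y ^ (k + 1)) .atTop .atTop := by
    simpa only [← Nat.cast_succ, Real.rpow_natCast] using
      tendsto_exp_mul_div_rpow_atTop ((k + 1 : ℕ) : ℝ) (1 / 2) (by norm_num)
  have hexp : Filter.Tendsto (fun J : ℕ => Real.exp J) .atTop .atTop :=
    Real.tendsto_exp_atTop.comp tendsto_natCast_atTop_atTop
  filter_upwards [(hgrowth.comp hexp).eventually_gt_atTop |K|] with J hJ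
  rw [Function.comp_apply, lt_div_iff₀ (by positivity)] at hJ
  have htwo : (2 : ℝ) ^ J ≤ Real.exp J := by
    rw [← Real.exp_one_pow]
    gcongr
    linarith [Real.exp_one_gt_d9]
  calc K * (Real.exp J ^ k * 2 ^ J) ≤ |K| * (Real.exp J ^ k * Real.exp J) := by
        gcongr
        exact le_abs_self K
    _ = |K| * Real.exp J ^ (k + 1) := by ring
    _ < Real.exp (1 / 2 * Real.exp J) := hJ
    _ = Real.exp (Real.exp J / 2) := by ring_nf

lemma four_le_exp_exp {J : ℕ} (hJ : 1 ≤ J) : 4 ≤ Real.exp (Real.exp J) := by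
  have hJ' : (1 : ℝ) ≤ J := by exact_mod_cast hJ
  have htwo : 2 ≤ Real.exp J := by linarith [Real.add_one_le_exp (J : ℝ)]
  calc (4 : ℝ) ≤ Real.exp 1 ^ 2 := by nlinarith [Real.exp_one_gt_d9]
    _ = Real.exp 2 := by rw [← Real.exp_nat_mul]; norm_num
    _ ≤ Real.exp (Real.exp J) := Real.exp_le_exp.2 htwo

lemma log_pow_mul_le (hφpos : ∀ n, 0 < φ n) (hφmono : Monotone φ) {C : ℝ} (hC : 0 ≤ C) (k : ℕ)
    {J N : ℕ} (hN : 3 ≤ N) (hNJ : (N : ℝ) ≤ Real.exp (Real.exp J)) :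
    C * Real.log N ^ k * φ ⌈Real.log (Real.log N)⌉₊ ≤ C * Real.exp J ^ k * φ J := by
  have hlog₁ := one_le_log_natCast hN
  have hlog : Real.log N ≤ Real.exp J := by rwa [Real.log_le_iff_le_exp (by positivity)]
  have hceil : ⌈Real.log (Real.log N)⌉₊ ≤ J := by
    rwa [Nat.ceil_le, Real.log_le_iff_le_exp (by linarith)]
  have hφceil := hφpos ⌈Real.log (Real.log N)⌉₊
  gcongr
  exact hφmono hceil

lemma not_forall_abs_DiscT_le (hk : 0 < k) (hφpos : ∀ n, 0 < φ n) (hφmono : Monotone φ)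
    {C B : ℝ} (hC : 0 ≤ C) (hB : 13 / φ 0 ≤ B) (hBC : 52 * (4 * π) ^ k * C < B)
    {j : ℕ} (hφj : φ (j + 1) ≤ 2 ^ (j + 1))
    (hj : 4 * (4 * π) ^ k * C * (Real.exp ((j + 1 : ℕ) : ℝ) ^ k * 2 ^ (j + 1)) <
      Real.exp (Real.exp ((j + 1 : ℕ) : ℝ) / 2))
    {n : Fin k → ℤ} (hn : n ∈ shell k j)
    (hδ : ‖(linForm n α : UnitAddCircle)‖ ≤ 1 / approxDenom φ B j n) :
    ¬ ∀ N : ℕ, 3 ≤ N → ∀ m : ℕ, 1 ≤ m → m ≤ N → ∀ x : Fin k → ℝ,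
        (∀ i, x i ∈ Set.Icc (0 : ℝ) 1) →
          |DiscT k α x m| ≤ C * Real.log N ^ k * φ ⌈Real.log (Real.log N)⌉₊ := by
  intro hbound
  have hP := hypHeight_le_of_mem_shell hk hn
  have hP₀ := hypHeight_pos n
  have hφJ := hφpos (j + 1)
  have hA := le_approxDenom hφpos hφmono (by norm_num) hB j n
  rw [approxDenom] at hδ hA
  set J : ℕ := j + 1
  set P := hypHeight n
  set E := Real.exp (J : ℝ)
  have hfour : 4 ≤ Real.exp E := four_le_exp_exp (Nat.le_add_left 1 j)
  set N : ℕ := ⌊Real.exp E⌋₊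
  have hN : 3 ≤ N := Nat.le_floor (by push_cast; linarith)
  have hmin := min_le_of_forall_abs_DiscT_le hk.ne'
    (fun i => by have := one_le_of_mem_shell hn i; omega) hA hδ (by omega) fun m hm hmN x hx =>
      (hbound N hN m hm hmN x hx).trans
        (log_pow_mul_le hφpos hφmono hC k hN (Nat.floor_le (Real.exp_pos E).le))
  rcases min_le_iff.1 hmin with h | h
  · have hlt : 52 * (4 * π) ^ k * C * (E ^ k * φ J * P) < B * (E ^ k * φ J * P) := by gcongr
    linarith
  · have hsq : Real.exp E = Real.exp (E / 2) * Real.exp (E / 2) := by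
      rw [← Real.exp_add, add_halves]
    have hle : (4 * π) ^ k * P * (C * E ^ k * φ J) ≤
        (4 * π) ^ k * Real.exp (E / 2) * (C * E ^ k * 2 ^ J) := by gcongr
    have hlt := mul_lt_mul_of_pos_right hj (Real.exp_pos (E / 2))
    linarith [Nat.lt_floor_add_one (Real.exp E)]

theorem ae_not_abs_DiscT_le_of_not_summable (hk : 2 ≤ k) (hφpos : ∀ n, 0 < φ n)
    (hφmono : Monotone φ) (hs : ¬ Summable fun n => 1 / φ n) :
    ∀ᵐ α ∂(volume : Measure (Fin k → ℝ)),
      ¬ ∃ C : ℝ, ∀ N : ℕ, 3 ≤ N → ∀ m : ℕ, 1 ≤ m → m ≤ N → ∀ x : Fin k → ℝ,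
        (∀ i, x i ∈ Set.Icc (0 : ℝ) 1) →
          |DiscT k α x m| ≤ C * Real.log N ^ k * φ ⌈Real.log (Real.log N)⌉₊ := by
  have hφ₀ := hφpos 0
  have hsmall : ∀ᵐ α : Fin k → ℝ, ∀ B j₀ : ℕ, 1 / φ 0 ≤ B →
      ∃ j, j₀ ≤ j ∧ φ (j + 1) ≤ 2 ^ (j + 1) ∧ ∃ n ∈ shell k j,
        ‖torusForm n (fun i => (α i : UnitAddCircle))‖ ≤ 1 / approxDenom φ B j n := by
    simp only [ae_all_iff]
    exact fun B j₀ hB => ae_of_ae_torus (ae_exists_norm_torusForm_le hk hφpos hφmono hs hB j₀)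
  filter_upwards [hsmall] with α hα
  rintro ⟨C, hC⟩
  obtain ⟨J₀, hJ₀⟩ := Filter.eventually_atTop.1
    (eventually_mul_lt_exp_exp_half k (4 * (4 * π) ^ k * |C|))
  obtain ⟨B, hB⟩ := exists_nat_gt (max (13 / φ 0) (52 * (4 * π) ^ k * |C|))
  obtain ⟨hB₁, hBC⟩ := max_lt_iff.1 hB
  have hB₀ : 1 / φ 0 ≤ B := le_trans (by gcongr; norm_num) hB₁.le
  obtain ⟨j, hj, hφj, n, hn, hδ⟩ := hα B J₀ hB₀
  rw [torusForm_coe] at hδ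
  refine not_forall_abs_DiscT_le (by omega) hφpos hφmono (abs_nonneg C) hB₁.le hBC hφj
    (hJ₀ _ (by omega)) hn hδ fun N hN m hm hmN x hx => (hC N hN m hm hmN x hx).trans ?_
  have hlog := one_le_log_natCast hN
  have hφceil := hφpos ⌈Real.log (Real.log N)⌉₊
  gcongr
  exact le_abs_self C

end

end TorusDiscrepancy

/-- Beck's multidimensional Khintchine theorem: for `k ≥ 2` and a positive increasing `φ`,
for a.e. `α ∈ ℝ^k`, `Δ(α;N) ≪ (log N)^k·φ(log log N)` iff `∑ 1/φ(n) < ∞`. -/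
theorem stmt_1 (k : ℕ) (hk : 2 ≤ k) (φ : ℕ → ℝ) (hφpos : ∀ n, 0 < φ n)
    (hφmono : Monotone φ) :
    ∀ᵐ α ∂(volume : Measure (Fin k → ℝ)),
      ((∃ C : ℝ, ∀ N : ℕ, 3 ≤ N → ∀ m : ℕ, 1 ≤ m → m ≤ N → ∀ x : Fin k → ℝ,
            (∀ i, x i ∈ Set.Icc (0 : ℝ) 1) →
            |DiscT k α x m| ≤
              C * Real.log N ^ k * φ (Nat.ceil (Real.log (Real.log N)))) ↔
        Summable fun n => 1 / φ n) := by
  by_cases hs : Summable fun n => 1 / φ n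
  · filter_upwards [TorusDiscrepancy.ae_abs_DiscT_le_of_summable hk hφpos hφmono hs] with α hα
    exact iff_of_true hα hs
  · filter_upwards [TorusDiscrepancy.ae_not_abs_DiscT_le_of_not_summable hk hφpos hφmono hs]
      with α hα
    exact iff_of_false hα hs
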